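/- Let X ⊂ P^{n_1} × ... × P^{n_k} be an equidimensional multiprojective variety whose projection to the i-th factor has dimension at least 2, and let ℓ be a general linear polynomial in the i-th variable group. Then X is irreducible if and only if X ∩ V(ℓ) is irreducible. -/

import Mathlib

/-!
The equivalence holds for a general hyperplane because both alternatives for `X` persist on the slice.

Suppose `X` is irreducible. Since `dim π_i(X) ≥ 2`, two of the affine coordinates in the `i`-th factor are algebraically
independent at the generic point (`exists_component_pair`): otherwise a first general hyperplane would cut `π_i(X)` in a
finite set, and a second one would miss that set. Consider an affine chart and the universal hyperplane section over the
space of hyperplanes. The coefficients of the generic hyperplane through the generic point are independent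
(`algInd_incForm`), and after one coefficient is changed to a suitable member of a pencil, the field they generate is
algebraically closed in the function field of the universal section (`mem_adjoin_of_isAlgebraic`,
`exists_pencil_algClosed`). So the generic section is geometrically irreducible, and this spreads out to almost all
sections (`spread`): by relative Noether normalisation (`relNoether`) and a primitive element
(`exists_primitive_conductor`), the section is birational to a hypersurface, whose equation has no factorisation over
finite extensions (`no_factorization`) and hence remains irreducible under almost all specialisations, by the
Bertini–Noether theorem (`irreducible_specialisation`). This gives Bertini's theorem for affine varieties
(`affine_bertini`). As any two charts meet on a general slice, irreducibility in the charts glues (`slice_irred`).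

Suppose `X` is reducible. Some component has two independent coordinates in the `i`-th factor, so its multidimension
contains a vector `e` with `e i ≥ 1` (`IsGenericPt.exists_mdim`). By equidimensionality `e` belongs to the
multidimension of every component, which therefore has a non-constant coordinate in the `i`-th factor
(`IsGenericPt.trans_of_mdim`). Hence a general hyperplane meets each component outside any given proper closed subset
(`IsGenericPt.exists_slice_point_one`), and a non-trivial decomposition of `X` remains non-trivial on the slice.

Geometry is translated into algebra by generic points: homogeneous coordinates in an extension field of `ℂ` that satisfy
exactly the polynomial equations holding on the variety.
-/

open scoped BigOperators

namespace MultiProj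

variable {ι : Type*} [Fintype ι] [DecidableEq ι]

/-- Multiprojective space: a product of complex projective spaces `ℙ^{n i}`. -/
abbrev PStack (n : ι → ℕ) := (i : ι) → Projectivization ℂ (Fin (n i + 1) → ℂ)

/-- A linear form (given by its coefficient vector) vanishes at a point of the
projectivization of a coordinate space. -/
def PLinVanish {κ : Type*} [Fintype κ] (c : κ → ℂ)
    (p : Projectivization ℂ (κ → ℂ)) : Prop :=
  ∀ (v : κ → ℂ) (hv : v ≠ 0), Projectivization.mk ℂ v hv = p → ∑ a, c a * v a = 0

/-- A polynomial in the multihomogeneous coordinates vanishes at a point of the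
multiprojective space, i.e. at every system of homogeneous representatives. -/
def PolyVanish {n : ι → ℕ} (f : MvPolynomial ((i : ι) × Fin (n i + 1)) ℂ)
    (x : PStack n) : Prop :=
  ∀ v : (i : ι) → Fin (n i + 1) → ℂ,
    (∀ i, ∃ hv : v i ≠ 0, Projectivization.mk ℂ (v i) hv = x i) →
    MvPolynomial.eval (fun p => v p.1 p.2) f = 0

/-- Algebraic subsets of multiprojective space. -/
def IsAlgebraicSet {n : ι → ℕ} (X : Set (PStack n)) : Prop :=
  ∃ F : Set (MvPolynomial ((i : ι) × Fin (n i + 1)) ℂ),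
    X = {x | ∀ f ∈ F, PolyVanish f x}

/-- Irreducible multiprojective varieties: nonempty algebraic sets that are not
contained in the union of two algebraic sets without being contained in one. -/
def IsIrredVariety {n : ι → ℕ} (X : Set (PStack n)) : Prop :=
  IsAlgebraicSet X ∧ X.Nonempty ∧
    ∀ A B : Set (PStack n), IsAlgebraicSet A → IsAlgebraicSet B →
      X ⊆ A ∪ B → (X ⊆ A ∨ X ⊆ B)

/-- An irreducible component of a multiprojective variety. -/
def IsComponentOf {n : ι → ℕ} (Y X : Set (PStack n)) : Prop :=
  IsIrredVariety Y ∧ Y ⊆ X ∧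
    ∀ Y' : Set (PStack n), IsIrredVariety Y' → Y ⊆ Y' → Y' ⊆ X → Y' = Y

/-- Parameter space for a multilinear slice of type `e`: `e i` linear forms in
the variables of the `i`-th factor. -/
abbrev SliceParams (n : ι → ℕ) (e : ι → ℕ) :=
  (i : ι) → Fin (e i) → (Fin (n i + 1) → ℂ)

/-- The common zero set in multiprojective space of a multilinear slice. -/
def SliceZeros {n : ι → ℕ} {e : ι → ℕ} (L : SliceParams n e) : Set (PStack n) :=
  {x | ∀ (i : ι) (j : Fin (e i)), PLinVanish (L i j) (x i)}

/-- A property holds generically (on a dense open set) of a parameter. -/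
def Generic {α : Type*} [TopologicalSpace α] (P : α → Prop) : Prop :=
  ∃ U : Set α, IsOpen U ∧ Dense U ∧ ∀ a ∈ U, P a

/-- The multidimension `Dim(X)`: the set of vectors `e` such that a general
multilinear slice of type `e` meets `X` in finitely many, and at least one, points. -/
def MDim {n : ι → ℕ} (X : Set (PStack n)) : Set (ι → ℕ) :=
  {e | (∀ i, e i ≤ n i) ∧
    Generic (fun L : SliceParams n e =>
      (X ∩ SliceZeros L).Finite ∧ (X ∩ SliceZeros L).Nonempty)}

/-- `Deg_X(e) = d`: a general multilinear slice of type `e` meets `X` in exactly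
`d` points. -/
def DegIs {n : ι → ℕ} (X : Set (PStack n)) (e : ι → ℕ) (d : ℕ) : Prop :=
  Generic (fun L : SliceParams n e =>
    (X ∩ SliceZeros L).Finite ∧ (X ∩ SliceZeros L).ncard = d)

/-- The intrinsic dimension of a multiprojective variety, read off as the common
total degree of the vectors in its multidimension. -/
noncomputable def dimOf {n : ι → ℕ} (X : Set (PStack n)) : ℕ :=
  sSup {m | ∃ e ∈ MDim X, ∑ i, e i = m}

/-- Projection of the multiprojective space onto the factors indexed by `I`. -/
def resMap {n : ι → ℕ} (I : Finset ι) (x : PStack n) :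
    PStack (fun i : {j // j ∈ I} => n i.1) :=
  fun i => x i.1

/-- `dim π_I(X)`: the dimension of the projection of `X` onto the factors
indexed by `I`. -/
noncomputable def dimProj {n : ι → ℕ} (I : Finset ι) (X : Set (PStack n)) : ℕ :=
  dimOf (resMap I '' X)

/-- An equidimensional multiprojective variety: all irreducible components have
the same multidimension. -/
def Equidimensional {n : ι → ℕ} (X : Set (PStack n)) : Prop :=
  IsAlgebraicSet X ∧ X.Nonempty ∧
    ∀ Y Y' : Set (PStack n), IsComponentOf Y X → IsComponentOf Y' X →
      MDim Y = MDim Y'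

/-- The set of lattice points of a polymatroid polytope inside the box `[n]`,
cut out by a submodular, monotone rank function. -/
def IsPolymatroidSet (n : ι → ℕ) (P : Set (ι → ℕ)) : Prop :=
  ∃ r : Finset ι → ℕ,
    (∀ A B : Finset ι, r (A ∪ B) + r (A ∩ B) ≤ r A + r B) ∧
    (∀ A B : Finset ι, A ⊆ B → r A ≤ r B) ∧
    P = {e | (∀ i, e i ≤ n i) ∧ (∑ i, e i = r Finset.univ) ∧
          ∀ S : Finset ι, ∑ i ∈ S, e i ≤ r S}

section Product

variable {ι₁ ι₂ : Type*} [Fintype ι₁] [DecidableEq ι₁] [Fintype ι₂] [DecidableEq ι₂]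

/-- Combine points of two multiprojective spaces into a point of the product
multiprojective space, indexed by the disjoint union of the index sets. -/
def combine {n₁ : ι₁ → ℕ} {n₂ : ι₂ → ℕ} (y : PStack n₁) (z : PStack n₂) :
    PStack (Sum.elim n₁ n₂) := fun i =>
  match i with
  | Sum.inl a => y a
  | Sum.inr b => z b

/-- The Cartesian product of multiprojective varieties in disjoint factors. -/
def prodSet {n₁ : ι₁ → ℕ} {n₂ : ι₂ → ℕ} (Y : Set (PStack n₁)) (Z : Set (PStack n₂)) :
    Set (PStack (Sum.elim n₁ n₂)) :=
  {x | ∃ y ∈ Y, ∃ z ∈ Z, x = combine y z}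

/-- Projection of the product multiprojective space onto the first group of factors. -/
def projL {n₁ : ι₁ → ℕ} {n₂ : ι₂ → ℕ} (x : PStack (Sum.elim n₁ n₂)) : PStack n₁ :=
  fun a => x (Sum.inl a)

/-- Projection of the product multiprojective space onto the second group of factors. -/
def projR {n₁ : ι₁ → ℕ} {n₂ : ι₂ → ℕ} (x : PStack (Sum.elim n₁ n₂)) : PStack n₂ :=
  fun b => x (Sum.inr b)

end Product

section Segre

/-- Degree `δ` of a subset `S` of the projective space `ℙ(ℂ^κ)` of dimension `d`:
a general collection of `d` hyperplanes meets `S` in exactly `δ` points. -/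
def ProjDegIs {κ : Type*} [Fintype κ] (S : Set (Projectivization ℂ (κ → ℂ)))
    (d : ℕ) (δ : ℕ) : Prop :=
  Generic (fun c : Fin d → κ → ℂ =>
    (S ∩ {p | ∀ j, PLinVanish (c j) p}).Finite ∧
    (S ∩ {p | ∀ j, PLinVanish (c j) p}).ncard = δ)

/-- `σ` is a Segre embedding: on homogeneous representatives it is given by the
tensor (outer) product of the coordinate vectors of the factors. -/
def IsSegreMap (n : ι → ℕ)
    (σ : PStack n → Projectivization ℂ (((i : ι) → Fin (n i + 1)) → ℂ)) : Prop :=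
  ∀ (x : PStack n) (v : (i : ι) → Fin (n i + 1) → ℂ),
    (∀ i, ∃ hv : v i ≠ 0, Projectivization.mk ℂ (v i) hv = x i) →
    ∃ h : (fun a : (i : ι) → Fin (n i + 1) => ∏ i, v i (a i)) ≠ 0,
      Projectivization.mk ℂ (fun a : (i : ι) → Fin (n i + 1) => ∏ i, v i (a i)) h = σ x

end Segre

end MultiProj

open MultiProj

/-! ### Nullstellensatz and relative Noether normalisation -/

section

open scoped nonZeroDivisors

/-- Nullstellensatz: an element outside the radical of `I` does not vanish at some `ℂ`-point of `V(I)`. -/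
theorem exists_point_ne_zero {A : Type*} [CommRing A] [Algebra ℂ A] [Algebra.FiniteType ℂ A]
    (I : Ideal A) (g : A) (hg : g ∉ I.radical) :
    ∃ ρ : A →ₐ[ℂ] ℂ, (∀ x ∈ I, ρ x = 0) ∧ ρ g ≠ 0 := by
  have hJ : IsJacobsonRing A := isJacobsonRing_of_finiteType (A := ℂ)
  have h1 : g ∉ I.radical.jacobson := by rwa [hJ.out I.radical_isRadical]
  rw [Ideal.jacobson, Ideal.mem_sInf] at h1
  push Not at h1
  obtain ⟨M, ⟨hIM, hM⟩, hgM⟩ := h1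
  letI : Field (A ⧸ M) := Ideal.Quotient.field M
  haveI : Module.Finite ℂ (A ⧸ M) := finite_of_finite_type_of_isJacobsonRing ℂ (A ⧸ M)
  let e := AlgEquiv.ofBijective (Algebra.ofId ℂ (A ⧸ M))
    (IsAlgClosed.algebraMap_bijective_of_isIntegral (k := ℂ) (K := A ⧸ M))
  refine ⟨e.symm.toAlgHom.comp (Ideal.Quotient.mkₐ ℂ M), fun x hx => ?_, ?_⟩
  · have : Ideal.Quotient.mk M x = 0 := Ideal.Quotient.eq_zero_iff_mem.2 (hIM (Ideal.le_radical hx))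
    simp [this]
  · have : Ideal.Quotient.mk M g ≠ 0 := fun h => hgM (Ideal.Quotient.eq_zero_iff_mem.1 h)
    simpa using this

/-- Relative Noether normalisation, with chosen models `E` of `Frac B` and `TE` of `T ⊗ E`: Noether normalisation of
`TE` over `E`, followed by clearing denominators. -/
theorem relNoether_aux {B T : Type*} (E TE : Type*) [CommRing B] [IsDomain B] [CommRing T] [IsDomain T]
    [Algebra B T] [Field E] [Algebra B E] [IsFractionRing B E] [CommRing TE] [Algebra T TE]
    [Algebra E TE] [Algebra B TE] [IsScalarTower B E TE] [IsScalarTower B T TE]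
    [IsLocalization (Algebra.algebraMapSubmonoid T B⁰) TE]
    (hinj : Function.Injective (algebraMap B T)) [Algebra.FiniteType B T] :
    ∃ (d : ℕ) (s : Fin d → T), AlgebraicIndependent B s ∧ ∃ b : B, b ≠ 0 ∧ ∀ t : T, ∃ N : ℕ,
      (MvPolynomial.aeval s : MvPolynomial (Fin d) B →ₐ[B] T).toRingHom.IsIntegralElem
        (algebraMap B T b ^ N * t) := by
  classical
  have hle : Algebra.algebraMapSubmonoid T B⁰ ≤ T⁰ := by
    rintro _ ⟨b, hb, rfl⟩
    have hb := nonZeroDivisors.ne_zero hb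
    rw [mem_nonZeroDivisors_iff_ne_zero]
    simpa using (map_ne_zero_iff _ hinj).2 hb
  have : IsDomain TE := IsLocalization.isDomain_of_le_nonZeroDivisors (M := Algebra.algebraMapSubmonoid T B⁰) TE hle
  have hTE : Function.Injective (algebraMap T TE) := IsLocalization.injective _ hle
  have hden : ∀ x : TE, ∃ b : B, b ≠ 0 ∧ ∃ t : T, algebraMap T TE t = b • x := by
    intro x
    obtain ⟨⟨t, ⟨_, b, hb, rfl⟩⟩, h⟩ := IsLocalization.surj (Algebra.algebraMapSubmonoid T B⁰) x
    refine ⟨b, nonZeroDivisors.ne_zero hb, t, ?_⟩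
    rw [Algebra.smul_def, IsScalarTower.algebraMap_apply B T TE, mul_comm]
    exact h.symm
  choose β hβ0 τ hτ using hden
  have hinjE : Function.Injective (algebraMap B E) := IsFractionRing.injective B E
  obtain ⟨S, hS⟩ := (inferInstance : Algebra.FiniteType B T)
  have hFT : Algebra.FiniteType E TE := by
    refine ⟨S.image (algebraMap T TE), ?_⟩
    rw [eq_top_iff]
    rintro x -
    have h1 : ∀ t, algebraMap T TE t ∈ Algebra.adjoin E (S.image (algebraMap T TE) : Set TE) := by
      intro t
      have h2 : t ∈ Algebra.adjoin B (S : Set T) := hS ▸ Algebra.mem_top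
      induction h2 using Algebra.adjoin_induction with
      | mem t ht => exact Algebra.subset_adjoin (by simpa using ⟨t, ht, rfl⟩)
      | algebraMap r =>
        rw [← IsScalarTower.algebraMap_apply B T TE, IsScalarTower.algebraMap_apply B E TE]
        exact Subalgebra.algebraMap_mem _ _
      | add t u _ _ h1 h2 => rw [map_add]; exact add_mem h1 h2
      | mul t u _ _ h1 h2 => rw [map_mul]; exact mul_mem h1 h2
    have h3 : x = (algebraMap B E (β x))⁻¹ • algebraMap T TE (τ x) := by
      rw [hτ, Algebra.smul_def (β x), IsScalarTower.algebraMap_apply B E TE, ← Algebra.smul_def,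
        inv_smul_smul₀]
      exact (map_ne_zero_iff _ hinjE).2 (hβ0 _)
    rw [h3]
    exact Subalgebra.smul_mem _ (h1 _) _
  obtain ⟨d, g, hginj, hgint⟩ := exists_integral_inj_algHom_of_fg E TE
  let s : Fin d → T := fun i => τ (g (MvPolynomial.X i))
  have hg_eq : g = MvPolynomial.aeval (fun i => g (MvPolynomial.X i)) := by
    ext i; simp
  have hAI0 : AlgebraicIndependent E (fun i => g (MvPolynomial.X i)) := by
    rw [AlgebraicIndependent, ← hg_eq]; exact hginj
  have hβE : ∀ x, algebraMap B E (β x) ≠ 0 := fun x => (map_ne_zero_iff _ hinjE).2 (hβ0 _)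
  have hs_eq : ∀ i, algebraMap T TE (s i) =
      algebraMap E TE (algebraMap B E (β (g (MvPolynomial.X i)))) * g (MvPolynomial.X i) := by
    intro i
    simp only [s, hτ]
    rw [Algebra.smul_def, IsScalarTower.algebraMap_apply B E TE]
  have hAI1 : AlgebraicIndependent E (fun i => algebraMap T TE (s i)) := by
    have := hAI0.polynomial_aeval_of_transcendental
      (f := fun i => Polynomial.C (algebraMap B E (β (g (MvPolynomial.X i)))) * Polynomial.X) ?_
    · convert this using 2 with i
      rw [hs_eq]
      simp
    · intro i
      apply Polynomial.transcendental
      · rw [Polynomial.natDegree_C_mul_X _ (hβE _)]; exact one_ne_zero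
      · simp [hβE]
  have hAI2 : AlgebraicIndependent B (fun i => algebraMap T TE (s i)) := hAI1.restrictScalars hinjE
  have hAI3 : AlgebraicIndependent B s :=
    AlgebraicIndependent.of_comp (IsScalarTower.toAlgHom B T TE) hAI2
  -- denominators for the integral equations of finitely many generators
  let φ : MvPolynomial (Fin d) B →ₐ[B] T := MvPolynomial.aeval s
  let φE : MvPolynomial (Fin d) E →ₐ[E] TE := MvPolynomial.aeval (fun i => algebraMap T TE (s i))
  have hφ : ∀ p, algebraMap T TE (φ p) = φE (MvPolynomial.map (algebraMap B E) p) := by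
    intro p
    simp only [φ, φE, MvPolynomial.aeval_def, MvPolynomial.eval₂_map, ← IsScalarTower.algebraMap_eq]
    rw [← MvPolynomial.coe_eval₂Hom, ← MvPolynomial.coe_eval₂Hom, ← RingHom.comp_apply,
      MvPolynomial.comp_eval₂Hom, ← IsScalarTower.algebraMap_eq]
  have hφEint : ∀ x : TE, φE.toRingHom.IsIntegralElem x := by
    intro x
    let σ : MvPolynomial (Fin d) E →ₐ[E] MvPolynomial (Fin d) E :=
      MvPolynomial.aeval fun i => MvPolynomial.C (algebraMap B E (β (g (MvPolynomial.X i))))⁻¹ *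
        MvPolynomial.X i
    have hσ : φE.comp σ = g := by
      ext i
      have := hβE (g (MvPolynomial.X i))
      simp only [AlgHom.comp_apply, σ, φE, MvPolynomial.aeval_X, map_mul, hs_eq,
        MvPolynomial.algHom_C, ← mul_assoc]
      rw [← map_mul, inv_mul_cancel₀ this, map_one, one_mul]
    obtain ⟨p, hp, hpx⟩ := hgint x
    refine ⟨p.map σ.toRingHom, hp.map _, ?_⟩
    rw [Polynomial.eval₂_map]
    have h5 : φE.toRingHom.comp σ.toRingHom = g.toRingHom := congrArg AlgHom.toRingHom hσ
    rw [h5]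
    exact hpx
  have hgen : ∀ t : T, ∃ b : B, b ≠ 0 ∧ φ.toRingHom.IsIntegralElem (algebraMap B T b * t) := by
    intro t
    letI : Algebra (MvPolynomial (Fin d) E) TE := φE.toAlgebra
    letI : Algebra (MvPolynomial (Fin d) B) T := φ.toAlgebra
    letI : Algebra (MvPolynomial (Fin d) B) TE := ((algebraMap T TE).comp φ.toRingHom).toAlgebra
    letI : Algebra (MvPolynomial (Fin d) B) (MvPolynomial (Fin d) E) :=
      MvPolynomial.algebraMvPolynomial
    have : IsScalarTower (MvPolynomial (Fin d) B) (MvPolynomial (Fin d) E) TE :=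
      IsScalarTower.of_algebraMap_eq hφ
    have : IsScalarTower (MvPolynomial (Fin d) B) T TE := IsScalarTower.of_algebraMap_eq fun _ => rfl
    have hloc : IsLocalization (Submonoid.map (MvPolynomial.C : B →+* MvPolynomial (Fin d) B) B⁰)
        (MvPolynomial (Fin d) E) :=
      MvPolynomial.isLocalization _ _
    obtain ⟨⟨_, b, hb, rfl⟩, hm⟩ := IsIntegral.exists_multiple_integral_of_isLocalization
      (R := MvPolynomial (Fin d) B) (Submonoid.map (MvPolynomial.C : B →+* MvPolynomial (Fin d) B) B⁰) (Rₘ := MvPolynomial (Fin d) E) (algebraMap T TE t)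
      (hφEint _)
    refine ⟨b, nonZeroDivisors.ne_zero hb, ?_⟩
    have h4 : (algebraMap T TE) (algebraMap B T b * t) =
      (⟨MvPolynomial.C b, b, hb, rfl⟩ : (Submonoid.map MvPolynomial.C B⁰ : Submonoid (MvPolynomial (Fin d) B))) • algebraMap T TE t := by
      rw [Submonoid.smul_def, Algebra.smul_def, map_mul]
      congr 1
      change _ = algebraMap T TE (φ _)
      simp [φ]
    rw [← h4] at hm
    exact (isIntegral_algebraMap_iff hTE).1 hm
  choose γ hγ0 hγ using hgen
  refine ⟨d, s, hAI3, ∏ t ∈ S, γ t, Finset.prod_ne_zero_iff.2 fun t _ => hγ0 t, fun t => ?_⟩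
  have hC : ∀ b : B, φ.toRingHom.IsIntegralElem (algebraMap B T b) := fun b => by
    have := φ.toRingHom.isIntegralElem_map (x := MvPolynomial.C b)
    simpa [φ] using this
  have h2 : t ∈ Algebra.adjoin B (S : Set T) := hS ▸ Algebra.mem_top
  induction h2 using Algebra.adjoin_induction with
  | mem t ht =>
    refine ⟨1, ?_⟩
    rw [pow_one, ← Finset.prod_erase_mul S _ ht, map_mul, mul_assoc]
    exact RingHom.IsIntegralElem.mul _ (hC _) (hγ t)
  | algebraMap r => exact ⟨0, by simpa using hC r⟩
  | add t u _ _ h1 h2 =>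
    obtain ⟨N, hN⟩ := h1
    obtain ⟨M, hM⟩ := h2
    refine ⟨N + M, ?_⟩
    have : ∀ x : T, x ^ (N + M) * (t + u) = x ^ M * (x ^ N * t) + x ^ N * (x ^ M * u) := by
      intro x; ring
    rw [this]
    refine RingHom.IsIntegralElem.add _ (RingHom.IsIntegralElem.mul _ ?_ hN)
      (RingHom.IsIntegralElem.mul _ ?_ hM) <;>
    · rw [← map_pow]; exact hC _
  | mul t u _ _ h1 h2 =>
    obtain ⟨N, hN⟩ := h1
    obtain ⟨M, hM⟩ := h2
    refine ⟨N + M, ?_⟩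
    have : ∀ x : T, x ^ (N + M) * (t * u) = (x ^ N * t) * (x ^ M * u) := by
      intro x; ring
    rw [this]
    exact RingHom.IsIntegralElem.mul _ hN hM

/-- Relative Noether normalisation: a finitely generated domain over a domain `B` is integral over a polynomial ring
`B[s]` after inverting a single nonzero `b ∈ B`. -/
theorem relNoether {B T : Type*} [CommRing B] [IsDomain B] [CommRing T] [IsDomain T] [Algebra B T]
    (hinj : Function.Injective (algebraMap B T)) [Algebra.FiniteType B T] :
    ∃ (d : ℕ) (s : Fin d → T), AlgebraicIndependent B s ∧ ∃ b : B, b ≠ 0 ∧ ∀ t : T, ∃ N : ℕ,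
      (MvPolynomial.aeval s : MvPolynomial (Fin d) B →ₐ[B] T).toRingHom.IsIntegralElem
        (algebraMap B T b ^ N * t) :=
  relNoether_aux (FractionRing B) (Localization (Algebra.algebraMapSubmonoid T B⁰)) hinj

end

/-! ### Points above a point of the base, and irreducible fibres -/

section LO
set_option linter.unusedSectionVars false
variable {B T : Type*} [CommRing B] [CommRing T] [Algebra ℂ B] [Algebra ℂ T]
    [Algebra B T] [IsScalarTower ℂ B T] [Algebra.FiniteType ℂ T]
    {d : ℕ} {s : Fin d → T} {b : B}

/-- Let `a` be integral over `B[s]` with minimal relation `m`. Above a point `χ` of `B` with `χ b ≠ 0`, any values `σ` for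
`s` and any root `ζ` of the specialisation of `m` are realised by a `ℂ`-point of `T`. Since `T` is only integral up to
powers of `b`, lying over is applied to the integral closure of `B[s]` in `T`. -/
theorem lying_over_point
    (hb : ∀ t : T, ∃ N : ℕ,
      (MvPolynomial.aeval s : MvPolynomial (Fin d) B →ₐ[B] T).toRingHom.IsIntegralElem
        (algebraMap B T b ^ N * t))
    (χ : B →ₐ[ℂ] ℂ) (hχ : χ b ≠ 0) (a : T)
    (ha : (MvPolynomial.aeval s : MvPolynomial (Fin d) B →ₐ[B] T).toRingHom.IsIntegralElem a)
    (m : Polynomial (MvPolynomial (Fin d) B))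
    (hm : ∀ P : Polynomial (MvPolynomial (Fin d) B), P.eval₂
      (MvPolynomial.aeval s : MvPolynomial (Fin d) B →ₐ[B] T).toRingHom a = 0 → m ∣ P)
    (σ : Fin d → ℂ) (ζ : ℂ) (hζ : m.eval₂ (MvPolynomial.eval₂Hom χ.toRingHom σ) ζ = 0) :
    ∃ ρ : T →ₐ[ℂ] ℂ, (∀ x : B, ρ (algebraMap B T x) = χ x) ∧ (∀ i, ρ (s i) = σ i) ∧ ρ a = ζ := by
  set φ : MvPolynomial (Fin d) B →ₐ[B] T := MvPolynomial.aeval s with hφ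
  let Φ : Polynomial (MvPolynomial (Fin d) B) →+* T := Polynomial.eval₂RingHom φ.toRingHom a
  let Ψ : Polynomial (MvPolynomial (Fin d) B) →+* ℂ :=
    Polynomial.eval₂RingHom (MvPolynomial.eval₂Hom χ.toRingHom σ) ζ
  have hΦB : ∀ x : B, Φ (Polynomial.C (MvPolynomial.C x)) = algebraMap B T x := by
    intro x; simp [Φ, φ]
  have hΨB : ∀ x : B, Ψ (Polynomial.C (MvPolynomial.C x)) = χ x := by
    intro x; simp [Ψ]
  by_cases hbJ : algebraMap B T b ∈ ((RingHom.ker Ψ).map Φ).radical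
  · exfalso
    letI : Algebra (MvPolynomial (Fin d) B) T := φ.toRingHom.toAlgebra
    let T' := integralClosure (MvPolynomial (Fin d) B) T
    let a' : T' := ⟨a, ha⟩
    let Φ' : Polynomial (MvPolynomial (Fin d) B) →+* T' :=
      Polynomial.eval₂RingHom (algebraMap _ T') a'
    have hΦ' : ∀ P, ((Φ' P : T') : T) = Φ P := by
      intro P
      have : (T'.val.toRingHom).comp Φ' = Φ := by
        apply Polynomial.ringHom_ext
        · intro p; simp [Φ', Φ]; rfl
        · simp [Φ', Φ, a']
      exact congrArg (fun f => f P) this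
    letI : Algebra (Polynomial (MvPolynomial (Fin d) B)) T' := Φ'.toAlgebra
    have : IsScalarTower (MvPolynomial (Fin d) B) (Polynomial (MvPolynomial (Fin d) B)) T' := by
      apply IsScalarTower.of_algebraMap_eq
      intro x
      change _ = Φ' (Polynomial.C x)
      simp [Φ']
    have : Algebra.IsIntegral (Polynomial (MvPolynomial (Fin d) B)) T' :=
      Algebra.IsIntegral.tower_top (R := MvPolynomial (Fin d) B)
    have key : ∀ x ∈ (RingHom.ker Ψ).map Φ, ∃ N : ℕ, ∃ y ∈ (RingHom.ker Ψ).map Φ',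
        (y : T) = algebraMap B T b ^ N * x := by
      intro x hx
      rw [Ideal.map] at hx
      induction hx using Submodule.span_induction with
      | mem x h =>
        obtain ⟨P, hP, rfl⟩ := h
        exact ⟨0, Φ' P, Ideal.mem_map_of_mem _ hP, by simp [hΦ']⟩
      | zero => exact ⟨0, 0, zero_mem _, by simp⟩
      | add x y _ _ h1 h2 =>
        obtain ⟨N, u, hu, hu'⟩ := h1
        obtain ⟨M, v, hv, hv'⟩ := h2
        refine ⟨N + M, Φ' (Polynomial.C (MvPolynomial.C b)) ^ M * u +
          Φ' (Polynomial.C (MvPolynomial.C b)) ^ N * v,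
          add_mem (Ideal.mul_mem_left _ _ hu) (Ideal.mul_mem_left _ _ hv), ?_⟩
        push_cast
        rw [hΦ', hΦB, hu', hv']
        ring
      | smul t x _ h1 =>
        obtain ⟨N, u, hu, hu'⟩ := h1
        obtain ⟨M, hM⟩ := hb t
        refine ⟨N + M, ⟨_, hM⟩ * u, Ideal.mul_mem_left _ _ hu, ?_⟩
        push_cast
        rw [hu', smul_eq_mul]
        ring
    obtain ⟨k, hk⟩ := hbJ
    obtain ⟨N, y, hy, hyx⟩ := key _ hk
    obtain ⟨p, hp, hp0, hpc⟩ := Polynomial.exists_monic_aeval_eq_zero_forall_mem_of_mem_map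
      (R := Polynomial (MvPolynomial (Fin d) B)) (S := T') (I := RingHom.ker Ψ) hy
    have hy' : y = Φ' (Polynomial.C (MvPolynomial.C b) ^ (N + k)) := by
      apply Subtype.ext
      rw [hyx, hΦ', map_pow, hΦB, pow_add]
    have hQ : Φ (p.eval (Polynomial.C (MvPolynomial.C b) ^ (N + k))) = 0 := by
      rw [← hΦ', ← Polynomial.eval₂_at_apply, ← hy']
      exact congrArg Subtype.val hp0
    obtain ⟨q, hq⟩ := hm _ hQ
    have hΨQ : Ψ (p.eval (Polynomial.C (MvPolynomial.C b) ^ (N + k))) = 0 := by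
      rw [hq, map_mul]
      have : Ψ m = 0 := hζ
      rw [this, zero_mul]
    rw [← Polynomial.eval₂_at_apply, map_pow, hΨB, Polynomial.eval₂_eq_sum_range,
      Finset.sum_eq_single p.natDegree] at hΨQ
    · rw [hp.coeff_natDegree, map_one, one_mul] at hΨQ
      exact pow_ne_zero _ (pow_ne_zero _ hχ) hΨQ
    · intro i _ hi
      have : Ψ (p.coeff i) = 0 := hpc i hi
      rw [this, zero_mul]
    · simp
  · obtain ⟨ρ, hρ, -⟩ := exists_point_ne_zero _ _ hbJ
    have key : ∀ P, ρ (Φ P) = Ψ P := by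
      intro P
      have h1 : P - Polynomial.C (MvPolynomial.C (algebraMap ℂ B (Ψ P))) ∈ RingHom.ker Ψ := by
        rw [RingHom.mem_ker, map_sub, hΨB]
        simp
      have h2 := hρ _ (Ideal.mem_map_of_mem Φ h1)
      rw [map_sub, map_sub, hΦB, ← IsScalarTower.algebraMap_apply] at h2
      simpa [sub_eq_zero] using h2
    refine ⟨ρ, fun x => ?_, fun i => ?_, ?_⟩
    · rw [← hΦB, key, hΨB]
    · simpa [Φ, Ψ, φ] using key (Polynomial.C (MvPolynomial.X i))
    · simpa [Φ, Ψ] using key Polynomial.X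



theorem point_eval₂ {χ : B →ₐ[ℂ] ℂ} {ρ : T →ₐ[ℂ] ℂ} (hρ : ∀ x : B, ρ (algebraMap B T x) = χ x)
    (a : T) (P : Polynomial (MvPolynomial (Fin d) B)) :
    ρ (P.eval₂ (MvPolynomial.aeval s : MvPolynomial (Fin d) B →ₐ[B] T).toRingHom a) =
      P.eval₂ (MvPolynomial.eval₂Hom χ.toRingHom (fun i => ρ (s i))) (ρ a) := by
  have h1 : (ρ : T →+* ℂ).comp (MvPolynomial.aeval s : MvPolynomial (Fin d) B →ₐ[B] T).toRingHom =
      MvPolynomial.eval₂Hom χ.toRingHom (fun i => ρ (s i)) := by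
    apply MvPolynomial.ringHom_ext
    · intro r; simp [hρ]
    · intro i; simp
  rw [← h1]
  exact Polynomial.hom_eval₂ P _ (ρ : T →+* ℂ) a

theorem eq_X_pow_of_roots {p : Polynomial ℂ} (hp : p.Monic) (h : ∀ ζ, p.eval ζ = 0 → ζ = 0) :
    p = Polynomial.X ^ p.natDegree := by
  have h1 := (IsAlgClosed.splits p).eq_prod_roots_of_monic hp
  have h2 : p.roots = Multiset.replicate p.natDegree 0 := by
    rw [Multiset.eq_replicate]
    exact ⟨((IsAlgClosed.splits p).natDegree_eq_card_roots).symm, fun x hx =>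
      h x (Polynomial.isRoot_of_mem_roots hx)⟩
  rw [h2] at h1
  simpa using h1

/-- Let `z` have minimal equation `F` over `B[s]` and let the conductor `h` carry integral elements of `T` into `B[s][z]`.
If `F` stays irreducible at a point `χ` of `B`, then the fibre of `T` above `χ` is nonempty and irreducible, because it
is birational to the hypersurface `F = 0`. -/
theorem fibre_irreducible [IsDomain B] [IsDomain T] [UniqueFactorizationMonoid B]
    (hs : AlgebraicIndependent B s)
    (hb : ∀ t : T, ∃ N : ℕ,
      (MvPolynomial.aeval s : MvPolynomial (Fin d) B →ₐ[B] T).toRingHom.IsIntegralElem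
        (algebraMap B T b ^ N * t))
    (z : T) (hz : (MvPolynomial.aeval s : MvPolynomial (Fin d) B →ₐ[B] T).toRingHom.IsIntegralElem z)
    (F : Polynomial (MvPolynomial (Fin d) B))
    (hF0 : F.eval₂ (MvPolynomial.aeval s : MvPolynomial (Fin d) B →ₐ[B] T).toRingHom z = 0)
    (hF : ∀ P : Polynomial (MvPolynomial (Fin d) B), P.eval₂
      (MvPolynomial.aeval s : MvPolynomial (Fin d) B →ₐ[B] T).toRingHom z = 0 → F ∣ P)
    (h : MvPolynomial (Fin d) B)
    (hh : ∀ t : T, (MvPolynomial.aeval s : MvPolynomial (Fin d) B →ₐ[B] T).toRingHom.IsIntegralElem t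
      → ∃ G : Polynomial (MvPolynomial (Fin d) B),
        MvPolynomial.aeval s h * t =
          G.eval₂ (MvPolynomial.aeval s : MvPolynomial (Fin d) B →ₐ[B] T).toRingHom z)
    (χ : B →ₐ[ℂ] ℂ) (hχ : χ b ≠ 0) (hχh : MvPolynomial.map χ.toRingHom h ≠ 0)
    (hirr : Irreducible (F.map (MvPolynomial.map χ.toRingHom))) :
    (∃ ρ : T →ₐ[ℂ] ℂ, ∀ x : B, ρ (algebraMap B T x) = χ x) ∧
    ∀ g g' : T, (∀ ρ : T →ₐ[ℂ] ℂ, (∀ x : B, ρ (algebraMap B T x) = χ x) → ρ (g * g') = 0) →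
      (∀ ρ : T →ₐ[ℂ] ℂ, (∀ x : B, ρ (algebraMap B T x) = χ x) → ρ g = 0) ∨
      (∀ ρ : T →ₐ[ℂ] ℂ, (∀ x : B, ρ (algebraMap B T x) = χ x) → ρ g' = 0) := by
  set φ : MvPolynomial (Fin d) B →ₐ[B] T := MvPolynomial.aeval s with hφ
  have hφinj : Function.Injective φ := hs
  letI : Algebra (MvPolynomial (Fin d) B) T := φ.toRingHom.toAlgebra
  have : FaithfulSMul (MvPolynomial (Fin d) B) T := (faithfulSMul_iff_algebraMap_injective _ _).2 hφinj
  have hmin : ∀ a : T, φ.toRingHom.IsIntegralElem a → ∃ m : Polynomial (MvPolynomial (Fin d) B),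
      m.Monic ∧ m.eval₂ φ.toRingHom a = 0 ∧ ∀ P : Polynomial (MvPolynomial (Fin d) B),
        P.eval₂ φ.toRingHom a = 0 → m ∣ P := fun a ha =>
    ⟨minpoly (MvPolynomial (Fin d) B) a, minpoly.monic ha, minpoly.aeval _ a, fun P hP =>
      minpoly.isIntegrallyClosed_dvd ha hP⟩
  have hev : ∀ (σ : Fin d → ℂ) (q : MvPolynomial (Fin d) B),
      MvPolynomial.eval₂Hom χ.toRingHom σ q = MvPolynomial.eval σ (MvPolynomial.map χ.toRingHom q) := by
    intro σ q
    rw [MvPolynomial.eval_map]; rfl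
  have hevc : ∀ (σ : Fin d → ℂ), MvPolynomial.eval₂Hom χ.toRingHom σ =
      (MvPolynomial.eval σ).comp (MvPolynomial.map χ.toRingHom) := by
    intro σ; exact RingHom.ext (hev σ)
  have hφs : ∀ (ρ : T →ₐ[ℂ] ℂ), (∀ x : B, ρ (algebraMap B T x) = χ x) → ∀ q,
      ρ (φ q) = MvPolynomial.eval (fun i => ρ (s i)) (MvPolynomial.map χ.toRingHom q) := by
    intro ρ hρ q
    have := point_eval₂ (s := s) hρ 0 (Polynomial.C q)
    rw [Polynomial.eval₂_C, Polynomial.eval₂_C, hev] at this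
    exact this
  have hbχ : ∀ (ρ : T →ₐ[ℂ] ℂ), (∀ x : B, ρ (algebraMap B T x) = χ x) → ∀ (N : ℕ) (t : T),
      ρ (algebraMap B T b ^ N * t) = 0 → ρ t = 0 := by
    intro ρ hρ N t ht
    rw [map_mul, map_pow, hρ] at ht
    exact (mul_eq_zero.1 ht).resolve_left (pow_ne_zero _ hχ)
  -- the complement of `h = 0` is dense in the fibre
  have D1 : ∀ a : T, (∀ ρ : T →ₐ[ℂ] ℂ, (∀ x : B, ρ (algebraMap B T x) = χ x) → ρ (φ h * a) = 0) →
      ∀ ρ : T →ₐ[ℂ] ℂ, (∀ x : B, ρ (algebraMap B T x) = χ x) → ρ a = 0 := by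
    intro a ha ρ hρ
    obtain ⟨N, hN⟩ := hb a
    obtain ⟨m, hmon, hm0, hm⟩ := hmin _ hN
    refine hbχ ρ hρ N a ?_
    have hc : ∀ i, i ≠ m.natDegree → MvPolynomial.map χ.toRingHom (m.coeff i) = 0 := by
      intro i hi
      have h1 : MvPolynomial.map χ.toRingHom h * MvPolynomial.map χ.toRingHom (m.coeff i) = 0 := by
        apply MvPolynomial.funext
        intro σ
        rw [map_mul, map_zero]
        by_cases hσ : MvPolynomial.eval σ (MvPolynomial.map χ.toRingHom h) = 0
        · rw [hσ, zero_mul]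
        have h2 := eq_X_pow_of_roots (hmon.map (MvPolynomial.eval₂Hom χ.toRingHom σ)) (by
          intro ζ hζ
          rw [Polynomial.eval_map] at hζ
          obtain ⟨ρ', hρ', hρs, hρa⟩ := lying_over_point hb χ hχ _ hN m hm σ ζ hζ
          have h3 := ha ρ' hρ'
          rw [map_mul, hφs _ hρ', show (fun i => ρ' (s i)) = σ from funext hρs] at h3
          rw [← hρa, map_mul, (mul_eq_zero.1 h3).resolve_left hσ, mul_zero])
        have h4 := congrArg (fun p => p.coeff i) h2
        simp only [Polynomial.coeff_map, Polynomial.coeff_X_pow, hmon.natDegree_map, if_neg hi] at h4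
        have h7 := hev σ (m.coeff i)
        rw [h4] at h7
        rw [← h7, mul_zero]
      exact (mul_eq_zero.1 h1).resolve_left hχh
    have h5 := point_eval₂ (s := s) hρ (algebraMap B T b ^ N * a) m
    rw [hm0, map_zero, hevc, ← Polynomial.eval₂_map] at h5
    have h6 : m.map (MvPolynomial.map χ.toRingHom) = Polynomial.X ^ m.natDegree := by
      ext1 i
      rw [Polynomial.coeff_map, Polynomial.coeff_X_pow]
      split_ifs with hi
      · rw [hi, hmon.coeff_natDegree, map_one]
      · exact hc i hi
    rw [h6, Polynomial.eval₂_X_pow] at h5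
    exact eq_zero_of_pow_eq_zero h5.symm
  -- polynomials vanishing on the fibre are divisible by the specialised equation
  have hdvd : ∀ G : Polynomial (MvPolynomial (Fin d) B),
      (∀ ρ : T →ₐ[ℂ] ℂ, (∀ x : B, ρ (algebraMap B T x) = χ x) → ρ (G.eval₂ φ.toRingHom z) = 0) →
      F.map (MvPolynomial.map χ.toRingHom) ∣ G.map (MvPolynomial.map χ.toRingHom) := by
    intro G hG
    have : Algebra.FiniteType ℂ (Polynomial (MvPolynomial (Fin d) ℂ)) :=
      Algebra.FiniteType.trans (S := MvPolynomial (Fin d) ℂ) inferInstance inferInstance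
    have h1 : G.map (MvPolynomial.map χ.toRingHom) ∈
        (Ideal.span {F.map (MvPolynomial.map χ.toRingHom)}).radical := by
      by_contra hcon
      obtain ⟨ρ, hρ, hρG⟩ := exists_point_ne_zero _ _ hcon
      have h2 : ∀ Q : Polynomial (MvPolynomial (Fin d) ℂ), ρ Q = Q.eval₂
          (MvPolynomial.eval fun i => ρ (Polynomial.C (MvPolynomial.X i))) (ρ Polynomial.X) := by
        intro Q
        have : (ρ : Polynomial (MvPolynomial (Fin d) ℂ) →+* ℂ) = Polynomial.eval₂RingHom
          (MvPolynomial.eval fun i => ρ (Polynomial.C (MvPolynomial.X i))) (ρ Polynomial.X) := by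
          apply Polynomial.ringHom_ext'
          · apply MvPolynomial.ringHom_ext
            · intro r
              simp only [RingHom.comp_apply, RingHom.coe_coe, Polynomial.coe_eval₂RingHom,
                Polynomial.eval₂_C, MvPolynomial.eval_C]
              exact ρ.commutes r
            · intro i; simp
          · simp
        exact congrArg (fun f => f Q) this
      have h3 := hρ _ (Ideal.mem_span_singleton_self _)
      rw [h2, Polynomial.eval₂_map, ← hevc] at h3
      obtain ⟨ρ', hρ', hρs, hρa⟩ := lying_over_point hb χ hχ z hz F hF _ _ h3
      apply hρG
      have h4 := hG ρ' hρ'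
      rw [point_eval₂ hρ', hρa, funext hρs] at h4
      rw [h2, Polynomial.eval₂_map, ← hevc, h4]
    obtain ⟨k, hk⟩ := h1
    exact hirr.prime.dvd_of_dvd_pow (Ideal.mem_span_singleton.1 hk)
  constructor
  · obtain ⟨ρ, hρ, -⟩ := lying_over_point hb χ hχ (0 : T) (by
      exact ⟨Polynomial.X, Polynomial.monic_X, by simp⟩) Polynomial.X (fun P hP => by
        rw [Polynomial.X_dvd_iff]
        have h1 : φ (P.coeff 0) = 0 := by
          rw [← hP, Polynomial.eval₂_eq_sum_range, Finset.sum_range_succ', Finset.sum_eq_zero]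
          · simp [hφ]
          · intro i _; simp
        exact hφinj (by rw [map_zero]; exact h1)) 0 0 (by simp)
    exact ⟨ρ, hρ⟩
  · intro g g' hgg
    obtain ⟨N, hN⟩ := hb g
    obtain ⟨N', hN'⟩ := hb g'
    obtain ⟨G, hG⟩ := hh _ hN
    obtain ⟨G', hG'⟩ := hh _ hN'
    have h1 := hdvd (G * G') (fun ρ hρ => by
      rw [Polynomial.eval₂_mul, ← hG, ← hG']
      have := hgg ρ hρ
      rw [map_mul] at this
      simp only [map_mul]
      linear_combination ρ (MvPolynomial.aeval s h) ^ 2 * ρ (algebraMap B T b ^ N) *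
        ρ (algebraMap B T b ^ N') * this)
    rw [Polynomial.map_mul] at h1
    have h2 : ∀ (g : T) (N : ℕ) (G : Polynomial (MvPolynomial (Fin d) B)),
        (MvPolynomial.aeval s) h * ((algebraMap B T) b ^ N * g) = Polynomial.eval₂ φ.toRingHom z G →
        F.map (MvPolynomial.map χ.toRingHom) ∣ G.map (MvPolynomial.map χ.toRingHom) →
        ∀ ρ : T →ₐ[ℂ] ℂ, (∀ x : B, ρ (algebraMap B T x) = χ x) → ρ g = 0 := by
      intro g N G hG hd ρ hρ
      refine hbχ ρ hρ N g (D1 _ (fun ρ hρ => ?_) ρ hρ)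
      have h3 : ρ (G.eval₂ φ.toRingHom z) = 0 := by
        have h4 := point_eval₂ (s := s) hρ z F
        rw [hF0, map_zero, hevc, ← Polynomial.eval₂_map] at h4
        rw [point_eval₂ hρ, hevc, ← Polynomial.eval₂_map]
        obtain ⟨Q, hQ⟩ := hd
        rw [hQ, Polynomial.eval₂_mul, ← h4, zero_mul]
      rw [← hG] at h3
      exact h3
    exact (hirr.prime.dvd_or_dvd h1).imp (h2 g N G hG) (h2 g' N' G' hG')

end LO

/-! ### Primitive elements and conductors -/

section

open scoped nonZeroDivisors

/-- The case of `exists_primitive_conductor` with chosen models `K` and `L` of the fraction fields. -/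
theorem exists_primitive_conductor_aux {S T : Type*} (K L : Type*) [CommRing S] [IsDomain S] [IsIntegrallyClosed S]
    [CharZero S] [CommRing T] [IsDomain T] [Algebra S T] [FaithfulSMul S T]
    [Algebra.FiniteType S T] [Field K] [Field L] [Algebra S K] [IsFractionRing S K] [Algebra T L]
    [IsFractionRing T L] [Algebra K L] [Algebra S L] [IsScalarTower S T L] [IsScalarTower S K L]
    (b : S) (hb0 : b ≠ 0)
    (hb : ∀ t : T, ∃ N : ℕ, IsIntegral S (algebraMap S T b ^ N * t)) :
    ∃ z : T, IsIntegral S z ∧ ∃ h : S, h ≠ 0 ∧ ∀ t : T, IsIntegral S t →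
      algebraMap S T h * t ∈ Algebra.adjoin S {z} := by
  have hKinj : Function.Injective (algebraMap S K) := IsFractionRing.injective S K
  have hTL : Function.Injective (algebraMap T L) := IsFractionRing.injective T L
  have hST : Function.Injective (algebraMap S T) := FaithfulSMul.algebraMap_injective S T
  have : CharZero K := charZero_of_injective_algebraMap hKinj
  have hbT : algebraMap S T b ≠ 0 := (map_ne_zero_iff _ hST).2 hb0
  have hbK : algebraMap S K b ≠ 0 := (map_ne_zero_iff _ hKinj).2 hb0
  have halg : ∀ t : T, IsAlgebraic S t := by
    intro t
    obtain ⟨N, hN⟩ := hb t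
    refine IsAlgebraic.of_smul_isIntegral (y := b ^ N) (by simp [hb0]) ?_
    rwa [Algebra.smul_def, map_pow]
  have halgST : Algebra.IsAlgebraic S T := ⟨halg⟩
  have hKLalg : Algebra.IsAlgebraic K L := by
    refine ⟨fun x => ?_⟩
    obtain ⟨t1, t2, ht2, rfl⟩ := IsFractionRing.div_surjective (A := T) x
    have h1 : ∀ t, IsAlgebraic K (algebraMap T L t) := fun t => (halg t).algebraMap.extendScalars hKinj
    rw [div_eq_mul_inv]
    exact (h1 t1).mul (h1 t2).inv
  have : Algebra.EssFiniteType S T := inferInstance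
  have : Algebra.EssFiniteType T L := Algebra.EssFiniteType.of_isLocalization _ T⁰
  have : Algebra.EssFiniteType S L := Algebra.EssFiniteType.comp S T L
  have : Algebra.EssFiniteType K L := Algebra.EssFiniteType.of_comp S K L
  have : FiniteDimensional K L := Algebra.finite_of_essFiniteType_of_isAlgebraic
  obtain ⟨z0, hz0⟩ := Field.exists_primitive_element K L
  obtain ⟨t1, t2, ht2, rfl⟩ := IsFractionRing.div_surjective (A := T) z0
  obtain ⟨c, hc0, w, hw⟩ := (halg t2).exists_nonzero_dvd ht2
  obtain ⟨N, hN⟩ := hb (t1 * w)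
  set z : T := algebraMap S T b ^ N * (t1 * w) with hz
  have ht2L : algebraMap T L t2 ≠ 0 := (map_ne_zero_iff _ hTL).2 (nonZeroDivisors.ne_zero ht2)
  have hzL : algebraMap T L z = algebraMap K L (algebraMap S K (b ^ N * c)) *
      (algebraMap T L t1 / algebraMap T L t2) := by
    rw [← IsScalarTower.algebraMap_apply, IsScalarTower.algebraMap_apply S T L, map_mul (algebraMap S T),
      hw, hz]
    simp only [map_mul, map_pow]
    field_simp
  have hc' : algebraMap S K (b ^ N * c) ≠ 0 := (map_ne_zero_iff _ hKinj).2 (by simp [hb0, hc0])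
  have hprim : IntermediateField.adjoin K {algebraMap T L z} = ⊤ := by
    rw [← top_le_iff, ← hz0, IntermediateField.adjoin_simple_le_iff]
    have h1 : algebraMap T L t1 / algebraMap T L t2 =
        algebraMap K L (algebraMap S K (b ^ N * c))⁻¹ * algebraMap T L z := by
      rw [hzL, ← mul_assoc, ← map_mul, inv_mul_cancel₀ hc', map_one, one_mul]
    rw [h1]
    exact mul_mem (IntermediateField.algebraMap_mem _ _) (IntermediateField.mem_adjoin_simple_self K _)
  have hzint : IsIntegral K (algebraMap T L z) := Algebra.IsIntegral.isIntegral _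
  let pb : PowerBasis K L := (IntermediateField.adjoin.powerBasis hzint).map
    ((IntermediateField.equivOfEq hprim).trans IntermediateField.topEquiv)
  have hgen : pb.gen = algebraMap T L z := by
    simp [pb]
  have hgenint : IsIntegral S pb.gen := by
    rw [hgen]; exact hN.algebraMap
  have hdisc : IsIntegral S (Algebra.discr K pb.basis) := Algebra.discr_isIntegral K (fun i => by
    rw [PowerBasis.coe_basis]; exact hgenint.pow _)
  obtain ⟨h, hh⟩ := IsIntegrallyClosed.isIntegral_iff.1 hdisc
  refine ⟨z, hN, h, ?_, fun t ht => ?_⟩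
  · rintro rfl
    rw [map_zero] at hh
    exact Algebra.discr_not_zero_of_basis K pb.basis hh.symm
  · have h2 := Algebra.discr_mul_isIntegral_mem_adjoin K hgenint (ht.algebraMap (B := L))
    rw [← hh, Algebra.smul_def, ← IsScalarTower.algebraMap_apply, IsScalarTower.algebraMap_apply S T L,
      ← map_mul, hgen] at h2
    have h3 : Algebra.adjoin S {algebraMap T L z} =
        (Algebra.adjoin S {z}).map (IsScalarTower.toAlgHom S T L) := by
      rw [AlgHom.map_adjoin]; simp
    rw [h3] at h2
    obtain ⟨y, hy, hy'⟩ := h2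
    have : y = algebraMap S T h * t := hTL hy'
    rwa [← this]

/-- Some integral element `z` generates `Frac T` over `Frac S`, and the discriminant of its powers is a conductor for
`S[z]`: it carries all integral elements of `T` into `S[z]`. -/
theorem exists_primitive_conductor {S T : Type*} [CommRing S] [IsDomain S] [IsIntegrallyClosed S]
    [CharZero S] [CommRing T] [IsDomain T] [Algebra S T] [FaithfulSMul S T]
    [Algebra.FiniteType S T]
    (b : S) (hb0 : b ≠ 0)
    (hb : ∀ t : T, ∃ N : ℕ, IsIntegral S (algebraMap S T b ^ N * t)) :
    ∃ z : T, IsIntegral S z ∧ ∃ h : S, h ≠ 0 ∧ ∀ t : T, IsIntegral S t →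
      algebraMap S T h * t ∈ Algebra.adjoin S {z} := by
  letI := FractionRing.liftAlgebra S (FractionRing T)
  exact exists_primitive_conductor_aux (FractionRing S) (FractionRing T) b hb0 hb

end

/-! ### Factorisations over finite extensions -/

open Polynomial in
/-- If `E` is algebraically closed in `L`, then `L` is linearly disjoint from every finite extension `E'` of `E`: the
minimal polynomial over `L` of a generator of `E'` has coefficients algebraic over `E`, hence is the one over `E`. -/
theorem linearIndependent_of_algClosedIn {E L Ω E' : Type*} [Field E] [CharZero E] [Field L] [Algebra E L]
    (hcl : ∀ α : L, IsAlgebraic E α → ∃ e : E, algebraMap E L e = α)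
    [Field Ω] [Algebra L Ω] [Algebra E Ω] [IsScalarTower E L Ω]
    [Field E'] [Algebra E E'] [FiniteDimensional E E'] (pb : PowerBasis E E')
    (j : E' →ₐ[E] Ω) : LinearIndependent L (fun i : Fin pb.dim => j pb.gen ^ (i : ℕ)) := by
  have hgint : IsIntegral E pb.gen := Algebra.IsIntegral.isIntegral _
  have hintΩ : IsIntegral E (j pb.gen) := hgint.map j
  have hintL : IsIntegral L (j pb.gen) := hintΩ.tower_top
  have hmE : minpoly E (j pb.gen) = minpoly E pb.gen :=
    minpoly.algHom_eq j j.toRingHom.injective pb.gen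
  have hdvd : minpoly L (j pb.gen) ∣ (minpoly E pb.gen).map (algebraMap E L) := by
    rw [← hmE]; exact minpoly.dvd_map_of_isScalarTower E L (j pb.gen)
  have hcoef : ∀ i, IsIntegral E ((minpoly L (j pb.gen)).coeff i) := fun i =>
    Polynomial.isIntegral_coeff_of_dvd _ _ (minpoly.monic hgint) (minpoly.monic hintL) hdvd i
  have hlift : minpoly L (j pb.gen) ∈ Polynomial.lifts (algebraMap E L) := by
    rw [Polynomial.lifts_iff_coeff_lifts]
    intro i
    obtain ⟨e, he⟩ := hcl _ (hcoef i).isAlgebraic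
    exact ⟨e, he⟩
  obtain ⟨p, hp, hpd, hpm⟩ := Polynomial.lifts_and_natDegree_eq_and_monic hlift (minpoly.monic hintL)
  have hp0 : aeval pb.gen p = 0 := by
    apply j.toRingHom.injective
    rw [map_zero]
    have h1 : aeval (j pb.gen) (minpoly L (j pb.gen)) = 0 := minpoly.aeval _ _
    rw [← hp, aeval_map_algebraMap, aeval_algHom_apply] at h1
    exact h1
  have hdeg : pb.dim ≤ (minpoly L (j pb.gen)).natDegree := by
    rw [← pb.natDegree_minpoly, ← hpd]
    exact natDegree_le_of_dvd (minpoly.dvd E _ hp0) hpm.ne_zero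
  exact (linearIndependent_pow (K := L) (j pb.gen)).comp (Fin.castLE hdeg) (Fin.castLE_injective hdeg)

/-- Coordinates of a polynomial over `E'` with respect to a power basis of `E'` over `E`. -/
theorem mvPolynomial_decomp {σ E E' : Type*} [Field E] [Field E'] [Algebra E E']
    (pb : PowerBasis E E') (p : MvPolynomial σ E') :
    ∃ q : Fin pb.dim → MvPolynomial σ E,
      p = ∑ i : Fin pb.dim, MvPolynomial.C (pb.gen ^ (i : ℕ)) * MvPolynomial.map (algebraMap E E') (q i) := by
  induction p using MvPolynomial.induction_on' with
  | monomial u a =>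
    refine ⟨fun i => MvPolynomial.monomial u (pb.basis.repr a i), ?_⟩
    conv_lhs => rw [← pb.basis.sum_repr a]
    rw [map_sum]
    refine Finset.sum_congr rfl fun i _ => ?_
    rw [MvPolynomial.map_monomial, MvPolynomial.C_mul_monomial, Algebra.smul_def, mul_comm]
    simp
  | add p q hp hq =>
    obtain ⟨f, hf⟩ := hp
    obtain ⟨g, hg⟩ := hq
    refine ⟨f + g, ?_⟩
    conv_lhs => rw [hf, hg]
    simp [mul_add, Finset.sum_add_distrib]

open Polynomial in
theorem polynomial_decomp {σ E E' : Type*} [Field E] [Field E'] [Algebra E E']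
    (pb : PowerBasis E E') (G : Polynomial (MvPolynomial σ E')) :
    ∃ q : Fin pb.dim → Polynomial (MvPolynomial σ E), (∀ i, (q i).natDegree ≤ G.natDegree) ∧
      G = ∑ i : Fin pb.dim, C (MvPolynomial.C (pb.gen ^ (i : ℕ))) *
        (q i).map (MvPolynomial.map (algebraMap E E')) := by
  choose f hf using fun p : MvPolynomial σ E' => mvPolynomial_decomp pb p
  refine ⟨fun i => ∑ n ∈ Finset.range (G.natDegree + 1), monomial n (f (G.coeff n) i), fun i => ?_, ?_⟩
  · refine natDegree_sum_le_of_forall_le _ _ fun n hn => (natDegree_monomial_le _).trans ?_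
    have := Finset.mem_range.1 hn
    omega
  · conv_lhs => rw [G.as_sum_range]
    simp_rw [Polynomial.map_sum, Finset.mul_sum]
    rw [Finset.sum_comm]
    refine Finset.sum_congr rfl fun n _ => ?_
    conv_lhs => rw [hf (G.coeff n)]
    rw [map_sum]
    refine Finset.sum_congr rfl fun i _ => ?_
    rw [map_monomial, C_mul_monomial]

open Polynomial in
/-- Geometric irreducibility: if `E` is algebraically closed in `L`, the minimal equation `F` of `z ∈ L` over `E(s)` does not
factor over a finite extension of `E`. By linear disjointness, the coordinates over `E` of a factor vanishing at `z` also
vanish at `z`, and they have smaller degree than `F`. -/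
theorem no_factorization {E L E' : Type*} [Field E] [CharZero E] [Field L] [Algebra E L]
    (hcl : ∀ α : L, IsAlgebraic E α → ∃ e : E, algebraMap E L e = α)
    {d : ℕ} (s : Fin d → L) (z : L) (F : Polynomial (MvPolynomial (Fin d) E)) (hFm : F.Monic)
    (hF : F.eval₂ (MvPolynomial.aeval s : MvPolynomial (Fin d) E →ₐ[E] L).toRingHom z = 0)
    (hmin : ∀ G : Polynomial (MvPolynomial (Fin d) E), G.natDegree < F.natDegree →
      G.eval₂ (MvPolynomial.aeval s : MvPolynomial (Fin d) E →ₐ[E] L).toRingHom z = 0 → G = 0)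
    [Field E'] [Algebra E E'] [FiniteDimensional E E']
    (G H : Polynomial (MvPolynomial (Fin d) E'))
    (hG : G.natDegree < F.natDegree) (hH : H.natDegree < F.natDegree)
    (hGH : F.map (MvPolynomial.map (algebraMap E E')) = G * H) : False := by
  let Ω := AlgebraicClosure L
  let j : E' →ₐ[E] Ω := IsAlgClosed.lift
  have : Algebra.IsSeparable E E' := inferInstance
  let pb := Field.powerBasisOfFiniteOfSeparable E E'
  have hli := linearIndependent_of_algClosedIn hcl pb j
  let e' : MvPolynomial (Fin d) E' →+* Ω :=
    MvPolynomial.eval₂Hom j.toRingHom (fun i => algebraMap L Ω (s i))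
  have he' : e'.comp (MvPolynomial.map (algebraMap E E')) =
      (algebraMap L Ω).comp (MvPolynomial.aeval s : MvPolynomial (Fin d) E →ₐ[E] L).toRingHom := by
    apply MvPolynomial.ringHom_ext
    · intro r
      simp [e', ← IsScalarTower.algebraMap_apply]
    · intro i; simp [e']
  have hev : ∀ P : Polynomial (MvPolynomial (Fin d) E),
      (P.map (MvPolynomial.map (algebraMap E E'))).eval₂ e' (algebraMap L Ω z) =
        algebraMap L Ω (P.eval₂ (MvPolynomial.aeval s : MvPolynomial (Fin d) E →ₐ[E] L).toRingHom z) := by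
    intro P
    rw [eval₂_map, he', hom_eval₂]
  have hne : F.map (MvPolynomial.map (algebraMap E E')) ≠ 0 := (hFm.map _).ne_zero
  have key : ∀ G : Polynomial (MvPolynomial (Fin d) E'), G.natDegree < F.natDegree →
      G.eval₂ e' (algebraMap L Ω z) = 0 → G = 0 := by
    intro G hG hG0
    obtain ⟨q, hqd, hq⟩ := polynomial_decomp pb G
    have h1 : ∑ i, (q i).eval₂ (MvPolynomial.aeval s : MvPolynomial (Fin d) E →ₐ[E] L).toRingHom z •
        j pb.gen ^ (i : ℕ) = 0 := by
      rw [← hG0, hq, eval₂_finset_sum]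
      refine Finset.sum_congr rfl fun i _ => ?_
      rw [eval₂_mul, eval₂_C, hev, Algebra.smul_def, mul_comm]
      simp [e']
    have h2 := Fintype.linearIndependent_iff.1 hli _ h1
    rw [hq]
    refine Finset.sum_eq_zero fun i _ => ?_
    rw [hmin (q i) ((hqd i).trans_lt hG) (h2 i), Polynomial.map_zero, mul_zero]
  have h0 := hev F
  rw [hF, map_zero, hGH, eval₂_mul] at h0
  rcases mul_eq_zero.1 h0 with h | h
  · exact hne (by rw [hGH, key G hG h, zero_mul])
  · exact hne (by rw [hGH, key H hH h, mul_zero])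

/-! ### The Bertini–Noether theorem -/

section

universe u

/-- The polynomial with coefficients `w` on a given finite set of exponents. -/
noncomputable def genPoly {σ R : Type*} [CommSemiring R] (M : Finset (σ →₀ ℕ)) (w : M → R) :
    MvPolynomial σ R := ∑ m : M, MvPolynomial.monomial m.1 (w m)

theorem genPoly_map {σ R R' : Type*} [CommSemiring R] [CommSemiring R'] (M : Finset (σ →₀ ℕ))
    (w : M → R) (φ : R →+* R') :
    MvPolynomial.map φ (genPoly M w) = genPoly M (fun m => φ (w m)) := by
  simp [genPoly, MvPolynomial.map_monomial]

theorem eq_genPoly {σ R : Type*} [CommSemiring R] (M : Finset (σ →₀ ℕ)) (p : MvPolynomial σ R)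
    (h : p.support ⊆ M) : p = genPoly M (fun m => p.coeff m.1) := by
  unfold genPoly
  rw [Finset.sum_coe_sort M (fun m => MvPolynomial.monomial m (p.coeff m))]
  conv_lhs => rw [← p.support_sum_monomial_coeff]
  refine Finset.sum_subset h fun m _ hm => ?_
  rw [MvPolynomial.notMem_support_iff.1 hm, map_zero]

theorem finSuccEquiv_map' {R R' : Type*} [CommSemiring R] [CommSemiring R'] (φ : R →+* R') {d : ℕ}
    (p : MvPolynomial (Fin (d + 1)) R) :
    MvPolynomial.finSuccEquiv R' d (MvPolynomial.map φ p) =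
      (MvPolynomial.finSuccEquiv R d p).map (MvPolynomial.map φ) := by
  ext i m
  rw [MvPolynomial.finSuccEquiv_coeff_coeff, MvPolynomial.coeff_map, Polynomial.coeff_map,
    MvPolynomial.coeff_map, MvPolynomial.finSuccEquiv_coeff_coeff]

theorem natDegree_genPoly_lt {R : Type*} [CommSemiring R] {d n : ℕ} (hn : 0 < n)
    (M : Finset (Fin (d + 1) →₀ ℕ)) (hM : ∀ m ∈ M, m 0 < n) (w : M → R) :
    (MvPolynomial.finSuccEquiv R d (genPoly M w)).natDegree < n := by
  rw [MvPolynomial.natDegree_finSuccEquiv, MvPolynomial.degreeOf_lt_iff hn]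
  intro m hm
  by_cases h : m ∈ M
  · exact hM m h
  · exfalso
    rw [MvPolynomial.mem_support_iff] at hm
    apply hm
    rw [genPoly, MvPolynomial.coeff_sum]
    refine Finset.sum_eq_zero fun m' _ => ?_
    rw [MvPolynomial.coeff_monomial, if_neg]
    rintro rfl
    exact h m'.2

/-- Bertini–Noether: if a monic polynomial over a domain does not factor over any finite extension of the
fraction field, then almost all its specialisations are irreducible. -/
theorem irreducible_specialisation {B E : Type u} [CommRing B] [IsDomain B] [Field E] [Algebra B E]
    [IsFractionRing B E] {d : ℕ} (F : Polynomial (MvPolynomial (Fin d) B)) (hFm : F.Monic)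
    (hF0 : 0 < F.natDegree)
    (hno : ∀ (E' : Type u) [Field E'] [Algebra E E'] [FiniteDimensional E E']
      (G H : Polynomial (MvPolynomial (Fin d) E')), G.natDegree < F.natDegree →
      H.natDegree < F.natDegree →
      (F.map (MvPolynomial.map (algebraMap B E))).map (MvPolynomial.map (algebraMap E E')) = G * H →
      False) :
    ∃ q : B, q ≠ 0 ∧ ∀ χ : B →+* ℂ, χ q ≠ 0 → Irreducible (F.map (MvPolynomial.map χ)) := by
  classical
  set n := F.natDegree with hn
  let F' : MvPolynomial (Fin (d + 1)) B := (MvPolynomial.finSuccEquiv B d).symm F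
  have hF' : MvPolynomial.finSuccEquiv B d F' = F := AlgEquiv.apply_symm_apply _ _
  let D := F'.totalDegree
  have hfin : {m : Fin (d + 1) →₀ ℕ | m.degree ≤ D}.Finite := Finsupp.finite_of_degree_le D
  let M : Finset (Fin (d + 1) →₀ ℕ) := hfin.toFinset.filter (fun m => m 0 < n)
  have hM : ∀ m ∈ M, m 0 < n := fun m hm => (Finset.mem_filter.1 hm).2
  let W := M ⊕ M
  let P : MvPolynomial (Fin (d + 1)) (MvPolynomial W B) :=
    MvPolynomial.map MvPolynomial.C F' -
      genPoly M (fun m => MvPolynomial.X (Sum.inl m)) * genPoly M (fun m => MvPolynomial.X (Sum.inr m))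
  let I : Ideal (MvPolynomial W B) := Ideal.span (Set.range fun m => P.coeff m)
  -- The coefficients of `F - G * H`, for unknown `G` and `H`, generate the ideal `I`. If `I` contained no nonzero
  -- constant, a maximal ideal of `E[W]` above it would give a factorisation over a finite extension of `E`.
  have hI : ∃ q : B, q ≠ 0 ∧ MvPolynomial.C q ∈ I := by
    by_contra! hcon
    letI := MvPolynomial.algebraMvPolynomial (R := B) (S := E) (σ := W)
    have hdis : Disjoint ((Submonoid.map (MvPolynomial.C (σ := W)) (nonZeroDivisors B) :
        Submonoid (MvPolynomial W B)) : Set (MvPolynomial W B)) (I : Set (MvPolynomial W B)) := by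
      rw [Set.disjoint_left]
      rintro _ ⟨q, hq, rfl⟩ hqI
      exact hcon q (nonZeroDivisors.ne_zero hq) hqI
    have hne := (IsLocalization.map_algebraMap_ne_top_iff_disjoint (S := MvPolynomial W E) _ I).2 hdis
    obtain ⟨m, hm, hle⟩ := Ideal.exists_le_maximal _ hne
    let E' := MvPolynomial W E ⧸ m
    letI : Field E' := Ideal.Quotient.field m
    have : FiniteDimensional E E' := finite_of_finite_type_of_isJacobsonRing E E'
    let φ : MvPolynomial W B →+* E' := (Ideal.Quotient.mk m).comp (algebraMap _ (MvPolynomial W E))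
    have hφI : ∀ x ∈ I, φ x = 0 := fun x hx =>
      Ideal.Quotient.eq_zero_iff_mem.2 (hle (Ideal.mem_map_of_mem _ hx))
    have h1 : MvPolynomial.map φ P = MvPolynomial.map (φ.comp MvPolynomial.C) F' -
        genPoly M (fun m => φ (MvPolynomial.X (Sum.inl m))) *
        genPoly M (fun m => φ (MvPolynomial.X (Sum.inr m))) := by
      simp only [P, map_sub, map_mul, genPoly_map, MvPolynomial.map_map]
    have h0 : MvPolynomial.map φ P = 0 := by
      ext m
      rw [MvPolynomial.coeff_map, MvPolynomial.coeff_zero]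
      exact hφI _ (Ideal.subset_span ⟨m, rfl⟩)
    rw [h0, eq_comm, sub_eq_zero] at h1
    have hC : φ.comp MvPolynomial.C = (algebraMap E E').comp (algebraMap B E) := by
      ext x
      simp only [φ, RingHom.comp_apply, MvPolynomial.algebraMap_def, MvPolynomial.map_C]
      rfl
    have h2 := congrArg (MvPolynomial.finSuccEquiv E' d) h1
    rw [finSuccEquiv_map', hF', map_mul, hC] at h2
    refine hno E' _ _ (natDegree_genPoly_lt hF0 M hM fun m => φ (MvPolynomial.X (Sum.inl m)))
      (natDegree_genPoly_lt hF0 M hM fun m => φ (MvPolynomial.X (Sum.inr m))) ?_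
    rw [← h2, Polynomial.map_map]
    congr 1
    exact MvPolynomial.ringHom_ext (fun r => by simp) (fun i => by simp)
  obtain ⟨q, hq0, hqI⟩ := hI
  refine ⟨q, hq0, fun χ hχ => ?_⟩
  have hmon : (F.map (MvPolynomial.map χ)).Monic := hFm.map _
  have hdeg : (F.map (MvPolynomial.map χ)).natDegree = n := hFm.natDegree_map _
  have hne1 : F.map (MvPolynomial.map χ) ≠ 1 := by
    intro h
    rw [h, Polynomial.natDegree_one] at hdeg
    omega
  refine hmon.irreducible_iff_natDegree.2 ⟨hne1, ?_⟩
  intro f g hf hg hfg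
  by_contra! hcon
  apply hχ
  have hfd : f.natDegree < n := by
    have := hf.natDegree_mul hg
    rw [hfg, hdeg] at this
    omega
  have hgd : g.natDegree < n := by
    have := hf.natDegree_mul hg
    rw [hfg, hdeg] at this
    omega
  let f' := (MvPolynomial.finSuccEquiv ℂ d).symm f
  let g' := (MvPolynomial.finSuccEquiv ℂ d).symm g
  have hf' : MvPolynomial.finSuccEquiv ℂ d f' = f := AlgEquiv.apply_symm_apply _ _
  have hg' : MvPolynomial.finSuccEquiv ℂ d g' = g := AlgEquiv.apply_symm_apply _ _
  have hfg' : MvPolynomial.map χ F' = f' * g' := by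
    apply (MvPolynomial.finSuccEquiv ℂ d).injective
    rw [finSuccEquiv_map', map_mul, hf', hg', hF', hfg]
  have hf0 : f' ≠ 0 := fun h => hf.ne_zero (by rw [← hf', h, map_zero])
  have hg0 : g' ≠ 0 := fun h => hg.ne_zero (by rw [← hg', h, map_zero])
  have htd : f'.totalDegree + g'.totalDegree ≤ D := by
    rw [← MvPolynomial.totalDegree_mul_of_isDomain hf0 hg0, ← hfg']
    exact Finset.sup_mono (MvPolynomial.support_map_subset _ _)
  have hsupp : ∀ p : MvPolynomial (Fin (d + 1)) ℂ, p.totalDegree ≤ D →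
      (MvPolynomial.finSuccEquiv ℂ d p).natDegree < n → p.support ⊆ M := by
    intro p hp hpn m hm
    rw [MvPolynomial.natDegree_finSuccEquiv, MvPolynomial.degreeOf_lt_iff hF0] at hpn
    refine Finset.mem_filter.2 ⟨hfin.mem_toFinset.2 ?_, hpn m hm⟩
    exact (MvPolynomial.le_totalDegree hm).trans hp
  let φ : MvPolynomial W B →+* ℂ := MvPolynomial.eval₂Hom χ
    (Sum.elim (fun m => f'.coeff m.1) (fun m => g'.coeff m.1))
  have h1 : MvPolynomial.map φ P = MvPolynomial.map (φ.comp MvPolynomial.C) F' -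
      genPoly M (fun m => φ (MvPolynomial.X (Sum.inl m))) *
      genPoly M (fun m => φ (MvPolynomial.X (Sum.inr m))) := by
    simp only [P, map_sub, map_mul, genPoly_map, MvPolynomial.map_map]
  have hC : φ.comp MvPolynomial.C = χ := by ext; simp [φ]
  rw [hC] at h1
  simp only [φ, MvPolynomial.coe_eval₂Hom, MvPolynomial.eval₂_X, Sum.elim_inl, Sum.elim_inr] at h1
  rw [← eq_genPoly M f' (hsupp f' (by omega) (by rw [hf']; exact hfd)),
    ← eq_genPoly M g' (hsupp g' (by omega) (by rw [hg']; exact hgd)), hfg', sub_self] at h1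
  have hIk : I ≤ RingHom.ker φ := by
    rw [Ideal.span_le]
    rintro _ ⟨m, rfl⟩
    have := congrArg (MvPolynomial.coeff m) h1
    rwa [MvPolynomial.coeff_map] at this
  have := hIk hqI
  rw [RingHom.mem_ker, ← RingHom.comp_apply, hC] at this
  exact this

end

/-! ### Spreading out irreducibility of the generic fibre -/

section

universe u v w

/-- The `ℂ`-points of `T` above a `ℂ`-point `χ` of `B` form a nonempty irreducible set. -/
def FibreIrred {B : Type u} (T : Type v) [CommRing B] [CommRing T] [Algebra ℂ B] [Algebra ℂ T]
    [Algebra B T] (χ : B →ₐ[ℂ] ℂ) : Prop :=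
  (∃ ρ : T →ₐ[ℂ] ℂ, ∀ x : B, ρ (algebraMap B T x) = χ x) ∧
    ∀ g g' : T, (∀ ρ : T →ₐ[ℂ] ℂ, (∀ x : B, ρ (algebraMap B T x) = χ x) → ρ (g * g') = 0) →
      (∀ ρ : T →ₐ[ℂ] ℂ, (∀ x : B, ρ (algebraMap B T x) = χ x) → ρ g = 0) ∨
      (∀ ρ : T →ₐ[ℂ] ℂ, (∀ x : B, ρ (algebraMap B T x) = χ x) → ρ g' = 0)

/-- If every relation of `z` over `B[s]` is divisible by `F`, then no nonzero polynomial over `E[s]`, with `E = Frac B`, of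
smaller degree vanishes at `z`: clear denominators. -/
theorem hmin_of_dvd {B : Type u} {T : Type v} {E : Type u} {L : Type w} [CommRing B] [IsDomain B]
    [CommRing T] [Algebra B T] [Field E] [Algebra B E] [IsFractionRing B E] [Field L] [Algebra T L]
    [Algebra B L] [IsScalarTower B T L] [Algebra E L] [IsScalarTower B E L]
    (hTL : Function.Injective (algebraMap T L))
    {d : ℕ} (s : Fin d → T) (z : T) (F : Polynomial (MvPolynomial (Fin d) B))
    (hF : ∀ P : Polynomial (MvPolynomial (Fin d) B), P.eval₂
      (MvPolynomial.aeval s : MvPolynomial (Fin d) B →ₐ[B] T).toRingHom z = 0 → F ∣ P)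
    (G : Polynomial (MvPolynomial (Fin d) E)) (hG : G.natDegree < F.natDegree)
    (hG0 : G.eval₂ (MvPolynomial.aeval (fun i => algebraMap T L (s i)) :
      MvPolynomial (Fin d) E →ₐ[E] L).toRingHom (algebraMap T L z) = 0) : G = 0 := by
  letI := MvPolynomial.algebraMvPolynomial (R := B) (S := E) (σ := Fin d)
  set M := Submonoid.map (MvPolynomial.C (σ := Fin d)) (nonZeroDivisors B) with hM
  have hMle : M ≤ nonZeroDivisors (MvPolynomial (Fin d) B) := by
    rintro _ ⟨q, hq, rfl⟩
    rw [mem_nonZeroDivisors_iff_ne_zero]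
    simpa using nonZeroDivisors.ne_zero hq
  rw [← IsLocalization.integerNormalization_eq_zero_iff (S := MvPolynomial (Fin d) E) hMle G]
  by_contra hne
  have h1 := IsLocalization.integerNormalization_eval₂_eq_zero M _ G hG0
  have h2 : ((MvPolynomial.aeval (fun i => algebraMap T L (s i)) :
      MvPolynomial (Fin d) E →ₐ[E] L).toRingHom).comp (algebraMap (MvPolynomial (Fin d) B) _) =
      (algebraMap T L).comp (MvPolynomial.aeval s : MvPolynomial (Fin d) B →ₐ[B] T).toRingHom := by
    rw [show algebraMap (MvPolynomial (Fin d) B) (MvPolynomial (Fin d) E) =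
      MvPolynomial.map (algebraMap B E) from rfl]
    apply MvPolynomial.ringHom_ext
    · intro r
      simp [← IsScalarTower.algebraMap_apply]
    · intro i; simp
  rw [h2, ← Polynomial.hom_eval₂, map_eq_zero_iff _ hTL] at h1
  have h3 := Polynomial.natDegree_le_of_dvd (hF _ h1) hne
  have h4 : (IsLocalization.integerNormalization M G).natDegree ≤ G.natDegree :=
    Polynomial.natDegree_le_natDegree
      (Finset.sup_mono (IsLocalization.integerNormalization_support M G))
  omega

/-- The case of `spread` with a chosen fraction field `E` of `B`. -/
theorem spread_aux {B : Type u} {T : Type v} (E : Type u) {L : Type w} [CommRing B] [IsDomain B]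
    [UniqueFactorizationMonoid B] [CommRing T] [IsDomain T] [Algebra ℂ B] [Algebra ℂ T]
    [Algebra B T] [IsScalarTower ℂ B T] [Algebra.FiniteType ℂ T]
    [Field E] [Algebra B E] [IsFractionRing B E] [Field L] [Algebra T L]
    [Algebra B L] [IsScalarTower B T L] [Algebra E L] [IsScalarTower B E L]
    (hTL : Function.Injective (algebraMap T L))
    (hcl : ∀ α : L, IsAlgebraic E α → ∃ e : E, algebraMap E L e = α) :
    ∃ q : B, q ≠ 0 ∧ ∀ χ : B →ₐ[ℂ] ℂ, χ q ≠ 0 → FibreIrred T χ := by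
  have hBL : Function.Injective (algebraMap B L) := by
    rw [IsScalarTower.algebraMap_eq B E L]
    exact (algebraMap E L).injective.comp (IsFractionRing.injective B E)
  have hBT : Function.Injective (algebraMap B T) := by
    rw [IsScalarTower.algebraMap_eq B T L] at hBL
    exact Function.Injective.of_comp hBL
  have : CharZero B := charZero_of_injective_algebraMap (algebraMap ℂ B).injective
  have : CharZero E := charZero_of_injective_algebraMap (IsFractionRing.injective B E)
  have : Algebra.FiniteType B T := Algebra.FiniteType.of_restrictScalars_finiteType ℂ B T
  obtain ⟨d, s, hs, b, hb0, hb⟩ := relNoether hBT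
  set φ : MvPolynomial (Fin d) B →ₐ[B] T := MvPolynomial.aeval s with hφ
  have hφinj : Function.Injective φ := hs
  letI : Algebra (MvPolynomial (Fin d) B) T := φ.toRingHom.toAlgebra
  have : IsScalarTower B (MvPolynomial (Fin d) B) T := IsScalarTower.of_algebraMap_eq fun x =>
    (φ.commutes x).symm
  have : FaithfulSMul (MvPolynomial (Fin d) B) T := (faithfulSMul_iff_algebraMap_injective _ _).2 hφinj
  have : Algebra.FiniteType (MvPolynomial (Fin d) B) T :=
    Algebra.FiniteType.of_restrictScalars_finiteType B _ T
  obtain ⟨z, hz, h, hh0, hh⟩ := exists_primitive_conductor (S := MvPolynomial (Fin d) B) (T := T)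
    (MvPolynomial.C b) (by simpa using hb0) (fun t => by
      obtain ⟨N, hN⟩ := hb t
      refine ⟨N, ?_⟩
      have : algebraMap (MvPolynomial (Fin d) B) T (MvPolynomial.C b) = algebraMap B T b :=
        φ.commutes b
      rw [this]
      exact hN)
  set F := minpoly (MvPolynomial (Fin d) B) z with hFdef
  have hFm : F.Monic := minpoly.monic hz
  have hF0 : F.eval₂ φ.toRingHom z = 0 := minpoly.aeval _ z
  have hF : ∀ P : Polynomial (MvPolynomial (Fin d) B), P.eval₂ φ.toRingHom z = 0 → F ∣ P :=
    fun P hP => minpoly.isIntegrallyClosed_dvd hz hP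
  have hFpos : 0 < F.natDegree := minpoly.natDegree_pos hz
  have hFE : (F.map (MvPolynomial.map (algebraMap B E))).natDegree = F.natDegree := hFm.natDegree_map _
  obtain ⟨q, hq0, hq⟩ := irreducible_specialisation (E := E) F hFm hFpos (fun E' _ _ _ G H hG hH hGH => by
    refine no_factorization hcl (fun i => algebraMap T L (s i)) (algebraMap T L z)
      (F.map (MvPolynomial.map (algebraMap B E))) (hFm.map _) ?_ ?_ G H (hFE ▸ hG) (hFE ▸ hH) hGH
    · have h2 : ((MvPolynomial.aeval (fun i => algebraMap T L (s i)) :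
          MvPolynomial (Fin d) E →ₐ[E] L).toRingHom).comp (MvPolynomial.map (algebraMap B E)) =
          (algebraMap T L).comp φ.toRingHom := by
        apply MvPolynomial.ringHom_ext
        · intro r
          simp [hφ, ← IsScalarTower.algebraMap_apply]
        · intro i; simp [hφ]
      rw [Polynomial.eval₂_map, h2, ← Polynomial.hom_eval₂, hF0, map_zero]
    · intro G hG hG0
      exact hmin_of_dvd hTL s z F hF G (hFE ▸ hG) hG0)
  obtain ⟨m, hm⟩ := MvPolynomial.ne_zero_iff.1 hh0
  refine ⟨b * h.coeff m * q, mul_ne_zero (mul_ne_zero hb0 hm) hq0, fun χ hχ => ?_⟩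
  rw [map_mul, map_mul] at hχ
  refine fibre_irreducible hs hb z hz F hF0 hF h ?_ χ (left_ne_zero_of_mul (left_ne_zero_of_mul hχ)) ?_
    (hq χ.toRingHom (right_ne_zero_of_mul hχ))
  · intro t ht
    have := hh t ht
    rw [Algebra.adjoin_singleton_eq_range_aeval] at this
    obtain ⟨G, hG⟩ := this
    exact ⟨G, hG.symm⟩
  · intro h0
    apply right_ne_zero_of_mul (left_ne_zero_of_mul hχ)
    have := congrArg (MvPolynomial.coeff m) h0
    rwa [MvPolynomial.coeff_map] at this

/-- If `B` is algebraically closed in an extension field of `T`, up to fractions, then almost all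
fibres of `B → T` are irreducible. -/
theorem spread {B : Type u} {T : Type v} {L : Type w} [CommRing B] [IsDomain B]
    [UniqueFactorizationMonoid B] [CommRing T] [IsDomain T] [Algebra ℂ B] [Algebra ℂ T]
    [Algebra B T] [IsScalarTower ℂ B T] [Algebra.FiniteType ℂ T]
    [Field L] [Algebra T L] [Algebra B L] [IsScalarTower B T L]
    (hTL : Function.Injective (algebraMap T L)) (hBL : Function.Injective (algebraMap B L))
    (hcl : ∀ α : L, IsAlgebraic B α → ∃ p r : B, r ≠ 0 ∧ algebraMap B L r * α = algebraMap B L p) :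
    ∃ q : B, q ≠ 0 ∧ ∀ χ : B →ₐ[ℂ] ℂ, χ q ≠ 0 → FibreIrred T χ := by
  have : FaithfulSMul B L := (faithfulSMul_iff_algebraMap_injective _ _).2 hBL
  letI := FractionRing.liftAlgebra B L
  have := FractionRing.isScalarTower_liftAlgebra B L
  refine spread_aux (FractionRing B) hTL fun α hα => ?_
  obtain ⟨p, r, hr, h⟩ := hcl α ((IsFractionRing.isAlgebraic_iff B (FractionRing B) L).2 hα)
  refine ⟨algebraMap B _ p / algebraMap B _ r, ?_⟩
  have hr' : algebraMap B L r ≠ 0 := (map_ne_zero_iff _ hBL).2 hr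
  rw [map_div₀, ← IsScalarTower.algebraMap_apply, ← IsScalarTower.algebraMap_apply, ← h]
  field_simp

end

/-! ### Algebraically closed subfields and pencils -/

open Set IntermediateField.algebraAdjoinAdjoin in
/-- If `k` is algebraically closed in `F`, then `k(w)` is algebraically closed in `F(w)` for independent
variables `w`. -/
theorem mem_adjoin_of_isAlgebraic {k F L : Type*} [Field k] [Field F] [Field L] [Algebra k F] [Algebra F L] [Algebra k L]
    [IsScalarTower k F L] (hcl : ∀ a : F, IsIntegral k a → ∃ e : k, algebraMap k F e = a)
    {τ : Type*} {w : τ → L} (hw : AlgebraicIndependent F w) {α : L}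
    (hα : α ∈ IntermediateField.adjoin F (range w))
    (halg : IsAlgebraic (IntermediateField.adjoin k (range w)) α) :
    α ∈ IntermediateField.adjoin k (range w) := by
  have halg' : IsAlgebraic (Algebra.adjoin k (range w)) α :=
    (IsFractionRing.isAlgebraic_iff _ (IntermediateField.adjoin k (range w)) L).2 halg
  obtain ⟨⟨r, hrA⟩, hr0, hgint⟩ := halg'.exists_integral_multiple
  have hr0' : r ≠ 0 := fun h => hr0 (Subtype.ext h)
  rw [Algebra.adjoin_range_eq_range_aeval] at hrA
  obtain ⟨r0, hr0r⟩ := hrA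
  letI := MvPolynomial.algebraMvPolynomial (R := k) (S := F) (σ := τ)
  letI a1 : Algebra (MvPolynomial τ F) L := (MvPolynomial.aeval w).toRingHom.toAlgebra
  letI a2 : Algebra (MvPolynomial τ k) L := (MvPolynomial.aeval w : MvPolynomial τ k →ₐ[k] L).toRingHom.toAlgebra
  have : IsScalarTower (MvPolynomial τ k) (MvPolynomial τ F) L := IsScalarTower.of_algebraMap_eq fun p => by
    change MvPolynomial.aeval w p = MvPolynomial.aeval w (MvPolynomial.map (algebraMap k F) p)
    rw [MvPolynomial.aeval_map_algebraMap]
  have hinj : Function.Injective (algebraMap (MvPolynomial τ F) L) := hw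
  have hrint : IsIntegral (MvPolynomial τ k) (r * α) := by
    have h1 : (algebraMap (Algebra.adjoin k (range w)) L).IsIntegralElem (r * α) := hgint
    obtain ⟨P, hP, hP0⟩ := h1
    let e : MvPolynomial τ k →+* Algebra.adjoin k (range w) :=
      (MvPolynomial.aeval fun i => (⟨w i, Algebra.subset_adjoin ⟨i, rfl⟩⟩ : Algebra.adjoin k (range w))).toRingHom
    have he : (algebraMap (Algebra.adjoin k (range w)) L).comp e = algebraMap (MvPolynomial τ k) L := by
      apply MvPolynomial.ringHom_ext
      · intro x
        simp [e, a2, RingHom.algebraMap_toAlgebra]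
      · intro i; simp [e, a2, RingHom.algebraMap_toAlgebra]
    have hes : Function.Surjective e := by
      rintro ⟨x, hx⟩
      have hx' := hx
      rw [Algebra.adjoin_range_eq_range_aeval] at hx'
      obtain ⟨p, hp⟩ := hx'
      refine ⟨p, Subtype.ext ?_⟩
      exact (DFunLike.congr_fun he p).trans hp
    obtain ⟨Q, hQ, -, hQm⟩ := Polynomial.lifts_and_natDegree_eq_and_monic
      (Polynomial.map_surjective e hes P : P ∈ Polynomial.lifts e) hP
    refine ⟨Q, hQm, ?_⟩
    rw [← he, ← Polynomial.eval₂_map, hQ, hP0]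
  have hrF : r * α ∈ IntermediateField.adjoin F (range w) := by
    refine mul_mem ?_ hα
    rw [← hr0r]
    have : MvPolynomial.aeval w (MvPolynomial.map (algebraMap k F) r0) ∈ IntermediateField.adjoin F (range w) := by
      apply IntermediateField.algebra_adjoin_le_adjoin
      rw [Algebra.adjoin_range_eq_range_aeval]
      exact ⟨_, rfl⟩
    rwa [MvPolynomial.aeval_map_algebraMap] at this
  have hg : ∃ g : MvPolynomial τ F, algebraMap _ L g = r * α := by
    let ψ : FractionRing (MvPolynomial τ F) →ₐ[MvPolynomial τ F] L := IsFractionRing.liftAlgHom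
      (g := Algebra.ofId (MvPolynomial τ F) L) hinj
    let x := hw.aevalEquivField.symm ⟨r * α, hrF⟩
    have hx : ψ x = r * α := by
      have := hw.aevalEquivField_apply_coe x
      simp only [x, AlgEquiv.apply_symm_apply] at this
      exact this.symm
    have hxi : IsIntegral (MvPolynomial τ F) x := by
      rw [← isIntegral_algHom_iff ψ ψ.toRingHom.injective, hx]
      exact hrint.tower_top
    obtain ⟨g, hg⟩ := IsIntegrallyClosed.isIntegral_iff.1 hxi
    exact ⟨g, by rw [← hx, ← hg, AlgHom.commutes]⟩
  obtain ⟨g, hg⟩ := hg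
  have hgi : IsIntegral (MvPolynomial τ k) g := by
    rw [← hg] at hrint
    exact (isIntegral_algebraMap_iff hinj).1 hrint
  rw [MvPolynomial.isIntegral_iff_isIntegral_coeff] at hgi
  choose c hc using fun n => hcl _ (hgi n)
  have hmem : r * α ∈ IntermediateField.adjoin k (range w) := by
    rw [← hg]
    change MvPolynomial.aeval w g ∈ _
    rw [MvPolynomial.aeval_def, MvPolynomial.eval₂_eq]
    refine sum_mem fun n _ => mul_mem ?_ (prod_mem fun i _ => pow_mem
      (IntermediateField.subset_adjoin _ _ (Set.mem_range_self i)) _)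
    rw [← hc, ← IsScalarTower.algebraMap_apply]
    exact IntermediateField.algebraMap_mem _ _
  have hrmem : r ∈ IntermediateField.adjoin k (range w) := by
    apply IntermediateField.algebra_adjoin_le_adjoin
    rw [Algebra.adjoin_range_eq_range_aeval]
    exact ⟨r0, hr0r⟩
  have : α = (r * α) / r := by field_simp
  rw [this]
  exact div_mem hmem hrmem

/-- An element of `k(w)` algebraic over `k` is constant. -/
theorem mem_range_of_isAlgebraic_adjoin {k L : Type*} [Field k] [Field L] [Algebra k L]
    {τ : Type*} {w : τ → L} (hw : AlgebraicIndependent k w) {α : L}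
    (hα : α ∈ IntermediateField.adjoin k (Set.range w)) (halg : IsAlgebraic k α) :
    ∃ e : k, algebraMap k L e = α := by
  rw [IntermediateField.mem_adjoin_range_iff] at hα
  obtain ⟨p, q, hpq⟩ := hα
  by_cases hq : MvPolynomial.aeval w q = 0
  · refine ⟨0, ?_⟩
    rw [hpq, hq, div_zero, map_zero]
  have hq0 : q ≠ 0 := by rintro rfl; simp at hq
  obtain ⟨m, hm⟩ := MvPolynomial.ne_zero_iff.1 hq0
  have hw' : AlgebraicIndependent (algebraicClosure k L) w := hw.algebraicClosure
  let a : algebraicClosure k L := ⟨α, halg.isIntegral⟩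
  let i : k →+* algebraicClosure k L := algebraMap _ _
  have h0 : MvPolynomial.aeval w (MvPolynomial.C a * MvPolynomial.map i q - MvPolynomial.map i p) = 0 := by
    rw [map_sub, map_mul, MvPolynomial.aeval_map_algebraMap, MvPolynomial.aeval_map_algebraMap,
      MvPolynomial.aeval_C]
    change α * _ - _ = 0
    rw [hpq]; field_simp; ring
  have h1 := (map_eq_zero_iff _ hw').1 h0
  have h2 := congrArg (MvPolynomial.coeff m) h1
  rw [MvPolynomial.coeff_sub, MvPolynomial.coeff_C_mul, MvPolynomial.coeff_map, MvPolynomial.coeff_map,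
    MvPolynomial.coeff_zero, sub_eq_zero] at h2
  have h3 : α * algebraMap k L (q.coeff m) = algebraMap k L (p.coeff m) := congrArg Subtype.val h2
  refine ⟨p.coeff m / q.coeff m, ?_⟩
  have hm' : algebraMap k L (q.coeff m) ≠ 0 := by simpa using hm
  rw [map_div₀, ← h3]; field_simp

open MvPolynomial in
/-- An invertible linear change in two of the variables preserves algebraic independence. -/
theorem algInd_change {k L τ : Type*} [Field k] [CharZero k] [Field L] [Algebra k L] {w : τ → L} {x y : L}
    (h : AlgebraicIndependent k (Sum.elim w ![x, y])) {m n : ℕ} (hmn : n ≠ m) :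
    AlgebraicIndependent k (Sum.elim w ![x + n * y, x + m * y]) := by

  let φ : MvPolynomial (τ ⊕ Fin 2) k →ₐ[k] MvPolynomial (τ ⊕ Fin 2) k :=
    aeval (Sum.elim (fun t => X (Sum.inl t)) ![X (Sum.inr 0) + (n : MvPolynomial (τ ⊕ Fin 2) k) * X (Sum.inr 1),
      X (Sum.inr 0) + (m : MvPolynomial (τ ⊕ Fin 2) k) * X (Sum.inr 1)])
  have hd : ((n : k) - m) ≠ 0 := by
    rw [sub_ne_zero]; exact_mod_cast hmn
  let ψ : MvPolynomial (τ ⊕ Fin 2) k →ₐ[k] MvPolynomial (τ ⊕ Fin 2) k :=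
    aeval (Sum.elim (fun t => X (Sum.inl t))
      ![C ((n : k) - m)⁻¹ * ((n : MvPolynomial (τ ⊕ Fin 2) k) * X (Sum.inr 1) - (m : MvPolynomial (τ ⊕ Fin 2) k) * X (Sum.inr 0)),
        C ((n : k) - m)⁻¹ * (X (Sum.inr 0) - X (Sum.inr 1))])
  have hC : (C ((n : k) - m)⁻¹ : MvPolynomial (τ ⊕ Fin 2) k) *
      ((n : MvPolynomial (τ ⊕ Fin 2) k) - (m : MvPolynomial (τ ⊕ Fin 2) k)) = 1 := by
    have : ((n : MvPolynomial (τ ⊕ Fin 2) k) - (m : MvPolynomial (τ ⊕ Fin 2) k)) = C ((n : k) - m) := by simp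
    rw [this, ← C_mul, inv_mul_cancel₀ hd, C_1]
  have hψφ : ψ.comp φ = AlgHom.id k _ := by
    apply MvPolynomial.algHom_ext
    rintro (t | t)
    · simp [φ, ψ]
    · fin_cases t
      · simp [φ, ψ]
        linear_combination (X (Sum.inr 0) : MvPolynomial (τ ⊕ Fin 2) k) * hC
      · simp [φ, ψ]
        linear_combination (X (Sum.inr 1) : MvPolynomial (τ ⊕ Fin 2) k) * hC
  have hφ : Function.Injective φ := by
    intro a b hab
    have := congrArg ψ hab
    simpa using (DFunLike.congr_fun hψφ a).symm.trans (this.trans (DFunLike.congr_fun hψφ b))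
  have hc : (aeval (Sum.elim w ![x + n * y, x + m * y]) : MvPolynomial (τ ⊕ Fin 2) k →ₐ[k] L) =
      (aeval (Sum.elim w ![x, y])).comp φ := by
    apply MvPolynomial.algHom_ext
    rintro (t | t)
    · simp [φ]
    · fin_cases t <;> simp [φ]
  intro a b hab
  rw [hc] at hab
  exact hφ (h hab)

open IntermediateField in
open IntermediateField.algebraAdjoinAdjoin in
/-- If `k` is algebraically closed in a finitely generated extension `L`, and `x, y` are independent over `k`, then some
pencil member `x + n y` generates a subfield `k(x + n y)` that is algebraically closed in `L`. An element algebraic over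
`k(x + n y)` lies, by finiteness of the number of intermediate fields, in the field generated over `k(w, x, y)` by the
algebraic closure of another `k(x + m y)`; as `x + n y` is independent over that closure, it lies in `k(x + n y)`. -/
theorem exists_pencil_algClosed {k L : Type*} [Field k] [CharZero k] [Field L] [Algebra k L]
    [Algebra.EssFiniteType k L] (hcl : ∀ a : L, IsAlgebraic k a → ∃ e : k, algebraMap k L e = a)
    {x y : L} (hxy : AlgebraicIndependent k ![x, y]) :
    ∃ n : ℕ, ∀ α : L, IsAlgebraic k⟮x + n * y⟯ α → α ∈ k⟮x + n * y⟯ := by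
  obtain ⟨B, hB, hBt⟩ := exists_isTranscendenceBasis_superset hxy.to_subtype_range
  let τ := ↥(B \ Set.range ![x, y])
  let w : τ → L := Subtype.val
  have hw : AlgebraicIndependent k (Sum.elim w ![x, y]) := by
    let f : τ ⊕ Fin 2 → B := Sum.elim (fun t => ⟨t.1, t.2.1⟩) (fun j => ⟨![x, y] j, hB ⟨j, rfl⟩⟩)
    have hf : Function.Injective f := by
      rintro (s | s) (t | t) h
      · simp only [f, Sum.elim_inl, Subtype.mk.injEq] at h
        rw [Subtype.ext h]
      · simp only [f, Sum.elim_inl, Sum.elim_inr, Subtype.mk.injEq] at h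
        exact absurd ⟨t, h.symm⟩ s.2.2
      · simp only [f, Sum.elim_inl, Sum.elim_inr, Subtype.mk.injEq] at h
        exact absurd ⟨s, h⟩ t.2.2
      · simp only [f, Sum.elim_inr, Subtype.mk.injEq] at h
        rw [hxy.injective h]
    have := hBt.1.comp f hf
    convert this using 1
    ext (s | s) <;> rfl
  let M0 := adjoin k B
  have : Algebra.IsAlgebraic M0 L := by
    have := hBt.isAlgebraic_field
    rwa [Subtype.range_coe] at this
  have : Algebra.EssFiniteType M0 L := Algebra.EssFiniteType.of_comp k M0 L
  have : Module.Finite M0 L := Algebra.finite_of_essFiniteType_of_isAlgebraic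
  have : Finite (IntermediateField M0 L) :=
    Field.finite_intermediateField_of_exists_primitive_element M0 L (Field.exists_primitive_element M0 L)
  let N : ℕ → IntermediateField M0 L := fun n => adjoin M0 {α | IsAlgebraic k⟮x + n * y⟯ α}
  -- Only finitely many fields lie between `M0` and `L`, so two pencil members have algebraic closures that generate
  -- the same field over `M0`.
  obtain ⟨n, m, hnm, hN⟩ := Finite.exists_ne_map_eq_of_infinite N
  refine ⟨n, fun α hα => ?_⟩
  have hαN : α ∈ N m := hN ▸ IntermediateField.subset_adjoin M0 _ hα
  set xn := x + n * y with hxn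
  set xm := x + m * y with hxm
  have h2 := algInd_change hw hnm
  let w' : τ ⊕ Unit → L := Sum.elim w (fun _ => xn)
  have h3 : AlgebraicIndependent k (Sum.elim w' (fun _ : Unit => xm)) := by
    let f : (τ ⊕ Unit) ⊕ Unit → τ ⊕ Fin 2 :=
      Sum.elim (Sum.elim Sum.inl (fun _ => Sum.inr 0)) (fun _ => Sum.inr 1)
    have hf : Function.Injective f := by
      rintro ((s | s) | s) ((t | t) | t) h <;> simp_all [f]
    convert h2.comp f hf using 1
    ext ((s | s) | s) <;> rfl
  have hn1 : AlgebraicIndependent k⟮xn⟯ w := by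
    have h4 : AlgebraicIndependent k (Sum.elim w (fun _ : Unit => xn)) :=
      (h3.comp Sum.inl Sum.inl_injective)
    have h5 := (AlgebraicIndependent.sumElim_iff.1 h4).2
    rw [Set.range_const] at h5
    have : Algebra.IsAlgebraic (Algebra.adjoin k {xn}) k⟮xn⟯ :=
      IsLocalization.isAlgebraic _ (nonZeroDivisors (Algebra.adjoin k {xn}))
    exact h5.extendScalars k⟮xn⟯
  have hm1 : AlgebraicIndependent k⟮xm⟯ w' := by
    have h5 := (AlgebraicIndependent.sumElim_iff.1 h3).2
    rw [Set.range_const] at h5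
    have : Algebra.IsAlgebraic (Algebra.adjoin k {xm}) k⟮xm⟯ :=
      IsLocalization.isAlgebraic _ (nonZeroDivisors (Algebra.adjoin k {xm}))
    exact h5.extendScalars k⟮xm⟯
  let F := algebraicClosure k⟮xm⟯ L
  have hF : AlgebraicIndependent F w' := hm1.algebraicClosure
  have : IsScalarTower k F L := IsScalarTower.of_algebraMap_eq fun _ => rfl
  let P := adjoin F (Set.range w')
  have hxnP : xn ∈ P := IntermediateField.subset_adjoin F _ ⟨Sum.inr (), rfl⟩
  have hxmP : xm ∈ P := by
    exact IntermediateField.algebraMap_mem P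
      (⟨xm, (isAlgebraic_algebraMap (⟨xm, mem_adjoin_simple_self k xm⟩ : k⟮xm⟯)).isIntegral⟩ : F)
  have hd : ((n : L) - m) ≠ 0 := by
    have : CharZero L := charZero_of_injective_algebraMap (algebraMap k L).injective
    rw [sub_ne_zero]; exact_mod_cast hnm
  have hyP : y ∈ P := by
    have : y = (xn - xm) / ((n : L) - m) := by rw [hxn, hxm]; field_simp; ring
    rw [this]
    exact div_mem (sub_mem hxnP hxmP) (sub_mem (IntermediateField.natCast_mem P n) (IntermediateField.natCast_mem P m))
  have hxP : x ∈ P := by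
    have : x = xn - n * y := by rw [hxn]; ring
    rw [this]
    exact sub_mem hxnP (mul_mem (IntermediateField.natCast_mem P n) hyP)
  have hM0 : M0 ≤ P.restrictScalars k := by
    rw [IntermediateField.adjoin_le_iff]
    intro b hb
    by_cases h : b ∈ Set.range ![x, y]
    · obtain ⟨j, rfl⟩ := h
      fin_cases j
      · exact hxP
      · exact hyP
    · exact IntermediateField.subset_adjoin F _ ⟨Sum.inl ⟨b, hb, h⟩, rfl⟩
  have hαP : α ∈ P := by
    refine IntermediateField.adjoin_induction M0 (p := fun z _ => z ∈ P) ?_ ?_ ?_ ?_ ?_ hαN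
    · intro z hz
      exact IntermediateField.algebraMap_mem P (⟨z, hz.isIntegral⟩ : F)
    · intro z
      exact hM0 z.2
    · intro a b _ _ ha hb; exact add_mem ha hb
    · intro a _ ha; exact inv_mem ha
    · intro a b _ _ ha hb; exact mul_mem ha hb
  have hα2 : α ∈ adjoin k (Set.range w') := by
    refine mem_adjoin_of_isAlgebraic (k := k) (F := F) (L := L) ?_ hF hαP ?_
    · intro a ha
      obtain ⟨e, he⟩ := hcl a.1 (ha.isAlgebraic.algHom (IsScalarTower.toAlgHom k F L))
      exact ⟨e, Subtype.ext he⟩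
    · have hle : k⟮xn⟯ ≤ adjoin k (Set.range w') := by
        rw [adjoin_simple_le_iff]
        exact IntermediateField.subset_adjoin k _ ⟨Sum.inr (), rfl⟩
      exact IsAlgebraic.tower_top_of_subalgebra_le (A := k⟮xn⟯.toSubalgebra)
        (B := (adjoin k (Set.range w')).toSubalgebra) hle hα
  have hα3 : α ∈ adjoin k⟮xn⟯ (Set.range w) := by
    have : adjoin k (Set.range w') ≤ (adjoin k⟮xn⟯ (Set.range w)).restrictScalars k := by
      rw [IntermediateField.adjoin_le_iff]
      rintro _ ⟨s | s, rfl⟩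
      · exact IntermediateField.subset_adjoin k⟮xn⟯ _ ⟨s, rfl⟩
      · exact IntermediateField.algebraMap_mem (adjoin k⟮xn⟯ (Set.range w)) ⟨xn, mem_adjoin_simple_self k xn⟩
    exact this hα2
  obtain ⟨e, he⟩ := mem_range_of_isAlgebraic_adjoin hn1 hα3 hα
  rw [← he]
  exact e.2

/-! ### Generic linear forms through a point -/

section Incidence
open MvPolynomial

theorem isHomogeneous_aeval_smul {S k K : Type*} [CommRing k] [CommRing K] [Algebra k K]
    {q : MvPolynomial S k} {d : ℕ} (hq : q.IsHomogeneous d) (t : K) (v : S → K) :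
    aeval (fun i => t * v i) q = t ^ d * aeval v q := by
  rw [aeval_def, aeval_def, eval₂_eq, eval₂_eq, Finset.mul_sum]
  refine Finset.sum_congr rfl fun m hm => ?_
  have h1 : ∑ i ∈ m.support, m i = d := by
    have := hq (mem_support_iff.1 hm)
    rw [Finsupp.weight_apply, Finsupp.sum] at this
    simpa using this
  simp only [mul_pow]
  rw [Finset.prod_mul_distrib, Finset.prod_pow_eq_pow_sum, h1]
  ring

/-- If `y` is independent over `k`, the points `(τ, r - τ y)` with `τ ∈ k ^ J` are Zariski dense
(over `k`) in affine space. -/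
theorem dense_affine_family {J k K : Type*} [Finite J] [Field k] [Infinite k] [Field K] [Algebra k K]
    {y : J → K} (hy : AlgebraicIndependent k y) (r : J → K) (q : MvPolynomial (J ⊕ J) k)
    (hq : ∀ τ : J → k, aeval (Sum.elim (fun j => algebraMap k K (τ j))
      (fun j => r j - algebraMap k K (τ j) * y j)) q = 0) : q = 0 := by
  classical
  by_contra hq0
  set d := q.totalDegree with hd
  have hcomp : homogeneousComponent d q ≠ 0 := by
    obtain ⟨m, hm, hmd⟩ := Finset.exists_mem_eq_sup q.support (support_nonempty.2 hq0)
      (fun s => s.sum fun _ e => e)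
    intro h0
    have h1 := congrArg (coeff m) h0
    rw [coeff_homogeneousComponent, coeff_zero, if_pos] at h1
    · exact mem_support_iff.1 hm h1
    · rw [hd, totalDegree, hmd]; rfl
  -- the leading form vanishes along the direction vectors `(τ, -τ y)`
  have key : ∀ τ : J → k, aeval (Sum.elim (fun j => algebraMap k K (τ j))
      (fun j => - (algebraMap k K (τ j) * y j))) (homogeneousComponent d q) = 0 := by
    intro τ
    let v : J ⊕ J → Polynomial K := Sum.elim (fun j => Polynomial.C (algebraMap k K (τ j)))
      (fun j => Polynomial.X * Polynomial.C (r j) - Polynomial.C (algebraMap k K (τ j) * y j))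
    let P : Polynomial K := ∑ i ∈ Finset.range (d + 1),
      Polynomial.X ^ (d - i) * aeval v (homogeneousComponent i q)
    have hP : ∀ s : k, s ≠ 0 → P.eval (algebraMap k K s) = 0 := by
      intro s hs
      have hs' : algebraMap k K s ≠ 0 := by simpa using hs
      have h1 := hq (fun j => s⁻¹ * τ j)
      rw [← sum_homogeneousComponent q, map_sum] at h1
      have h2 : P.eval (algebraMap k K s) = (algebraMap k K s) ^ d * 0 := by
        rw [← h1, Finset.mul_sum, Polynomial.eval_finsetSum]
        refine Finset.sum_congr rfl fun i hi => ?_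
        have hid : i ≤ d := Nat.lt_succ_iff.1 (Finset.mem_range.1 hi)
        have h3 : Polynomial.eval (algebraMap k K s) (aeval v (homogeneousComponent i q)) =
            aeval (fun j => algebraMap k K s * (Sum.elim (fun j => algebraMap k K (s⁻¹ * τ j))
              (fun j => r j - algebraMap k K (s⁻¹ * τ j) * y j)) j) (homogeneousComponent i q) := by
          have : Polynomial.eval (algebraMap k K s) (aeval v (homogeneousComponent i q)) =
            ((Polynomial.aeval (algebraMap k K s)).restrictScalars k : Polynomial K →ₐ[k] K)
              (aeval v (homogeneousComponent i q)) := by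
              simp [Polynomial.coe_aeval_eq_eval]
          rw [this, ← AlgHom.comp_apply, comp_aeval]
          congr 2
          ext j
          rcases j with j | j
          · simp [v]; field_simp
          · simp [v]; field_simp
        rw [Polynomial.eval_mul, Polynomial.eval_pow, Polynomial.eval_X, h3,
          isHomogeneous_aeval_smul (homogeneousComponent_isHomogeneous i q), ← mul_assoc, ← pow_add,
          Nat.sub_add_cancel hid]
      rw [h2, mul_zero]
    have hP0 : P = 0 := by
      apply Polynomial.eq_zero_of_infinite_isRoot
      have hinf : Set.Infinite {s : k | s ≠ 0} := (Set.finite_singleton (0 : k)).infinite_compl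
      refine (hinf.image (f := algebraMap k K) (algebraMap k K).injective.injOn).mono ?_
      rintro _ ⟨s, hs, rfl⟩
      exact hP s hs
    have h4 : P.eval 0 = aeval (Sum.elim (fun j => algebraMap k K (τ j))
      (fun j => - (algebraMap k K (τ j) * y j))) (homogeneousComponent d q) := by
      simp only [P]
      rw [Polynomial.eval_finsetSum, Finset.sum_eq_single d]
      · rw [Nat.sub_self, pow_zero, one_mul]
        have : Polynomial.eval 0 (aeval v (homogeneousComponent d q)) =
            ((Polynomial.aeval (0 : K)).restrictScalars k : Polynomial K →ₐ[k] K)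
              (aeval v (homogeneousComponent d q)) := by
              simp [Polynomial.coe_aeval_eq_eval]
        rw [this, ← AlgHom.comp_apply, comp_aeval]
        congr 2
        ext j
        rcases j with j | j <;> simp [v]
      · intro i hi hid
        have : d - i ≠ 0 := by
          have := Finset.mem_range.1 hi
          omega
        rw [Polynomial.eval_mul, Polynomial.eval_pow, Polynomial.eval_X, zero_pow this, zero_mul]
      · intro h; exact absurd (Finset.mem_range.2 (Nat.lt_succ_self d)) h
    rw [← h4, hP0, Polynomial.eval_zero]
  apply hcomp
  have hfin : Finite (J ⊕ J) := inferInstance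
  have hinf : Set.Infinite {s : k | s ≠ 0} := (Set.finite_singleton (0 : k)).infinite_compl
  refine funext_set (fun _ => {s : k | s ≠ 0}) (fun _ => hinf) fun m hm => ?_
  rw [map_zero]
  let p : MvPolynomial J k := aeval (Sum.elim (fun j => C (m (Sum.inl j)))
    (fun j => - (C (m (Sum.inl j)) * X j))) (homogeneousComponent d q)
  have hp : p = 0 := by
    apply (map_eq_zero_iff _ hy).1
    rw [← AlgHom.comp_apply, comp_aeval, ← key (fun j => m (Sum.inl j))]
    congr 2
    ext j
    rcases j with j | j <;> simp
  have h5 : eval m (homogeneousComponent d q) =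
      aeval (fun j => - (m (Sum.inr j) / m (Sum.inl j))) p := by
    rw [← AlgHom.comp_apply, comp_aeval, ← coe_aeval_eq_eval]
    change aeval m _ = _
    congr 2
    ext j
    have hm' : ∀ j, m j ≠ 0 := fun j => hm j (Set.mem_univ j)
    rcases j with j | j
    · simp
    · have := hm' (Sum.inl j)
      simp; field_simp
  rw [h5, hp, map_zero]

variable {J : Type*} {Cn : J → Type*} [∀ s, Fintype (Cn s)] [∀ s, DecidableEq (Cn s)]

/-- Generic linear forms through a point: in the system of forms `∑ c, u (s, c) * y s c`, indexed by `s`,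
all coefficients `u (s, c)` with `c ≠ b s` are variables and `u (s, b s)` is determined by the condition
that the forms vanish at `y`, normalised by `y s (b s) = 1`. -/
noncomputable def incForm {R : Type*} [CommRing R] (b : ∀ s, Cn s) (y : ∀ s, Cn s → R) (p : Σ s, Cn s) :
    MvPolynomial {p : Σ s, Cn s // p.2 ≠ b p.1} R :=
  if h : p.2 = b p.1 then
    - ∑ c : {c : Cn p.1 // c ≠ b p.1}, X ⟨⟨p.1, c.1⟩, c.2⟩ * C (y p.1 c.1)
  else X ⟨p, h⟩

theorem incForm_sum {R : Type*} [CommRing R] {b : ∀ s, Cn s} {y : ∀ s, Cn s → R} {s : J}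
    (hy : y s (b s) = 1) : ∑ c, incForm b y ⟨s, c⟩ * C (y s c) = 0 := by
  rw [Fintype.sum_eq_add_sum_subtype_ne _ (b s)]
  have : ∀ c : {c : Cn s // c ≠ b s}, incForm b y ⟨s, c.1⟩ = X ⟨⟨s, c.1⟩, c.2⟩ := fun c => by
    rw [incForm, dif_neg c.2]
  simp only [this]
  rw [incForm, dif_pos rfl, hy, C_1, mul_one, neg_add_cancel]

/-- Forms that vanish at the image of `y` under `φ` are specialisations of the generic forms through `y`. -/
theorem incForm_eval {R S : Type*} [CommRing R] [CommRing S] {b : ∀ s, Cn s} {y : ∀ s, Cn s → R}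
    (hy : ∀ s, y s (b s) = 1) (φ : R →+* S) (M : (Σ s, Cn s) → S)
    (hM : ∀ s, ∑ c, M ⟨s, c⟩ * φ (y s c) = 0) (p : Σ s, Cn s) :
    eval₂Hom φ (fun w : {p : Σ s, Cn s // p.2 ≠ b p.1} => M w.1) (incForm b y p) = M p := by
  obtain ⟨s, c⟩ := p
  by_cases h : c = b s
  · subst h
    have h1 := hM s
    rw [Fintype.sum_eq_add_sum_subtype_ne _ (b s), hy, map_one, mul_one] at h1
    rw [incForm, dif_pos rfl, map_neg, map_sum]
    simp only [map_mul, coe_eval₂Hom, eval₂_X, eval₂_C]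
    exact (eq_neg_of_add_eq_zero_left h1).symm
  · rw [incForm, dif_neg h]
    simp

/-- The coefficients of generic forms through `y` are independent as soon as one coordinate
for each form can be chosen so that these coordinates are independent. -/
theorem algInd_incForm [Finite J] {k K : Type*} [Field k] [Infinite k] [Field K] [Algebra k K]
    {b : ∀ s, Cn s} {y : ∀ s, Cn s → K} (hy : ∀ s, y s (b s) = 1) (cs : ∀ s, Cn s)
    (hcs : AlgebraicIndependent k (fun s => y s (cs s))) : AlgebraicIndependent k (incForm b y) := by
  classical
  rw [AlgebraicIndependent, injective_iff_map_eq_zero]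
  intro q hq
  have hcb : ∀ s, cs s ≠ b s := by
    intro s h
    have := hcs.transcendental s
    simp only [h, hy] at this
    exact this isAlgebraic_one
  have : Finite (Σ s, Cn s) := inferInstance
  refine MvPolynomial.funext fun m => ?_
  rw [map_zero]
  let f : (Σ s, Cn s) → MvPolynomial (J ⊕ J) k := fun p =>
    if p.2 = b p.1 then X (Sum.inr p.1) else if p.2 = cs p.1 then X (Sum.inl p.1) else C (m p)
  have h0 : aeval f q = 0 := by
    apply dense_affine_family hcs (fun s => - ∑ c : {c : Cn s // c ≠ b s},
      if c.1 = cs s then 0 else algebraMap k K (m ⟨s, c.1⟩) * y s c.1)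
    intro τ
    let g : {p : Σ s, Cn s // p.2 ≠ b p.1} → K := fun p =>
      if p.1.2 = cs p.1.1 then algebraMap k K (τ p.1.1) else algebraMap k K (m p.1)
    have h1 : ((aeval g).restrictScalars k : MvPolynomial _ K →ₐ[k] K) (aeval (incForm b y) q) = 0 := by
      rw [hq, map_zero]
    rw [← AlgHom.comp_apply, comp_aeval] at h1 ⊢
    refine Eq.trans ?_ h1
    congr 2
    ext ⟨s, c⟩
    by_cases h : c = b s
    · subst h
      simp only [f, incForm, if_true, dif_pos, aeval_X, Sum.elim_inr, AlgHom.restrictScalars_apply,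
        map_neg, map_sum, map_mul, aeval_C, Algebra.algebraMap_self, RingHom.id_apply]
      rw [Fintype.sum_eq_add_sum_subtype_ne _ (⟨cs s, hcb s⟩ : {c : Cn s // c ≠ b s}),
        Fintype.sum_eq_add_sum_subtype_ne (fun c : {c : Cn s // c ≠ b s} =>
          g ⟨⟨s, c.1⟩, c.2⟩ * y s c.1) ⟨cs s, hcb s⟩]
      have h2 : ∀ c : {c : {c : Cn s // c ≠ b s} // c ≠ ⟨cs s, hcb s⟩},
          (if c.1.1 = cs s then 0 else algebraMap k K (m ⟨s, c.1.1⟩) * y s c.1.1) =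
            g ⟨⟨s, c.1.1⟩, c.1.2⟩ * y s c.1.1 := by
        intro c
        have : c.1.1 ≠ cs s := fun h => c.2 (Subtype.ext h)
        simp only [g, if_neg this]
      simp only [h2]
      simp only [g, if_true]
      ring
    · by_cases h' : c = cs s
      · simp [f, incForm, h, h', hcb, g]
      · simp [f, incForm, h, h', g]
  have h3 : eval m q = eval (Sum.elim (fun s => m ⟨s, cs s⟩) (fun s => m ⟨s, b s⟩)) (aeval f q) := by
    rw [← coe_aeval_eq_eval, ← coe_aeval_eq_eval]
    change aeval m q = aeval _ (aeval f q)
    rw [← AlgHom.comp_apply, comp_aeval]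
    congr 2
    ext ⟨s, c⟩
    by_cases h : c = b s
    · subst h; simp [f]
    · by_cases h' : c = cs s
      · subst h'; simp [f, h]
      · simp [f, h, h']
  rw [h3, h0, map_zero]

/-- A polynomial relation between the coefficients of generic forms through `y` holds if and only if it
holds for all systems of forms over `K` vanishing at `y`. -/
theorem aeval_incForm_eq_zero_iff {k K : Type*} [Field k] [Infinite K] [Field K] [Algebra k K] [Finite J]
    {b : ∀ s, Cn s} {y : ∀ s, Cn s → K} (hy : ∀ s, y s (b s) = 1) (q : MvPolynomial (Σ s, Cn s) k) :
    aeval (incForm b y) q = 0 ↔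
      ∀ M : (Σ s, Cn s) → K, (∀ s, ∑ c, M ⟨s, c⟩ * y s c = 0) → aeval M q = 0 := by
  have : Finite (Σ s, Cn s) := inferInstance
  constructor
  · intro h M hM
    have h1 : ((aeval fun w : {p : Σ s, Cn s // p.2 ≠ b p.1} => M w.1).restrictScalars k :
      MvPolynomial _ K →ₐ[k] K) (aeval (incForm b y) q) = 0 := by rw [h, map_zero]
    rw [← AlgHom.comp_apply, comp_aeval] at h1
    refine Eq.trans ?_ h1
    congr 2
    ext p
    exact (incForm_eval hy (RingHom.id K) M hM p).symm
  · intro h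
    refine MvPolynomial.funext fun m => ?_
    rw [map_zero]
    have h2 := h (fun p => eval m (incForm b y p)) fun s => by
      have := congrArg (eval m) (incForm_sum (hy s))
      simpa only [map_sum, map_mul, eval_C, map_zero] using this
    rw [← h2]
    change ((aeval m).restrictScalars k : MvPolynomial _ K →ₐ[k] K) (aeval (incForm b y) q) = _
    rw [← AlgHom.comp_apply, comp_aeval]
    rfl

end Incidence

section Incidence2
open MvPolynomial

variable {J : Type*} {Cn : J → Type*} [∀ s, Fintype (Cn s)] [∀ s, DecidableEq (Cn s)]

theorem map_incForm {R S : Type*} [CommRing R] [CommRing S] (f : R →+* S) (b : ∀ s, Cn s) (y : ∀ s, Cn s → R)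
    (p : Σ s, Cn s) : map f (incForm b y p) = incForm b (fun s c => f (y s c)) p := by
  by_cases h : p.2 = b p.1
  · simp [incForm, h]
  · simp [incForm, h]

theorem algInd_incForm_of_map {R K : Type*} [CommRing R] [Algebra ℂ R] [Field K] [Algebra ℂ K]
    (f : R →ₐ[ℂ] K) (b : ∀ s, Cn s) (y : ∀ s, Cn s → R)
    (hAI : AlgebraicIndependent ℂ (incForm b (fun s c => f (y s c)))) :
    AlgebraicIndependent ℂ (incForm b y) := by
  refine AlgebraicIndependent.of_comp (mapAlgHom f) ?_
  convert hAI using 1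
  ext1 p
  exact map_incForm f.toRingHom b y p

/-- If the coefficients of generic forms through the generic point are independent, then a general system of
forms vanishes at some `ℂ`-point. -/
theorem exists_incident_point {R : Type*} [CommRing R] [IsDomain R] [Algebra ℂ R] [Algebra.FiniteType ℂ R]
    [Finite J] {b : ∀ s, Cn s} {y : ∀ s, Cn s → R} (hy : ∀ s, y s (b s) = 1)
    (hAI : AlgebraicIndependent ℂ (incForm b y)) :
    ∃ q : MvPolynomial (Σ s, Cn s) ℂ, q ≠ 0 ∧ ∀ L : (Σ s, Cn s) → ℂ, eval L q ≠ 0 →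
      ∃ ρ : R →ₐ[ℂ] ℂ, ∀ s, ∑ c, L ⟨s, c⟩ * ρ (y s c) = 0 := by
  have : Finite (Σ s, Cn s) := inferInstance
  let T := MvPolynomial {p : Σ s, Cn s // p.2 ≠ b p.1} R
  let B := MvPolynomial (Σ s, Cn s) ℂ
  letI : Algebra B T := (aeval (incForm b y) : B →ₐ[ℂ] T).toRingHom.toAlgebra
  have hBT : ∀ x : B, algebraMap B T x = aeval (incForm b y) x := fun _ => rfl
  have : IsScalarTower ℂ B T := IsScalarTower.of_algebraMap_eq fun x => by
    rw [hBT]; exact (AlgHom.commutes (aeval (incForm b y)) x).symm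
  have : Algebra.FiniteType ℂ T := Algebra.FiniteType.trans (‹_› : Algebra.FiniteType ℂ R) (inferInstance : Algebra.FiniteType R T)
  have : Algebra.FiniteType B T := Algebra.FiniteType.of_restrictScalars_finiteType ℂ B T
  obtain ⟨d, s, hs, f, hf0, hf⟩ := relNoether (B := B) (T := T) hAI
  refine ⟨f, hf0, fun L hL => ?_⟩
  let χ : B →ₐ[ℂ] ℂ := aeval L
  have hχ : χ f ≠ 0 := by rwa [← coe_aeval_eq_eval] at hL
  obtain ⟨ρ, hρ, -, -⟩ := lying_over_point hf χ hχ 0 ⟨Polynomial.X, Polynomial.monic_X, by simp⟩ Polynomial.X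
    (by
      intro P hP
      rw [Polynomial.X_dvd_iff]
      apply hs
      rw [map_zero, ← hP, Polynomial.eval₂_at_zero]; rfl) 0 0 (by simp)
  refine ⟨ρ.comp (IsScalarTower.toAlgHom ℂ R T), fun s => ?_⟩
  have h1 := congrArg ρ (incForm_sum (b := b) (hy s))
  rw [map_sum, map_zero] at h1
  rw [← h1]
  refine Finset.sum_congr rfl fun c _ => ?_
  rw [map_mul]
  congr 1
  have := hρ (X ⟨s, c⟩)
  rw [hBT, aeval_X] at this
  rw [this]
  exact (aeval_X _ _).symm

/-- A `ℂ`-point `ρ` at which the forms `L` vanish, extended to the ring of generic forms. -/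
theorem incForm_point {R : Type*} [CommRing R] [Algebra ℂ R]
    {b : ∀ s, Cn s} {y : ∀ s, Cn s → R} (hy : ∀ s, y s (b s) = 1) (ρ : R →ₐ[ℂ] ℂ) (L : (Σ s, Cn s) → ℂ)
    (hL : ∀ s, ∑ c, L ⟨s, c⟩ * ρ (y s c) = 0) :
    ∃ ρ' : MvPolynomial {p : Σ s, Cn s // p.2 ≠ b p.1} R →ₐ[ℂ] ℂ, (∀ r, ρ' (C r) = ρ r) ∧
      ∀ p, ρ' (incForm b y p) = L p := by
  let φ := eval₂Hom ρ.toRingHom (fun w : {p : Σ s, Cn s // p.2 ≠ b p.1} => L w.1)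
  refine ⟨{ φ with commutes' := fun x => ?_ }, fun r => ?_, fun p => ?_⟩
  · change φ (algebraMap ℂ _ x) = _
    rw [IsScalarTower.algebraMap_apply ℂ R, MvPolynomial.algebraMap_eq]
    simp [φ]
  · change φ (C r) = _
    simp [φ]
  · exact incForm_eval hy ρ.toRingHom L hL p

theorem sigma_card [Fintype J] (b : ∀ s, Cn s) :
    Nat.card (Σ s, Cn s) = Nat.card {p : Σ s, Cn s // p.2 ≠ b p.1} + Nat.card J := by
  classical
  let e : {p : Σ s, Cn s // ¬ (p.2 ≠ b p.1)} ≃ J :=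
    { toFun := fun p => p.1.1
      invFun := fun s => ⟨⟨s, b s⟩, by simp⟩
      left_inv := by
        rintro ⟨⟨s, c⟩, h⟩
        simp only [ne_eq, not_not] at h
        subst h; rfl
      right_inv := fun s => rfl }
  rw [← Nat.card_congr e, ← Nat.card_sum, Nat.card_congr (Equiv.sumCompl _)]

/-- If the number of generic forms equals the transcendence degree, then every function takes only finitely
many values on the common zeros of general forms. -/
theorem finite_values {R K : Type*} [CommRing R] [Algebra ℂ R]
    [Field K] [Algebra ℂ K] [Algebra R K] [IsScalarTower ℂ R K] (hRK : Function.Injective (algebraMap R K))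
    [Finite J] {b : ∀ s, Cn s} {y : ∀ s, Cn s → R} (hy : ∀ s, y s (b s) = 1)
    (hAI : AlgebraicIndependent ℂ (incForm b (fun s c => algebraMap R K (y s c))))
    {z : J → K} (hz : IsTranscendenceBasis ℂ z) (r : R) :
    ∃ q : MvPolynomial (Σ s, Cn s) ℂ, q ≠ 0 ∧ ∀ L : (Σ s, Cn s) → ℂ, eval L q ≠ 0 →
      {t : ℂ | ∃ ρ : R →ₐ[ℂ] ℂ, (∀ s, ∑ c, L ⟨s, c⟩ * ρ (y s c) = 0) ∧ ρ r = t}.Finite := by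
  classical
  have := Fintype.ofFinite J
  have : Finite (Σ s, Cn s) := inferInstance
  let W := {p : Σ s, Cn s // p.2 ≠ b p.1}
  let u := incForm b (fun s c => algebraMap R K (y s c))
  have hX : IsTranscendenceBasis K (X : W → MvPolynomial W K) := IsTranscendenceBasis.mvPolynomial W K
  have hb := hz.sumElim_comp hX
  have hcard := hb.lift_cardinalMk_eq_trdeg
  have hu : IsTranscendenceBasis ℂ u := by
    apply hAI.isTranscendenceBasis_of_lift_trdeg_le_of_finite
    rw [← Nat.cast_card, Cardinal.lift_natCast, eq_comm, Cardinal.lift_eq_nat_iff] at hcard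
    rw [hcard, ← Nat.cast_card (α := Σ s, Cn s), Cardinal.lift_natCast, Cardinal.lift_natCast, sigma_card b,
      Nat.card_sum, add_comm]
  obtain ⟨P, hP0, hP⟩ := hu.isAlgebraic.isAlgebraic (C (algebraMap R K r))
  let e : MvPolynomial (Σ s, Cn s) ℂ →+* Algebra.adjoin ℂ (Set.range u) :=
    (aeval fun i => (⟨u i, Algebra.subset_adjoin ⟨i, rfl⟩⟩ : Algebra.adjoin ℂ (Set.range u))).toRingHom
  have he : (algebraMap (Algebra.adjoin ℂ (Set.range u)) (MvPolynomial W K)).comp e =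
      (map (algebraMap R K)).comp (aeval (incForm b y) : MvPolynomial (Σ s, Cn s) ℂ →ₐ[ℂ] _).toRingHom := by
    apply MvPolynomial.ringHom_ext
    · intro x
      have h1 : e (C x) = algebraMap ℂ _ x := AlgHom.commutes (aeval _) x
      have h2 : (aeval (incForm b y) : MvPolynomial (Σ s, Cn s) ℂ →ₐ[ℂ] _) (C x) = algebraMap ℂ _ x :=
        AlgHom.commutes (aeval _) x
      rw [RingHom.comp_apply, h1, RingHom.comp_apply]
      change _ = map (algebraMap R K) (aeval (incForm b y) (C x))
      rw [h2, ← IsScalarTower.algebraMap_apply, IsScalarTower.algebraMap_apply ℂ R (MvPolynomial W R),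
        MvPolynomial.algebraMap_eq, map_C, ← IsScalarTower.algebraMap_apply,
        IsScalarTower.algebraMap_apply ℂ K (MvPolynomial W K), MvPolynomial.algebraMap_eq]
    · intro i
      have h1 : e (X i) = ⟨u i, Algebra.subset_adjoin ⟨i, rfl⟩⟩ := aeval_X _ _
      rw [RingHom.comp_apply, h1, RingHom.comp_apply]
      change u i = map (algebraMap R K) (aeval (incForm b y) (X i))
      rw [aeval_X, map_incForm]
  have hes : Function.Surjective e := by
    rintro ⟨x, hx⟩
    have hx' := hx
    rw [Algebra.adjoin_range_eq_range_aeval] at hx'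
    obtain ⟨p, hp⟩ := hx'
    refine ⟨p, Subtype.ext ?_⟩
    refine Eq.trans ?_ hp
    change (Algebra.adjoin ℂ (Set.range u)).val (aeval _ p) = aeval u p
    rw [← AlgHom.comp_apply, comp_aeval]
    rfl
  obtain ⟨Q, rfl⟩ := Polynomial.map_surjective e hes P
  have hQ0 : Q ≠ 0 := by rintro rfl; simp at hP0
  have hQ : Q.eval₂ (aeval (incForm b y) : MvPolynomial (Σ s, Cn s) ℂ →ₐ[ℂ] MvPolynomial W R).toRingHom (C r) = 0 := by
    apply map_injective (algebraMap R K) hRK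
    rw [Polynomial.hom_eval₂, ← he, map_C, map_zero, ← Polynomial.eval₂_map]
    exact hP
  refine ⟨Q.leadingCoeff, Polynomial.leadingCoeff_ne_zero.2 hQ0, fun L hL => ?_⟩
  have hQL : Q.map (eval L) ≠ 0 := by
    intro h
    have := congrArg (Polynomial.coeff · Q.natDegree) h
    rw [Polynomial.coeff_map, Polynomial.coeff_zero] at this
    exact hL this
  refine (Polynomial.finite_setOfPred_isRoot hQL).subset ?_
  rintro _ ⟨ρ, hρ, rfl⟩
  obtain ⟨ρ', h1, h2⟩ := incForm_point hy ρ L hρ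
  have h3 := congrArg ρ' hQ
  have h4 : ρ'.toRingHom.comp (aeval (incForm b y) : MvPolynomial (Σ s, Cn s) ℂ →ₐ[ℂ] MvPolynomial W R).toRingHom
      = eval L := by
    apply MvPolynomial.ringHom_ext
    · intro x
      change ρ' (aeval (incForm b y) (C x)) = _
      rw [← AlgHom.comp_apply, ← MvPolynomial.algebraMap_eq, AlgHom.commutes]
      simp
    · intro i
      change ρ' (aeval (incForm b y) (X i)) = _
      rw [aeval_X, h2, eval_X]
  change ρ'.toRingHom _ = ρ'.toRingHom _ at h3
  rw [Polynomial.hom_eval₂, h4, map_zero] at h3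
  change Polynomial.eval (ρ r) _ = 0
  rw [Polynomial.eval_map, ← h1]
  exact h3

end Incidence2

/-! ### Bertini's theorem for affine varieties -/

section Bertini
open MvPolynomial IntermediateField IntermediateField.algebraAdjoinAdjoin

/-- Independence over a generated subalgebra extends to independence over the generated field. -/
theorem extendScalars_adjoin {k K : Type*} [Field k] [Field K] [Algebra k K] (S : Set K) {τ : Type*}
    {A : Type*} [CommRing A] [Algebra K A] {x : τ → A}
    (h : AlgebraicIndependent (Algebra.adjoin k S) x) : AlgebraicIndependent (IntermediateField.adjoin k S) x := by
  have : Algebra.IsAlgebraic (Algebra.adjoin k S) (IntermediateField.adjoin k S) :=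
    IsLocalization.isAlgebraic _ (nonZeroDivisors (Algebra.adjoin k S))
  exact h.extendScalars _

theorem mem_range_of_isIntegral_complex {K : Type*} [Field K] [Algebra ℂ K] {c : K} (hc : IsIntegral ℂ c) :
    ∃ e : ℂ, algebraMap ℂ K e = c :=
  minpoly.mem_range_of_degree_eq_one ℂ c (IsAlgClosed.degree_eq_one_of_irreducible ℂ (minpoly.irreducible hc))

/-- If two coordinates of `y` are independent, the coefficients of the generic form through `y` are independent together
with one of these coordinates. -/
theorem algInd_incForm_pair {R K : Type*} [CommRing R] [Algebra ℂ R] [Field K] [Algebra ℂ K]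
    [Algebra R K] [IsScalarTower ℂ R K]
    {Cn : Type*} [Fintype Cn] [DecidableEq Cn] {b : Cn} {y : Cn → R} (hy : y b = 1) {c1 c2 : Cn}
    (h12 : AlgebraicIndependent ℂ ![algebraMap R K (y c1), algebraMap R K (y c2)]) :
    AlgebraicIndependent ℂ (Sum.elim (incForm (fun _ : Unit => b) (fun _ c => algebraMap R K (y c)))
      (fun _ : Unit => C (algebraMap R K (y c2)))) := by
  set y1 := algebraMap R K (y c1)
  set y2 := algebraMap R K (y c2) with hy2
  have h3 : AlgebraicIndependent ℂ (Sum.elim (fun _ : Unit => y1) (fun _ : Unit => y2)) := by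
    convert h12.comp (Sum.elim (fun _ => 0) (fun _ => 1)) ?_ using 1
    · ext (s | s) <;> rfl
    · rintro (s | s) (t | t) h <;> simp_all
  have h4 := (AlgebraicIndependent.sumElim_iff.1 h3)
  have h5 := h4.2
  rw [Set.range_const] at h5
  have h6 : AlgebraicIndependent ℂ⟮y2⟯ (fun _ : Unit => y1) := extendScalars_adjoin _ h5
  have : Infinite ℂ⟮y2⟯ := Infinite.of_injective _ (algebraMap ℂ ℂ⟮y2⟯).injective
  have h7 : AlgebraicIndependent ℂ⟮y2⟯ (incForm (fun _ : Unit => b) (fun _ c => algebraMap R K (y c))) :=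
    algInd_incForm (k := ℂ⟮y2⟯) (fun _ => by rw [hy, map_one]) (fun _ => c1) h6
  have h8 : AlgebraicIndependent ℂ (fun _ : Unit => (⟨y2, mem_adjoin_simple_self ℂ y2⟩ : ℂ⟮y2⟯)) :=
    AlgebraicIndependent.of_comp (ℂ⟮y2⟯.val) h4.1
  exact h8.sumElim_comp h7

set_option maxHeartbeats 1600000 in
/-- Almost all fibres of the universal hyperplane section over the space of hyperplanes are irreducible, after the
coefficient at `b` is changed to the pencil member `u_b + n y_{c2}`, for which the field generated by the coefficients is
algebraically closed in the function field `L` of the universal section. -/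
theorem bertini_spread {R K : Type*} [CommRing R] [IsDomain R] [Algebra ℂ R] [Algebra.FiniteType ℂ R]
    [Field K] [Algebra ℂ K] [Algebra R K] [IsScalarTower ℂ R K] [IsFractionRing R K]
    {Cn : Type*} [Fintype Cn] [DecidableEq Cn] {b : Cn} {y : Cn → R} (hy : y b = 1) {c1 c2 : Cn}
    (h12 : AlgebraicIndependent ℂ ![algebraMap R K (y c1), algebraMap R K (y c2)])
    {L : Type*} [Field L] [Algebra (MvPolynomial {p : Σ _ : Unit, Cn // p.2 ≠ b} K) L]
    [IsFractionRing (MvPolynomial {p : Σ _ : Unit, Cn // p.2 ≠ b} K) L] [Algebra ℂ L] [Algebra K L]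
    [IsScalarTower K (MvPolynomial {p : Σ _ : Unit, Cn // p.2 ≠ b} K) L] [IsScalarTower ℂ K L]
    [Algebra.EssFiniteType ℂ L] :
    ∃ n : ℕ, ∃ q : MvPolynomial (Σ _ : Unit, Cn) ℂ, q ≠ 0 ∧ ∀ χ : MvPolynomial (Σ _ : Unit, Cn) ℂ →ₐ[ℂ] ℂ, χ q ≠ 0 →
      letI := (aeval (fun p => incForm (fun _ : Unit => b) (fun _ => y) p + if p.2 = b then n * C (y c2) else 0) :
        MvPolynomial (Σ _ : Unit, Cn) ℂ →ₐ[ℂ] _).toRingHom.toAlgebra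
      FibreIrred (MvPolynomial {p : Σ _ : Unit, Cn // p.2 ≠ b} R) χ := by
  let W := {p : Σ _ : Unit, Cn // p.2 ≠ b}
  let i' : MvPolynomial W K →ₐ[K] L := IsScalarTower.toAlgHom K _ L
  have hi' : Function.Injective i' := IsFractionRing.injective (MvPolynomial W K) L
  have : IsScalarTower ℂ (MvPolynomial W K) L := IsScalarTower.of_algebraMap_eq fun x => by
    rw [IsScalarTower.algebraMap_apply ℂ K L, IsScalarTower.algebraMap_apply ℂ K (MvPolynomial W K),
      ← IsScalarTower.algebraMap_apply K _ L]
  have hi'_eq : ∀ x, i' x = algebraMap (MvPolynomial W K) L x := fun _ => rfl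
  let i : MvPolynomial W R →ₐ[ℂ] L := (i'.restrictScalars ℂ).comp (mapAlgHom (IsScalarTower.toAlgHom ℂ R K))
  have hi : Function.Injective i := hi'.comp (map_injective _ (IsFractionRing.injective R K))
  let u : (Σ _ : Unit, Cn) → MvPolynomial W R := incForm (fun _ : Unit => b) (fun _ => y)
  have hi_def : ∀ t, i t = i' (map (algebraMap R K) t) := fun _ => rfl
  have hmap : ∀ p, map (algebraMap R K) (u p) =
    incForm (fun _ : Unit => b) (fun _ c => algebraMap R K (y c)) p := map_incForm (algebraMap R K) _ _
  let ub := i (u ⟨(), b⟩)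
  let v := i (C (y c2))
  let Xw : W → L := fun w => i (X w)
  have hXw : Xw = fun w => i' (X w) := by
    ext w
    change i' (map _ (X w)) = _
    rw [map_X]
  have huX : ∀ w : W, u w.1 = X w := fun w => dif_neg w.2
  have h0 : AlgebraicIndependent ℂ (Sum.elim Xw ![ub, v]) := by
    have h1 := ((algInd_incForm_pair (K := K) hy h12).map' (f := i'.restrictScalars ℂ) hi').comp
      (Sum.elim (fun w : W => Sum.inl w.1) ![Sum.inl ⟨(), b⟩, Sum.inr ()]) (by
        rintro (s | s) (t | t) h
        · simp only [Sum.elim_inl, Sum.inl.injEq] at h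
          rw [Subtype.ext h]
        · fin_cases t
          · simp at h
            exact absurd (by rw [h]) s.2
          · simp at h
        · fin_cases s
          · simp at h
            exact absurd (by rw [← h]) t.2
          · simp at h
        · fin_cases s <;> fin_cases t <;> simp_all)
    have e : Sum.elim Xw ![ub, v] = ((i'.restrictScalars ℂ) ∘ (Sum.elim
        (incForm (fun _ : Unit => b) (fun _ c => algebraMap R K (y c))) (fun _ : Unit => C (algebraMap R K (y c2))))) ∘
        (Sum.elim (fun w : W => Sum.inl w.1) ![Sum.inl ⟨(), b⟩, Sum.inr ()]) := by
      funext s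
      rcases s with s | s
      · have : incForm (fun _ : Unit => b) (fun _ c => algebraMap R K (y c)) s.1 = X s := dif_neg s.2
        simp only [Sum.elim_inl, Function.comp_apply, this, hXw]
        rfl
      · fin_cases s
        · exact (hi_def _).trans (congrArg i' (hmap _))
        · exact (hi_def _).trans (congrArg i' (map_C _ _))
    rw [e]
    exact h1
  let k := adjoin ℂ (Set.range Xw)
  have hk : AlgebraicIndependent k ![ub, v] := by
    have h1 : AlgebraicIndependent ℂ (Sum.elim ![ub, v] Xw) := by
      convert h0.comp Sum.swap Sum.swap_leftInverse.injective using 1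
      ext (s | s) <;> rfl
    have h5 := (AlgebraicIndependent.sumElim_iff.1 h1).2
    exact extendScalars_adjoin _ h5
  have hcl : ∀ a : L, IsAlgebraic k a → ∃ e : k, algebraMap k L e = a := by
    intro a ha
    have : a ∈ k := by
      refine mem_adjoin_of_isAlgebraic (k := ℂ) (F := K) (L := L) ?_ (w := Xw) ?_ ?_ ha
      · intro c hc
        exact mem_range_of_isIntegral_complex hc
      · rw [hXw]
        exact (algebraicIndependent_X W K).map' hi'
      · obtain ⟨p, q, hq, rfl⟩ := IsFractionRing.div_surjective (A := MvPolynomial W K) a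
        have : ∀ p : MvPolynomial W K, algebraMap _ L p ∈ adjoin K (Set.range Xw) := by
          intro p
          apply IntermediateField.algebra_adjoin_le_adjoin
          rw [Algebra.adjoin_range_eq_range_aeval]
          refine ⟨p, ?_⟩
          have : (aeval Xw : MvPolynomial W K →ₐ[K] L) = i' := by
            apply MvPolynomial.algHom_ext
            intro w
            rw [aeval_X, hXw]
          rw [this]; rfl
        exact div_mem (this p) (this q)
    exact ⟨⟨a, this⟩, rfl⟩
  have : Algebra.EssFiniteType k L := Algebra.EssFiniteType.of_comp ℂ k L
  obtain ⟨n, hn⟩ := exists_pencil_algClosed hcl hk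
  let u' : (Σ _ : Unit, Cn) → MvPolynomial W R := fun p => u p + if p.2 = b then n * C (y c2) else 0
  have hu'X : ∀ w : W, u' w.1 = X w := fun w => by
    simp only [u', if_neg w.2, add_zero]; exact huX w
  have hu'b : i (u' ⟨(), b⟩) = ub + n * v := by simp [u', ub, v]
  have hAI' : AlgebraicIndependent ℂ (fun p => i (u' p)) := by
    have h1 := algInd_change h0 (n := n) (m := n + 1) (by omega)
    let f : (Σ _ : Unit, Cn) → W ⊕ Fin 2 := fun p => if h : p.2 = b then Sum.inr 0 else Sum.inl ⟨p, h⟩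
    have e : (fun p => i (u' p)) = Sum.elim Xw ![ub + n * v, ub + (n + 1 : ℕ) * v] ∘ f := by
      ext ⟨_, c⟩
      by_cases h : c = b
      · subst h
        simp [f, hu'b]
      · have := hu'X ⟨⟨(), c⟩, h⟩
        simp [f, h, this, Xw]
    rw [e]
    refine h1.comp f ?_
    rintro ⟨_, c⟩ ⟨_, c'⟩ h
    have hcc : c = c' := by
      by_cases h1 : c = b
      · by_cases h2 : c' = b
        · rw [h1, h2]
        · simp only [f, dif_pos h1, dif_neg h2] at h
          cases h
      · by_cases h2 : c' = b
        · simp only [f, dif_neg h1, dif_pos h2] at h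
          cases h
        · simp only [f, dif_neg h1, dif_neg h2] at h
          exact congrArg (fun z : W => z.1.2) (Sum.inl_injective h)
    rw [hcc]
  refine ⟨n, ?_⟩
  let B := MvPolynomial (Σ _ : Unit, Cn) ℂ
  let T := MvPolynomial W R
  letI a1 : Algebra B T := (aeval u' : B →ₐ[ℂ] T).toRingHom.toAlgebra
  letI a2 : Algebra T L := i.toRingHom.toAlgebra
  letI a3 : Algebra B L := (aeval (fun p => i (u' p)) : B →ₐ[ℂ] L).toRingHom.toAlgebra
  have hBL : ∀ x : B, algebraMap B L x = aeval (fun p => i (u' p)) x := fun _ => rfl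
  have : IsScalarTower ℂ B T := IsScalarTower.of_algebraMap_eq fun x =>
    (AlgHom.commutes (aeval u' : B →ₐ[ℂ] T) x).symm
  have : IsScalarTower B T L := IsScalarTower.of_algebraMap_eq fun x => by
    change aeval (fun p => i (u' p)) x = i (aeval u' x)
    rw [← AlgHom.comp_apply, comp_aeval]
  have : Algebra.FiniteType ℂ T := Algebra.FiniteType.trans (‹_› : Algebra.FiniteType ℂ R) (inferInstance : Algebra.FiniteType R T)
  refine spread (B := B) (T := T) (L := L) hi hAI' ?_
  intro α hα
  have hk' : k⟮ub + n * v⟯.restrictScalars ℂ = adjoin ℂ (Set.range fun p => i (u' p)) := by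
    apply le_antisymm
    · have : k ≤ adjoin ℂ (Set.range fun p => i (u' p)) := by
        rw [adjoin_le_iff]
        rintro _ ⟨w, rfl⟩
        refine IntermediateField.subset_adjoin ℂ _ ⟨w.1, ?_⟩
        simp only [hu'X w, Xw]
      intro x hx
      refine IntermediateField.adjoin_induction k (p := fun z _ => z ∈ adjoin ℂ (Set.range fun p => i (u' p))) ?_ ?_ ?_ ?_ ?_ hx
      · rintro z rfl
        rw [← hu'b]
        exact IntermediateField.subset_adjoin ℂ _ ⟨_, rfl⟩
      · intro z
        exact this z.2
      · intro a b _ _ ha hb; exact add_mem ha hb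
      · intro a _ ha; exact inv_mem ha
      · intro a b _ _ ha hb; exact mul_mem ha hb
    · rw [adjoin_le_iff]
      rintro _ ⟨⟨_, c⟩, rfl⟩
      by_cases h : c = b
      · subst h
        change i (u' ⟨(), c⟩) ∈ k⟮ub + n * v⟯
        rw [hu'b]
        exact mem_adjoin_simple_self k _
      · have := hu'X ⟨⟨(), c⟩, h⟩
        simp only at this
        simp only [this]
        exact IntermediateField.algebraMap_mem k⟮ub + n * v⟯
          (⟨Xw ⟨⟨(), c⟩, h⟩, IntermediateField.subset_adjoin ℂ _ ⟨_, rfl⟩⟩ : k)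
  have hmem : α ∈ k⟮ub + n * v⟯ := by
    apply hn
    have hBk : ∀ x : B, algebraMap B L x ∈ k⟮ub + n * v⟯ := by
      intro x
      have : algebraMap B L x ∈ adjoin ℂ (Set.range fun p => i (u' p)) := by
        apply IntermediateField.algebra_adjoin_le_adjoin
        rw [Algebra.adjoin_range_eq_range_aeval]
        exact ⟨x, rfl⟩
      rw [← hk'] at this
      exact this
    let f : B →+* k⟮ub + n * v⟯ := (algebraMap B L).codRestrict k⟮ub + n * v⟯.toSubfield hBk
    have hf : Function.Injective f := fun x x' h => hAI' (congrArg Subtype.val h)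
    obtain ⟨P, hP0, hP⟩ := hα
    refine ⟨P.map f, (Polynomial.map_ne_zero_iff hf).2 hP0, ?_⟩
    rw [← hP, Polynomial.aeval_def, Polynomial.eval₂_map]
    rfl
  have hmem' : α ∈ adjoin ℂ (Set.range fun p => i (u' p)) := by
    rw [← hk']; exact hmem
  rw [mem_adjoin_range_iff] at hmem'
  obtain ⟨p, r, hpr⟩ := hmem'
  by_cases hr : r = 0
  · refine ⟨0, 1, one_ne_zero, ?_⟩
    rw [hpr, hr]; simp
  · refine ⟨p, r, hr, ?_⟩
    have : algebraMap B L r ≠ 0 := fun h => hr (hAI' (by rw [map_zero]; exact h))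
    rw [hpr, hBL, hBL]
    rw [hBL] at this
    field_simp

end Bertini

section Bertini2
open MvPolynomial

/-- Bertini's theorem for an affine variety with two independent coordinates: for general `m`, the hyperplane section
`∑ m_c y_c = 0` is nonempty and irreducible. -/
theorem affine_bertini {R : Type*} [CommRing R] [IsDomain R] [Algebra ℂ R] [Algebra.FiniteType ℂ R]
    {Cn : Type*} [Fintype Cn] [DecidableEq Cn] {b : Cn} {y : Cn → R} (hy : y b = 1) {c1 c2 : Cn}
    (h12 : AlgebraicIndependent ℂ ![y c1, y c2]) :
    ∃ q : MvPolynomial Cn ℂ, q ≠ 0 ∧ ∀ m : Cn → ℂ, eval m q ≠ 0 →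
      (∃ ρ : R →ₐ[ℂ] ℂ, ∑ c, m c * ρ (y c) = 0) ∧
      ∀ g g' : R, (∀ ρ : R →ₐ[ℂ] ℂ, ∑ c, m c * ρ (y c) = 0 → ρ (g * g') = 0) →
        (∀ ρ : R →ₐ[ℂ] ℂ, ∑ c, m c * ρ (y c) = 0 → ρ g = 0) ∨
        (∀ ρ : R →ₐ[ℂ] ℂ, ∑ c, m c * ρ (y c) = 0 → ρ g' = 0) := by
  let K := FractionRing R
  let W := {p : Σ _ : Unit, Cn // p.2 ≠ b}
  let L := FractionRing (MvPolynomial W K)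
  have h12' : AlgebraicIndependent ℂ ![algebraMap R K (y c1), algebraMap R K (y c2)] := by
    have := h12.map' (f := IsScalarTower.toAlgHom ℂ R K) (IsFractionRing.injective R K)
    convert this using 1
    ext j; fin_cases j <;> rfl
  have e1 : Algebra.EssFiniteType R K := Algebra.EssFiniteType.of_isLocalization _ (nonZeroDivisors R)
  have e2 : Algebra.EssFiniteType ℂ K := Algebra.EssFiniteType.comp ℂ R K
  have e3 : Algebra.EssFiniteType ℂ (MvPolynomial W K) := Algebra.EssFiniteType.comp ℂ K _
  have e4 : Algebra.EssFiniteType (MvPolynomial W K) L :=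
    Algebra.EssFiniteType.of_isLocalization _ (nonZeroDivisors (MvPolynomial W K))
  have e5 : Algebra.EssFiniteType ℂ L := Algebra.EssFiniteType.comp ℂ (MvPolynomial W K) L
  obtain ⟨n, q, hq0, hq⟩ := bertini_spread (K := K) hy h12' (L := L)
  let sh : Cn → ℂ := fun c => if c = c2 then (n : ℂ) else 0
  -- `bertini_spread` concerns the family sheared by `n * y c2`; the shift `sh` of the coefficients undoes the shear.
  let q' : MvPolynomial Cn ℂ := aeval (fun p : Σ _ : Unit, Cn => X p.2 + C (sh p.2)) q
  have hev : ∀ m : Cn → ℂ, eval m q' = aeval (fun p : Σ _ : Unit, Cn => m p.2 + sh p.2) q := by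
    intro m
    rw [← coe_aeval_eq_eval]
    change aeval m (aeval _ q) = _
    rw [← AlgHom.comp_apply, comp_aeval]
    simp
  refine ⟨q', ?_, fun m hm => ?_⟩
  · intro h
    apply hq0
    apply MvPolynomial.funext
    intro t
    have := hev (fun c => t ⟨(), c⟩ - sh c)
    rw [h, map_zero] at this
    rw [map_zero, this, ← coe_aeval_eq_eval]
    simp
  let m' : (Σ _ : Unit, Cn) → ℂ := fun p => m p.2 + sh p.2
  let χ : MvPolynomial (Σ _ : Unit, Cn) ℂ →ₐ[ℂ] ℂ := aeval m'
  have hχ : χ q ≠ 0 := by rw [hev] at hm; exact hm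
  have hF := hq χ hχ
  let u : (Σ _ : Unit, Cn) → MvPolynomial W R := incForm (fun _ : Unit => b) (fun _ => y)
  let u' : (Σ _ : Unit, Cn) → MvPolynomial W R := fun p => u p + if p.2 = b then n * C (y c2) else 0
  -- points over `χ` are the incident points
  have hsum : ∀ ρ : R →ₐ[ℂ] ℂ, ∑ c, m c * ρ (y c) = ∑ c, (m c + sh c) * ρ (y c) - n * ρ (y c2) := by
    intro ρ
    simp only [add_mul, Finset.sum_add_distrib, sh, ite_mul, zero_mul, Finset.sum_ite_eq', Finset.mem_univ, if_true]
    ring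
  have hdown : ∀ ρ : MvPolynomial W R →ₐ[ℂ] ℂ, (∀ x, ρ (aeval u' x) = χ x) →
      ∑ c, m c * (ρ.comp (IsScalarTower.toAlgHom ℂ R (MvPolynomial W R))) (y c) = 0 := by
    intro ρ hρ
    have hu : ∀ c, ρ (u' ⟨(), c⟩) = m c + sh c := by
      intro c
      have := hρ (X ⟨(), c⟩)
      rw [aeval_X] at this
      rw [this]
      exact aeval_X _ _
    have h1 := congrArg ρ (incForm_sum (b := fun _ : Unit => b) (y := fun _ => y) (s := ()) hy)
    rw [map_sum, map_zero] at h1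
    have h2 : ∑ c, ρ (u' ⟨(), c⟩) * ρ (C (y c)) = n * ρ (C (y c2)) := by
      have : ∀ c, ρ (u' ⟨(), c⟩) * ρ (C (y c)) = ρ (u ⟨(), c⟩ * C (y c)) +
          if c = b then n * ρ (C (y c2)) else 0 := by
        intro c
        by_cases h : c = b
        · subst h
          simp [u', hy]
        · simp [u', h]
      rw [Finset.sum_congr rfl fun c _ => this c, Finset.sum_add_distrib, h1, Finset.sum_ite_eq', zero_add]
      simp
    rw [hsum]
    simp only [hu] at h2
    exact sub_eq_zero.2 h2
  have hup : ∀ ρ : R →ₐ[ℂ] ℂ, ∑ c, m c * ρ (y c) = 0 →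
      ∃ ρ' : MvPolynomial W R →ₐ[ℂ] ℂ, (∀ r, ρ' (C r) = ρ r) ∧ ∀ x, ρ' (aeval u' x) = χ x := by
    intro ρ hρ
    rw [hsum, sub_eq_zero] at hρ
    obtain ⟨ρ', h1, h2⟩ := incForm_point (b := fun _ : Unit => b) (y := fun _ => y) (fun _ => hy) ρ
      (fun p => m' p - if p.2 = b then n * ρ (y c2) else 0) (by
        rintro -
        simp only [sub_mul, Finset.sum_sub_distrib, ite_mul, zero_mul, Finset.sum_ite_eq', Finset.mem_univ, if_true, hy,
          map_one, mul_one]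
        exact sub_eq_zero.2 hρ)
    refine ⟨ρ', h1, fun x => ?_⟩
    rw [← AlgHom.comp_apply]
    congr 1
    apply MvPolynomial.algHom_ext
    intro p
    rw [AlgHom.comp_apply, aeval_X]
    refine Eq.trans ?_ (aeval_X _ _).symm
    change ρ' (u p + _) = _
    rw [map_add, h2]
    by_cases h : p.2 = b
    · simp [h, h1]
    · simp [h]
  refine ⟨?_, fun g g' hgg => ?_⟩
  · obtain ⟨ρ, hρ⟩ := hF.1
    exact ⟨_, hdown ρ hρ⟩
  · rcases hF.2 (C g) (C g') (fun ρ hρ => by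
      rw [← map_mul]; exact hgg _ (hdown ρ hρ)) with h | h
    · left
      intro ρ hρ
      obtain ⟨ρ', h1, h2⟩ := hup ρ hρ
      rw [← h1]; exact h ρ' h2
    · right
      intro ρ hρ
      obtain ⟨ρ', h1, h2⟩ := hup ρ hρ
      rw [← h1]; exact h ρ' h2
end Bertini2

/-! ### Generic conditions and homogeneous coordinates -/

section Generic
open MvPolynomial

theorem dense_ne_zero {τ : Type*} [Finite τ] {q : MvPolynomial τ ℂ} (hq : q ≠ 0) :
    Dense {L : τ → ℂ | eval L q ≠ 0} := by
  have := Fintype.ofFinite τ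
  rw [Metric.dense_iff]
  intro x r hr
  by_contra h
  apply hq
  refine funext_set (fun t => Metric.ball (x t) r) (fun t => ?_) fun m hm => ?_
  · exact infinite_of_mem_nhds (x t) (Metric.ball_mem_nhds _ hr)
  · rw [map_zero]
    by_contra hm0
    exact h ⟨m, by rw [ball_pi x hr]; exact hm, hm0⟩

/-- Non-vanishing of a nonzero polynomial is a generic condition. -/
theorem generic_of_ne_zero {α τ : Type*} [TopologicalSpace α] [Finite τ] (φ : α ≃ₜ (τ → ℂ))
    {q : MvPolynomial τ ℂ} (hq : q ≠ 0) {P : α → Prop} (h : ∀ a, eval (φ a) q ≠ 0 → P a) : Generic P := by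
  refine ⟨φ ⁻¹' {L | eval L q ≠ 0}, ?_, ?_, h⟩
  · refine IsOpen.preimage φ.continuous ?_
    exact isOpen_ne_fun (MvPolynomial.continuous_eval q) continuous_const
  · exact (dense_ne_zero hq).preimage φ.isOpenMap

/-- A finite family of nonzero polynomials has a common nonvanishing condition. -/
theorem exists_common_ne_zero {τ κ : Type*} [Finite κ] {P : κ → (τ → ℂ) → Prop}
    (h : ∀ k, ∃ q : MvPolynomial τ ℂ, q ≠ 0 ∧ ∀ L, eval L q ≠ 0 → P k L) :
    ∃ q : MvPolynomial τ ℂ, q ≠ 0 ∧ ∀ L, eval L q ≠ 0 → ∀ k, P k L := by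
  have := Fintype.ofFinite κ
  choose q hq hP using h
  refine ⟨∏ k, q k, Finset.prod_ne_zero_iff.2 fun k _ => hq k, fun L hL k => hP k L ?_⟩
  rw [map_prod] at hL
  exact Finset.prod_ne_zero_iff.1 hL k (Finset.mem_univ k)

/-- Transport of an exceptional hypersurface along a bijection of variables. -/
theorem exists_ne_zero_reindex {τ τ' : Type*} (e : τ ≃ τ') {P : (τ' → ℂ) → Prop}
    (h : ∃ q : MvPolynomial τ ℂ, q ≠ 0 ∧ ∀ L : τ' → ℂ, eval (L ∘ e) q ≠ 0 → P L) :
    ∃ q : MvPolynomial τ' ℂ, q ≠ 0 ∧ ∀ L, eval L q ≠ 0 → P L := by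
  obtain ⟨q, hq, h⟩ := h
  refine ⟨rename e q, ?_, fun L hL => h L ?_⟩
  · rwa [Ne, map_eq_zero_iff _ (rename_injective _ e.injective)]
  · rwa [eval_rename] at hL

/-- A continuous family that meets an open set meets it along every dense set of parameters. -/
theorem Generic.meets {α β : Type*} [TopologicalSpace α] [TopologicalSpace β] {U : Set α} (hU : IsOpen U)
    {g : β → α} (hg : Continuous g) {b : β} (hb : g b ∈ U) {D : Set β} (hD : Dense D) : ∃ b ∈ D, g b ∈ U := by
  obtain ⟨c, hc⟩ := hD.inter_open_nonempty _ (hU.preimage hg) ⟨b, hb⟩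
  exact ⟨c, hc.2, hc.1⟩

end Generic

section Reps
open MvPolynomial

variable {ι : Type*} {n : ι → ℕ}

/-- `v` is a system of homogeneous coordinates of the point `x`. -/
def IsRep (v : (i : ι) → Fin (n i + 1) → ℂ) (x : PStack n) : Prop :=
  ∀ i, ∃ hv : v i ≠ 0, Projectivization.mk ℂ (v i) hv = x i

theorem IsRep.smul {v : (i : ι) → Fin (n i + 1) → ℂ} {x : PStack n} (h : IsRep v x) {t : ι → ℂ}
    (ht : ∀ i, t i ≠ 0) : IsRep (fun i c => t i * v i c) x := by
  intro i
  obtain ⟨hv, hx⟩ := h i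
  refine ⟨smul_ne_zero (ht i) hv, ?_⟩
  rw [← hx, Projectivization.mk_eq_mk_iff]
  exact ⟨Units.mk0 (t i) (ht i), rfl⟩

theorem IsRep.exists_smul {v v' : (i : ι) → Fin (n i + 1) → ℂ} {x : PStack n} (h : IsRep v x) (h' : IsRep v' x) :
    ∃ t : ι → ℂ, (∀ i, t i ≠ 0) ∧ v' = fun i c => t i * v i c := by
  have : ∀ i, ∃ t : ℂ, t ≠ 0 ∧ v' i = fun c => t * v i c := by
    intro i
    obtain ⟨hv, hx⟩ := h i
    obtain ⟨hv', hx'⟩ := h' i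
    rw [← hx, Projectivization.mk_eq_mk_iff] at hx'
    obtain ⟨t, ht⟩ := hx'
    exact ⟨t, t.ne_zero, ht.symm⟩
  choose t ht hv using this
  exact ⟨t, ht, funext hv⟩

theorem IsRep.eq {v : (i : ι) → Fin (n i + 1) → ℂ} {x x' : PStack n} (h : IsRep v x) (h' : IsRep v x') : x = x' := by
  funext i
  obtain ⟨hv, hx⟩ := h i
  obtain ⟨hv', hx'⟩ := h' i
  rw [← hx, ← hx']

theorem exists_isRep (x : PStack n) : ∃ v, IsRep v x :=
  ⟨fun i => (x i).rep, fun i => ⟨(x i).rep_nonzero, (x i).mk_rep⟩⟩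

theorem exists_of_rep (v : (i : ι) → Fin (n i + 1) → ℂ) (hv : ∀ i, v i ≠ 0) : ∃ x, IsRep v x :=
  ⟨fun i => Projectivization.mk ℂ (v i) (hv i), fun i => ⟨hv i, rfl⟩⟩

theorem IsRep.normalize {v : (i : ι) → Fin (n i + 1) → ℂ} {x : PStack n} (h : IsRep v x)
    {b : ∀ i, Fin (n i + 1)} (hb : ∀ i, v i (b i) ≠ 0) : ∃ v', IsRep v' x ∧ ∀ i, v' i (b i) = 1 :=
  ⟨_, h.smul (t := fun i => (v i (b i))⁻¹) fun i => inv_ne_zero (hb i), fun i => inv_mul_cancel₀ (hb i)⟩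

theorem exists_chart (x : PStack n) :
    ∃ (b : ∀ i, Fin (n i + 1)) (v : (i : ι) → Fin (n i + 1) → ℂ), IsRep v x ∧ ∀ i, v i (b i) = 1 := by
  obtain ⟨v, hv⟩ := exists_isRep x
  have : ∀ i, ∃ c, v i c ≠ 0 := fun i => Function.ne_iff.1 (hv i).1
  choose b hb using this
  exact ⟨b, hv.normalize hb⟩

theorem IsRep.plin {v : (i : ι) → Fin (n i + 1) → ℂ} {x : PStack n} (h : IsRep v x) (i : ι) (c : Fin (n i + 1) → ℂ) :
    PLinVanish c (x i) ↔ ∑ a, c a * v i a = 0 := by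
  obtain ⟨hv, hx⟩ := h i
  refine ⟨fun H => H _ hv hx, fun H v' hv' hx' => ?_⟩
  rw [← hx, Projectivization.mk_eq_mk_iff] at hx'
  obtain ⟨t, ht⟩ := hx'
  rw [← ht]
  have : ∑ a, c a * (t • v i) a = (t : ℂ) * ∑ a, c a * v i a := by
    rw [Finset.mul_sum]
    refine Finset.sum_congr rfl fun a _ => ?_
    rw [Pi.smul_apply, Units.smul_def, smul_eq_mul]; ring
  rw [this, H, mul_zero]

theorem IsRep.polyVanish {v : (i : ι) → Fin (n i + 1) → ℂ} {x : PStack n} (h : IsRep v x)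
    (f : MvPolynomial ((i : ι) × Fin (n i + 1)) ℂ) :
    PolyVanish f x ↔ ∀ t : ι → ℂ, (∀ i, t i ≠ 0) → eval (fun p => t p.1 * v p.1 p.2) f = 0 := by
  refine ⟨fun H t ht => H (fun i c => t i * v i c) (h.smul ht), fun H v' hv' => ?_⟩
  obtain ⟨t, ht, rfl⟩ := h.exists_smul hv'
  exact H t ht

/-- Vanishing at a point amounts to vanishing of a polynomial on the torus of rescalings of its coordinates. -/
theorem IsRep.polyVanish' {v : (i : ι) → Fin (n i + 1) → ℂ} {x : PStack n} (h : IsRep v x)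
    (f : MvPolynomial ((i : ι) × Fin (n i + 1)) ℂ) :
    PolyVanish f x ↔ (aeval (fun p => X p.1 * C (v p.1 p.2)) f : MvPolynomial ι ℂ) = 0 := by
  have key : ∀ t : ι → ℂ, eval (fun p : (i : ι) × Fin (n i + 1) => t p.1 * v p.1 p.2) f =
      eval t (aeval (fun p => X p.1 * C (v p.1 p.2)) f : MvPolynomial ι ℂ) := by
    intro t
    rw [← coe_aeval_eq_eval, ← coe_aeval_eq_eval]
    change _ = aeval t _
    rw [← AlgHom.comp_apply, comp_aeval]
    simp
  rw [h.polyVanish]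
  refine ⟨fun H => ?_, fun H t _ => ?_⟩
  · refine funext_set (fun _ => {s : ℂ | s ≠ 0}) (fun _ => (Set.finite_singleton (0 : ℂ)).infinite_compl) fun t ht => ?_
    rw [← key, map_zero]
    exact H t fun i => ht i (Set.mem_univ i)
  · rw [key, H, map_zero]

theorem polyVanish_mul {f g : MvPolynomial ((i : ι) × Fin (n i + 1)) ℂ} {x : PStack n} :
    PolyVanish (f * g) x ↔ PolyVanish f x ∨ PolyVanish g x := by
  obtain ⟨v, hv⟩ := exists_isRep x
  rw [hv.polyVanish', hv.polyVanish', hv.polyVanish', map_mul, mul_eq_zero]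

theorem polyVanish_add {f g : MvPolynomial ((i : ι) × Fin (n i + 1)) ℂ} {x : PStack n} (hf : PolyVanish f x)
    (hg : PolyVanish g x) : PolyVanish (f + g) x := fun v hv => by
  rw [map_add, hf v hv, hg v hv, add_zero]

theorem not_polyVanish_one {x : PStack n} : ¬ PolyVanish 1 x := by
  obtain ⟨v, hv⟩ := exists_isRep x
  intro h
  simpa using h v hv

theorem IsRep.polyVanish_X {v : (i : ι) → Fin (n i + 1) → ℂ} {x : PStack n} (h : IsRep v x)
    (p : (i : ι) × Fin (n i + 1)) : PolyVanish (X p) x ↔ v p.1 p.2 = 0 := by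
  rw [h.polyVanish', aeval_X, mul_eq_zero]
  simp [X_ne_zero]

end Reps

/-! ### Algebraic sets and their components -/

section Algebraic
open MvPolynomial

variable {ι : Type*} {n : ι → ℕ}

/-- The ideal of all polynomials vanishing on a subset of multiprojective space. -/
def vanIdeal (X : Set (PStack n)) : Ideal (MvPolynomial ((i : ι) × Fin (n i + 1)) ℂ) where
  carrier := {f | ∀ x ∈ X, PolyVanish f x}
  add_mem' := fun ha hb x hx => polyVanish_add (ha x hx) (hb x hx)
  zero_mem' := fun _ _ _ _ => map_zero _
  smul_mem' := fun _ _ hf x hx => polyVanish_mul.2 (Or.inr (hf x hx))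

theorem mem_vanIdeal {X : Set (PStack n)} {f} : f ∈ vanIdeal X ↔ ∀ x ∈ X, PolyVanish f x := Iff.rfl

theorem MultiProj.IsAlgebraicSet.eq_zeros {X : Set (PStack n)} (hX : IsAlgebraicSet X) :
    X = {x | ∀ f ∈ vanIdeal X, PolyVanish f x} := by
  obtain ⟨F, hF⟩ := hX
  apply Set.Subset.antisymm
  · intro x hx f hf
    exact hf x hx
  · intro x hx
    rw [hF]
    intro f hf
    refine hx f fun y hy => ?_
    rw [hF] at hy
    exact hy f hf

theorem exists_of_notMem {X : Set (PStack n)} (hX : IsAlgebraicSet X) {x : PStack n} (hx : x ∉ X) :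
    ∃ f, (∀ y ∈ X, PolyVanish f y) ∧ ¬ PolyVanish f x := by
  by_contra! h
  apply hx
  rw [hX.eq_zeros]
  exact fun f hf => h f hf

theorem isAlgebraicSet_single (f : MvPolynomial ((i : ι) × Fin (n i + 1)) ℂ) :
    IsAlgebraicSet {x : PStack n | PolyVanish f x} :=
  ⟨{f}, by simp⟩

theorem MultiProj.IsAlgebraicSet.inter {X Y : Set (PStack n)} (hX : IsAlgebraicSet X) (hY : IsAlgebraicSet Y) :
    IsAlgebraicSet (X ∩ Y) := by
  obtain ⟨F, rfl⟩ := hX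
  obtain ⟨G, rfl⟩ := hY
  refine ⟨F ∪ G, ?_⟩
  ext x
  constructor
  · rintro ⟨h1, h2⟩ f (hf | hf)
    · exact h1 f hf
    · exact h2 f hf
  · exact fun h => ⟨fun f hf => h f (Or.inl hf), fun f hf => h f (Or.inr hf)⟩

theorem isAlgebraicSet_empty : IsAlgebraicSet (∅ : Set (PStack n)) := by
  refine ⟨{1}, ?_⟩
  ext x
  simp [not_polyVanish_one]

theorem isAlgebraicSet_plin (i : ι) (c : Fin (n i + 1) → ℂ) :
    IsAlgebraicSet {x : PStack n | PLinVanish c (x i)} := by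
  have : {x : PStack n | PLinVanish c (x i)} =
      {x | PolyVanish (∑ a, C (c a) * X ⟨i, a⟩ : MvPolynomial ((i : ι) × Fin (n i + 1)) ℂ) x} := by
    ext x
    obtain ⟨v, hv⟩ := exists_isRep x
    have he : ∀ t : ι → ℂ, eval (fun p : (i : ι) × Fin (n i + 1) => t p.1 * v p.1 p.2)
        (∑ a, C (c a) * X ⟨i, a⟩ : MvPolynomial ((i : ι) × Fin (n i + 1)) ℂ) = t i * ∑ a, c a * v i a := by
      intro t
      rw [map_sum, Finset.mul_sum]
      refine Finset.sum_congr rfl fun a _ => ?_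
      simp; ring
    simp only [Set.mem_ofPred_eq, hv.plin, hv.polyVanish, he]
    constructor
    · intro h t _
      rw [h, mul_zero]
    · intro h
      simpa using h (fun _ => 1) fun _ => one_ne_zero
  rw [this]
  exact isAlgebraicSet_single _

theorem vanIdeal_lt {X Y : Set (PStack n)} (hX : IsAlgebraicSet X) (hY : IsAlgebraicSet Y) (h : Y ⊆ X) (h' : ¬ X ⊆ Y) :
    vanIdeal X < vanIdeal Y := by
  refine lt_of_le_of_ne (fun f hf x hx => hf x (h hx)) fun e => h' ?_
  rw [hX.eq_zeros, hY.eq_zeros, e]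

/-- An algebraic set is a finite union of irreducible ones. -/
theorem exists_irred_cover [Finite ι] {X : Set (PStack n)} (hX : IsAlgebraicSet X) :
    ∃ S : Set (Set (PStack n)), S.Finite ∧ (∀ Y ∈ S, IsIrredVariety Y) ∧ ⋃₀ S = X := by
  generalize hI : vanIdeal X = I
  induction I using (IsNoetherian.wf (inferInstance : IsNoetherian (MvPolynomial ((i : ι) × Fin (n i + 1)) ℂ)
    (MvPolynomial ((i : ι) × Fin (n i + 1)) ℂ))).induction generalizing X with
  | h I ih =>
  subst hI
  by_cases hi : IsIrredVariety X
  · exact ⟨{X}, Set.finite_singleton X, by simpa using hi, by simp⟩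
  by_cases hne : X.Nonempty
  · have : ∃ A B : Set (PStack n), IsAlgebraicSet A ∧ IsAlgebraicSet B ∧ X ⊆ A ∪ B ∧ ¬ X ⊆ A ∧ ¬ X ⊆ B := by
      by_contra! h
      refine hi ⟨hX, hne, fun A B hA hB hAB => ?_⟩
      by_cases hXA : X ⊆ A
      · exact Or.inl hXA
      · exact Or.inr (h A B hA hB hAB hXA)
    obtain ⟨A, B, hA, hB, hAB, hXA, hXB⟩ := this
    obtain ⟨S, hSf, hS, hSX⟩ := ih _ (vanIdeal_lt hX (hX.inter hA) Set.inter_subset_left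
      (fun h => hXA fun x hx => (h hx).2)) (hX.inter hA) rfl
    obtain ⟨T, hTf, hT, hTX⟩ := ih _ (vanIdeal_lt hX (hX.inter hB) Set.inter_subset_left
      (fun h => hXB fun x hx => (h hx).2)) (hX.inter hB) rfl
    refine ⟨S ∪ T, hSf.union hTf, ?_, ?_⟩
    · rintro Y (h | h)
      · exact hS Y h
      · exact hT Y h
    · rw [Set.sUnion_union, hSX, hTX, ← Set.inter_union_distrib_left]
      exact Set.inter_eq_left.2 hAB
  · refine ⟨∅, Set.finite_empty, by simp, ?_⟩
    rw [Set.sUnion_empty, Set.not_nonempty_iff_eq_empty.1 hne]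

theorem MultiProj.IsIrredVariety.subset_of_sUnion {Y : Set (PStack n)} (hY : IsIrredVariety Y) {S : Set (Set (PStack n))}
    (hS : S.Finite) (hSa : ∀ Z ∈ S, IsAlgebraicSet Z) (hYS : Y ⊆ ⋃₀ S) : ∃ Z ∈ S, Y ⊆ Z := by
  by_contra! h
  have : ∀ Z : S, ∃ f, (∀ y ∈ Z.1, PolyVanish f y) ∧ ∃ x ∈ Y, ¬ PolyVanish f x := by
    intro Z
    obtain ⟨x, hx, hxZ⟩ := Set.not_subset.1 (h Z Z.2)
    obtain ⟨f, hf, hfx⟩ := exists_of_notMem (hSa Z Z.2) hxZ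
    exact ⟨f, hf, x, hx, hfx⟩
  choose f hf x hx hfx using this
  have := hS.fintype
  have key : ∀ T : Finset S, ¬ ∀ y ∈ Y, PolyVanish (∏ Z ∈ T, f Z) y := by
    classical
    intro T
    induction T using Finset.induction_on with
    | empty =>
      intro h1
      obtain ⟨y, hy⟩ := hY.2.1
      exact not_polyVanish_one (by simpa using h1 y hy)
    | insert a T ha ih =>
      intro h1
      rw [Finset.prod_insert ha] at h1
      rcases hY.2.2 _ _ (isAlgebraicSet_single (f a)) (isAlgebraicSet_single (∏ Z ∈ T, f Z))
        (fun y hy => polyVanish_mul.1 (h1 y hy)) with h2 | h2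
      · exact hfx a (h2 (hx a))
      · exact ih fun y hy => h2 hy
  refine key Finset.univ fun y hy => ?_
  obtain ⟨Z, hZ, hyZ⟩ := hYS hy
  rw [← Finset.mul_prod_erase Finset.univ f (Finset.mem_univ ⟨Z, hZ⟩)]
  exact polyVanish_mul.2 (Or.inl (hf ⟨Z, hZ⟩ y hyZ))

/-- The finitely many irreducible components cover an algebraic set. -/
theorem exists_components [Finite ι] {X : Set (PStack n)} (hX : IsAlgebraicSet X) :
    ∃ S : Set (Set (PStack n)), S.Finite ∧ (∀ Y ∈ S, IsComponentOf Y X) ∧ ⋃₀ S = X := by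
  obtain ⟨S, hSf, hS, hSX⟩ := exists_irred_cover hX
  refine ⟨{Y | Maximal (· ∈ S) Y}, hSf.subset fun Y hY => hY.prop, fun Y hY => ⟨hS Y hY.prop, ?_, ?_⟩, ?_⟩
  · rw [← hSX]; exact Set.subset_sUnion_of_mem hY.prop
  · intro Y' hY' hYY' hY'X
    rw [← hSX] at hY'X
    obtain ⟨Z, hZ, hYZ⟩ := hY'.subset_of_sUnion hSf (fun Z hZ => (hS Z hZ).1) hY'X
    exact Set.Subset.antisymm (hYZ.trans (hY.le_of_ge hZ (hYY'.trans hYZ))) hYY'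
  · apply Set.Subset.antisymm
    · rw [← hSX]; exact Set.sUnion_subset_sUnion fun Y hY => hY.prop
    · intro x hx
      rw [← hSX] at hx
      obtain ⟨Z, hZ, hxZ⟩ := hx
      obtain ⟨Y, hZY, hY⟩ := hSf.exists_le_maximal hZ
      exact ⟨Y, hY, hZY hxZ⟩

end Algebraic

/-! ### Generic points and affine charts -/

section GenericPoint
open MvPolynomial
universe u v
variable {ι : Type u} {n : ι → ℕ}

/-- A generic point of `Y`: homogeneous coordinates over an extension field of `ℂ` satisfying exactly the
polynomial equations that hold on `Y`. -/
def IsGenericPt {K : Type v} [Field K] [Algebra ℂ K] (Y : Set (PStack n)) (η : (i : ι) → Fin (n i + 1) → K) : Prop :=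
  ∀ f : MvPolynomial ((i : ι) × Fin (n i + 1)) ℂ, aeval (fun p => η p.1 p.2) f = 0 ↔ ∀ x ∈ Y, PolyVanish f x

/-- The generic point has coordinates in the fraction field of the multihomogeneous coordinate ring. -/
theorem exists_isGenericPt {Y : Set (PStack n)} (hY : IsIrredVariety Y) :
    ∃ (K : Type u) (_ : Field K) (_ : Algebra ℂ K) (η : (i : ι) → Fin (n i + 1) → K), IsGenericPt Y η := by
  have hp : (vanIdeal Y).IsPrime := by
    constructor
    · intro h
      obtain ⟨x, hx⟩ := hY.2.1
      exact not_polyVanish_one (((Ideal.eq_top_iff_one _).1 h : (1 : MvPolynomial _ ℂ) ∈ vanIdeal Y) x hx)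
    · intro f g hfg
      exact hY.2.2 _ _ (isAlgebraicSet_single f) (isAlgebraicSet_single g)
        (fun y hy => polyVanish_mul.1 (hfg y hy))
  let A := MvPolynomial ((i : ι) × Fin (n i + 1)) ℂ ⧸ vanIdeal Y
  refine ⟨FractionRing A, inferInstance, inferInstance,
    fun i c => algebraMap A _ (Ideal.Quotient.mkₐ ℂ _ (X ⟨i, c⟩)), fun f => ?_⟩
  have : (aeval (fun p : (i : ι) × Fin (n i + 1) => algebraMap A (FractionRing A) (Ideal.Quotient.mkₐ ℂ _ (X p))) f) =
      algebraMap A (FractionRing A) (Ideal.Quotient.mkₐ ℂ (vanIdeal Y) f) := by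
    have : (aeval (fun p : (i : ι) × Fin (n i + 1) => algebraMap A (FractionRing A) (Ideal.Quotient.mkₐ ℂ _ (X p)))) =
        (IsScalarTower.toAlgHom ℂ A (FractionRing A)).comp (Ideal.Quotient.mkₐ ℂ (vanIdeal Y)) := by
      apply MvPolynomial.algHom_ext
      intro p
      rw [aeval_X]; rfl
    rw [this]; rfl
  rw [this, map_eq_zero_iff _ (IsFractionRing.injective A (FractionRing A))]
  exact Ideal.Quotient.eq_zero_iff_mem

section
variable {K : Type v} [Field K] [Algebra ℂ K]

/-- A relation that holds under all nonzero complex rescalings of the factors holds under all rescalings in `K`. -/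
theorem torus_ext (w : (i : ι) → Fin (n i + 1) → K) (f : MvPolynomial ((i : ι) × Fin (n i + 1)) ℂ)
    (h : ∀ t : ι → ℂ, (∀ i, t i ≠ 0) → aeval (fun p => algebraMap ℂ K (t p.1) * w p.1 p.2) f = 0) (t : ι → K) :
    aeval (fun p => t p.1 * w p.1 p.2) f = 0 := by
  have key : ∀ t : ι → K, aeval (fun p : (i : ι) × Fin (n i + 1) => t p.1 * w p.1 p.2) f =
      eval t (aeval (fun p => X p.1 * C (w p.1 p.2)) f : MvPolynomial ι K) := by
    intro t
    rw [← coe_aeval_eq_eval]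
    change _ = ((aeval t : MvPolynomial ι K →ₐ[K] K).restrictScalars ℂ) _
    rw [← AlgHom.comp_apply, comp_aeval]
    simp
  rw [key]
  have h0 : (aeval (fun p => X p.1 * C (w p.1 p.2)) f : MvPolynomial ι K) = 0 := by
    refine funext_set (fun _ => algebraMap ℂ K '' {s : ℂ | s ≠ 0}) (fun _ =>
      ((Set.finite_singleton (0 : ℂ)).infinite_compl).image (algebraMap ℂ K).injective.injOn) fun s hs => ?_
    rw [map_zero, ← key]
    choose t ht hts using fun i => hs i (Set.mem_univ i)
    rw [← h t ht]
    simp only [hts]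
  rw [h0, map_zero]

variable {Y : Set (PStack n)} {η : (i : ι) → Fin (n i + 1) → K}

/-- A polynomial vanishing at the generic point also vanishes at all its rescalings. -/
theorem IsGenericPt.torus (hη : IsGenericPt Y η) {f : MvPolynomial ((i : ι) × Fin (n i + 1)) ℂ}
    (hf : ∀ x ∈ Y, PolyVanish f x) (t : ι → K) : aeval (fun p => t p.1 * η p.1 p.2) f = 0 := by
  refine torus_ext η f (fun t ht => ?_) t
  let ft : MvPolynomial ((i : ι) × Fin (n i + 1)) ℂ := aeval (fun p => C (t p.1) * X p) f
  have h1 : aeval (fun p => η p.1 p.2) ft = 0 := by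
    rw [hη]
    intro x hx v hv
    have : eval (fun p : (i : ι) × Fin (n i + 1) => v p.1 p.2) ft = eval (fun p => t p.1 * v p.1 p.2) f := by
      rw [← coe_aeval_eq_eval, ← coe_aeval_eq_eval]
      change aeval _ (aeval _ f) = aeval _ f
      rw [← AlgHom.comp_apply, comp_aeval]
      simp
    rw [this]
    exact ((show IsRep v x from hv).polyVanish f).1 (hf x hx) t ht
  rw [← h1, ← AlgHom.comp_apply, comp_aeval]
  simp [← MvPolynomial.algebraMap_eq]

/-- A chart containing a point of `Y` also contains the generic point. -/
theorem IsGenericPt.live (hη : IsGenericPt Y η) {x : PStack n} (hx : x ∈ Y) {v : (i : ι) → Fin (n i + 1) → ℂ}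
    (hv : IsRep v x) {b : ∀ i, Fin (n i + 1)} (hb : ∀ i, v i (b i) ≠ 0) (i : ι) : η i (b i) ≠ 0 := by
  intro h
  refine hb i ?_
  have h1 : aeval (fun p : (i : ι) × Fin (n i + 1) => η p.1 p.2) (X ⟨i, b i⟩ : MvPolynomial _ ℂ) = 0 := by
    rw [aeval_X]; exact h
  exact (hv.polyVanish_X ⟨i, b i⟩).1 ((hη _).1 h1 x hx)

/-- Affine coordinates of a point in the chart where the coordinates indexed by `b` do not vanish. -/
def affCoord (η : (i : ι) → Fin (n i + 1) → K) (b : ∀ i, Fin (n i + 1)) (i : ι) (c : Fin (n i + 1)) : K :=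
  η i c / η i (b i)

/-- The coordinate ring of an affine chart, generated by the affine coordinates of the generic point. -/
abbrev ChartRing (η : (i : ι) → Fin (n i + 1) → K) (b : ∀ i, Fin (n i + 1)) : Subalgebra ℂ K :=
  Algebra.adjoin ℂ (Set.range fun p : (i : ι) × Fin (n i + 1) => affCoord η b p.1 p.2)

/-- The affine coordinates as elements of the chart ring. -/
def chartCoord (η : (i : ι) → Fin (n i + 1) → K) (b : ∀ i, Fin (n i + 1)) (i : ι) (c : Fin (n i + 1)) :
    ChartRing η b :=
  ⟨affCoord η b i c, Algebra.subset_adjoin ⟨⟨i, c⟩, rfl⟩⟩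

theorem affCoord_self {b : ∀ i, Fin (n i + 1)} (hb : ∀ i, η i (b i) ≠ 0) (i : ι) : affCoord η b i (b i) = 1 :=
  div_self (hb i)

theorem chartCoord_self {b : ∀ i, Fin (n i + 1)} (hb : ∀ i, η i (b i) ≠ 0) (i : ι) : chartCoord η b i (b i) = 1 :=
  Subtype.ext (affCoord_self hb i)

theorem aeval_chartCoord (b : ∀ i, Fin (n i + 1)) (t : ι → ℂ) (f : MvPolynomial ((i : ι) × Fin (n i + 1)) ℂ) :
    ((aeval (fun p => algebraMap ℂ _ (t p.1) * chartCoord η b p.1 p.2) f : ChartRing η b) : K) =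
      aeval (fun p => algebraMap ℂ K (t p.1) * affCoord η b p.1 p.2) f := by
  change (ChartRing η b).val _ = _
  rw [← AlgHom.comp_apply, comp_aeval]
  rfl

theorem point_eval (b : ∀ i, Fin (n i + 1)) (ρ : ChartRing η b →ₐ[ℂ] ℂ) (t : ι → ℂ)
    (f : MvPolynomial ((i : ι) × Fin (n i + 1)) ℂ) :
    ρ (aeval (fun p => algebraMap ℂ _ (t p.1) * chartCoord η b p.1 p.2) f) =
      eval (fun p => t p.1 * ρ (chartCoord η b p.1 p.2)) f := by
  rw [← coe_aeval_eq_eval]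
  change _ = aeval _ f
  rw [← AlgHom.comp_apply, comp_aeval]
  simp

/-- A `ℂ`-point of the chart ring defines a point of the variety. -/
theorem IsGenericPt.exists_point (hη : IsGenericPt Y η) (hY : IsAlgebraicSet Y) {b : ∀ i, Fin (n i + 1)}
    (hb : ∀ i, η i (b i) ≠ 0) (ρ : ChartRing η b →ₐ[ℂ] ℂ) :
    ∃ x ∈ Y, IsRep (fun i c => ρ (chartCoord η b i c)) x := by
  obtain ⟨x, hx⟩ := exists_of_rep (fun i c => ρ (chartCoord η b i c)) (fun i h => by
    have := congrFun h (b i)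
    simp [chartCoord_self hb] at this)
  refine ⟨x, ?_, hx⟩
  rw [hY.eq_zeros]
  intro f hf
  rw [hx.polyVanish]
  intro t ht
  rw [← point_eval, ← map_zero ρ]
  congr 1
  apply Subtype.ext
  rw [aeval_chartCoord]
  have := hη.torus hf (fun i => algebraMap ℂ K (t i) / η i (b i))
  rw [ZeroMemClass.coe_zero, ← this]
  congr 2
  ext p
  rw [affCoord]; ring

end

/-- Multihomogenisation of the dehomogenisation of `f` in the chart `b`, with a common degree `N` in all factors. -/
theorem homogenize_aux [Fintype ι] [DecidableEq ι] (b : ∀ i, Fin (n i + 1)) (f : MvPolynomial ((i : ι) × Fin (n i + 1)) ℂ) :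
    ∃ (N : ℕ) (g : MvPolynomial ((i : ι) × Fin (n i + 1)) ℂ),
      (aeval (fun p => X (Sum.inl p.1) * if p.2 = b p.1 then 1 else X (Sum.inr p)) g :
        MvPolynomial (ι ⊕ ((i : ι) × Fin (n i + 1))) ℂ) =
      (∏ j, X (Sum.inl j)) ^ N * aeval (fun p => if p.2 = b p.1 then 1 else X (Sum.inr p)) f := by
  induction f using MvPolynomial.induction_on with
  | C a =>
    refine ⟨0, C a, ?_⟩
    rw [pow_zero, one_mul, ← MvPolynomial.algebraMap_eq, AlgHom.commutes, AlgHom.commutes]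
  | add f f' h h' =>
    obtain ⟨N, g, hg⟩ := h
    obtain ⟨N', g', hg'⟩ := h'
    refine ⟨N + N', (∏ j, X ⟨j, b j⟩) ^ N' * g + (∏ j, X ⟨j, b j⟩) ^ N * g', ?_⟩
    simp only [map_add, map_mul, map_pow, map_prod, aeval_X, hg, hg', if_true, mul_one]
    ring
  | mul_X f p h =>
    obtain ⟨N, g, hg⟩ := h
    refine ⟨N + 1, g * (X p * ∏ j ∈ Finset.univ.erase p.1, X ⟨j, b j⟩), ?_⟩
    simp only [map_mul, map_prod, aeval_X, hg, if_true, mul_one]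
    rw [pow_succ, ← Finset.mul_prod_erase Finset.univ _ (Finset.mem_univ p.1)]
    ring

/-- A multihomogenisation takes at a point of the chart `b` the value of `f` at its affine coordinates, up to the
factor `(∏ η_{j, b j}) ^ N`. -/
theorem homogenize_spec [Fintype ι] {b : ∀ i, Fin (n i + 1)} {f g : MvPolynomial ((i : ι) × Fin (n i + 1)) ℂ} {N : ℕ}
    (hg : (aeval (fun p => X (Sum.inl p.1) * if p.2 = b p.1 then 1 else X (Sum.inr p)) g :
        MvPolynomial (ι ⊕ ((i : ι) × Fin (n i + 1))) ℂ) =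
      (∏ j, X (Sum.inl j)) ^ N * aeval (fun p => if p.2 = b p.1 then 1 else X (Sum.inr p)) f)
    {K : Type v} [Field K] [Algebra ℂ K] {η : (i : ι) → Fin (n i + 1) → K} (hb : ∀ i, η i (b i) ≠ 0) :
    aeval (fun p => η p.1 p.2) g = (∏ j, η j (b j)) ^ N * aeval (fun p => affCoord η b p.1 p.2) f := by
  have h := congrArg (aeval (Sum.elim (fun j => η j (b j)) (fun p => affCoord η b p.1 p.2)) :
    MvPolynomial (ι ⊕ ((i : ι) × Fin (n i + 1))) ℂ →ₐ[ℂ] K) hg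
  rw [map_mul, map_pow, map_prod, ← AlgHom.comp_apply, ← AlgHom.comp_apply, comp_aeval, comp_aeval] at h
  have e1 : (fun p : (i : ι) × Fin (n i + 1) => η p.1 p.2) = fun p =>
      (aeval (Sum.elim (fun j => η j (b j)) (fun p => affCoord η b p.1 p.2)) :
        MvPolynomial (ι ⊕ ((i : ι) × Fin (n i + 1))) ℂ →ₐ[ℂ] K)
        (X (Sum.inl p.1) * if p.2 = b p.1 then 1 else X (Sum.inr p)) := by
    ext p
    by_cases hp : p.2 = b p.1
    · simp [hp]
    · have := hb p.1
      simp [hp, affCoord]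
      field_simp
  have e2 : (fun p : (i : ι) × Fin (n i + 1) => affCoord η b p.1 p.2) = fun p =>
      (aeval (Sum.elim (fun j => η j (b j)) (fun p => affCoord η b p.1 p.2)) :
        MvPolynomial (ι ⊕ ((i : ι) × Fin (n i + 1))) ℂ →ₐ[ℂ] K)
        (if p.2 = b p.1 then 1 else X (Sum.inr p)) := by
    ext p
    by_cases hp : p.2 = b p.1
    · simp [hp, affCoord_self hb]
    · simp [hp]
  rw [← e1, ← e2] at h
  simpa only [aeval_X, Sum.elim_inl] using h

/-- Every point of the variety in a chart is a `ℂ`-point of the chart ring. -/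
theorem IsGenericPt.exists_chart_point [Fintype ι] [DecidableEq ι] {K : Type v} [Field K] [Algebra ℂ K] {Y : Set (PStack n)}
    {η : (i : ι) → Fin (n i + 1) → K} (hη : IsGenericPt Y η) {b : ∀ i, Fin (n i + 1)} (hb : ∀ i, η i (b i) ≠ 0)
    {x : PStack n} (hx : x ∈ Y) {v : (i : ι) → Fin (n i + 1) → ℂ} (hv : IsRep v x) (hvb : ∀ i, v i (b i) = 1) :
    ∃ ρ : ChartRing η b →ₐ[ℂ] ℂ, ∀ i c, ρ (chartCoord η b i c) = v i c := by
  have key : ∀ f : MvPolynomial ((i : ι) × Fin (n i + 1)) ℂ, aeval (fun p => affCoord η b p.1 p.2) f = 0 →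
      aeval (fun p => v p.1 p.2) f = 0 := by
    intro f hf
    obtain ⟨N, g, hg⟩ := homogenize_aux b f
    have h1 := homogenize_spec hg hb
    rw [hf, mul_zero] at h1
    have h2 := (hη g).1 h1 x hx v hv
    have h3 := homogenize_spec hg (K := ℂ) (η := v) (fun i => by rw [hvb]; exact one_ne_zero)
    have h4 : affCoord v b = v := by
      ext i c
      rw [affCoord, hvb, div_one]
    rw [h4] at h3
    simp only [hvb, Finset.prod_const_one, one_pow, one_mul] at h3
    rw [← h3]
    exact h2
  let φ : MvPolynomial ((i : ι) × Fin (n i + 1)) ℂ →ₐ[ℂ] ChartRing η b := aeval fun p => chartCoord η b p.1 p.2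
  have hφ : ∀ f, ((φ f : ChartRing η b) : K) = aeval (fun p => affCoord η b p.1 p.2) f := by
    intro f
    change (ChartRing η b).val _ = _
    rw [← AlgHom.comp_apply, comp_aeval]
    rfl
  have hs : Function.Surjective φ := by
    rintro ⟨r, hr⟩
    have hr' := hr
    rw [ChartRing, Algebra.adjoin_range_eq_range_aeval] at hr'
    obtain ⟨f, hf⟩ := hr'
    exact ⟨f, Subtype.ext ((hφ f).trans hf)⟩
  let ψ : MvPolynomial ((i : ι) × Fin (n i + 1)) ℂ →ₐ[ℂ] ℂ := aeval fun p => v p.1 p.2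
  have hker : ∀ f, f ∈ RingHom.ker φ → ψ f = 0 := by
    intro f hf
    apply key
    rw [← hφ, (RingHom.mem_ker).1 hf]
    rfl
  let ρ := (Ideal.Quotient.liftₐ (RingHom.ker φ) ψ hker).comp
    (Ideal.quotientKerAlgEquivOfSurjective hs).symm.toAlgHom
  refine ⟨ρ, fun i c => ?_⟩
  have h1 : φ (X ⟨i, c⟩) = chartCoord η b i c := aeval_X _ _
  have h2 : (Ideal.quotientKerAlgEquivOfSurjective hs).symm (chartCoord η b i c) = Ideal.Quotient.mk _ (X ⟨i, c⟩) := by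
    rw [AlgEquiv.symm_apply_eq, ← h1]
    rfl
  change (Ideal.Quotient.liftₐ (RingHom.ker φ) ψ hker) ((Ideal.quotientKerAlgEquivOfSurjective hs).symm _) = _
  rw [h2]
  change ψ (X ⟨i, c⟩) = _
  exact aeval_X _ _
end GenericPoint

/-! ### General slices avoiding a proper closed subset -/

section SlicePoints
open MvPolynomial
universe u v

/-- A general system of forms vanishes at some `ℂ`-point where a given nonzero function does not vanish. -/
theorem exists_incident_point_ne {R : Type v} [CommRing R] [IsDomain R] [Algebra ℂ R] [Algebra.FiniteType ℂ R]
    {J : Type*} [Finite J] {Cn : J → Type*} [∀ s, Fintype (Cn s)] [∀ s, DecidableEq (Cn s)]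
    {b : ∀ s, Cn s} {y : ∀ s, Cn s → R} (hy : ∀ s, y s (b s) = 1)
    (hAI : AlgebraicIndependent ℂ (incForm b y)) {g : R} (hg : g ≠ 0) :
    ∃ q : MvPolynomial (Σ s, Cn s) ℂ, q ≠ 0 ∧ ∀ L : (Σ s, Cn s) → ℂ, eval L q ≠ 0 →
      ∃ ρ : R →ₐ[ℂ] ℂ, ρ g ≠ 0 ∧ ∀ s, ∑ c, L ⟨s, c⟩ * ρ (y s c) = 0 := by
  let R' := Localization.Away g
  have hle : Submonoid.powers g ≤ nonZeroDivisors R := powers_le_nonZeroDivisors_of_noZeroDivisors hg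
  have : IsDomain R' := IsLocalization.isDomain_localization hle
  have : Algebra.FiniteType R R' := IsLocalization.finiteType_of_monoid_fg (Submonoid.powers g) R'
  have : Algebra.FiniteType ℂ R' := Algebra.FiniteType.trans (‹_› : Algebra.FiniteType ℂ R) this
  have hinj : Function.Injective (algebraMap R R') := IsLocalization.injective R' hle
  have hAI' : AlgebraicIndependent ℂ (incForm b (fun s c => algebraMap R R' (y s c))) := by
    have h1 := hAI.map' (f := mapAlgHom (IsScalarTower.toAlgHom ℂ R R')) (map_injective _ hinj)
    convert h1 using 1
    ext1 p
    exact (map_incForm (algebraMap R R') b y p).symm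
  obtain ⟨q, hq, h⟩ := exists_incident_point (fun s => by rw [hy, map_one]) hAI'
  refine ⟨q, hq, fun L hL => ?_⟩
  obtain ⟨ρ, hρ⟩ := h L hL
  refine ⟨ρ.comp (IsScalarTower.toAlgHom ℂ R R'), ?_, hρ⟩
  exact ((IsLocalization.Away.algebraMap_isUnit g).map ρ).ne_zero

variable {ι : Type u} {n : ι → ℕ} {K : Type v} [Field K] [Algebra ℂ K] {Y : Set (PStack n)}
  {η : (i : ι) → Fin (n i + 1) → K}

theorem chartRing_finiteType [Finite ι] (b : ∀ i, Fin (n i + 1)) : Algebra.FiniteType ℂ (ChartRing η b) :=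
  (Subalgebra.fg_iff_finiteType _).1 (⟨(Set.finite_range _).toFinset, by rw [Set.Finite.coe_toFinset]⟩)

/-- A polynomial not vanishing identically on the variety yields, after rescaling, a nonzero chart function. -/
theorem IsGenericPt.exists_torus (hη : IsGenericPt Y η) {b : ∀ i, Fin (n i + 1)} (hb : ∀ i, η i (b i) ≠ 0)
    {f : MvPolynomial ((i : ι) × Fin (n i + 1)) ℂ} (hf : ¬ ∀ x ∈ Y, PolyVanish f x) :
    ∃ t : ι → ℂ, (∀ i, t i ≠ 0) ∧
      (aeval (fun p => algebraMap ℂ _ (t p.1) * chartCoord η b p.1 p.2) f : ChartRing η b) ≠ 0 := by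
  by_contra! h
  apply hf
  rw [← hη]
  have := torus_ext (affCoord η b) f (fun t ht => by
    rw [← aeval_chartCoord, h t ht]; rfl) (fun i => η i (b i))
  rw [← this]
  congr 2
  ext p
  have := hb p.1
  rw [affCoord]; field_simp

/-- General forms, the `s`-th one in the factor `κ s`, have a common zero on `Y` outside a given proper closed subset, as
soon as the coefficients of the generic such forms through the generic point are independent. -/
theorem IsGenericPt.exists_slice_point [Finite ι] (hη : IsGenericPt Y η) (hY : IsAlgebraicSet Y)
    {b : ∀ i, Fin (n i + 1)} (hb : ∀ i, η i (b i) ≠ 0) {J : Type*} [Finite J] (κ : J → ι)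
    (hAI : AlgebraicIndependent ℂ (incForm (Cn := fun s => Fin (n (κ s) + 1)) (fun s => b (κ s))
      (fun s c => affCoord η b (κ s) c)))
    {A : Set (PStack n)} (hA : IsAlgebraicSet A) (hYA : ¬ Y ⊆ A) :
    ∃ q : MvPolynomial (Σ s : J, Fin (n (κ s) + 1)) ℂ, q ≠ 0 ∧ ∀ L : (Σ s : J, Fin (n (κ s) + 1)) → ℂ, eval L q ≠ 0 →
      ∃ x ∈ Y, x ∉ A ∧ ∀ s, PLinVanish (fun c => L ⟨s, c⟩) (x (κ s)) := by
  obtain ⟨x0, hx0, hx0A⟩ := Set.not_subset.1 hYA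
  obtain ⟨f, hfA, hfx0⟩ := exists_of_notMem hA hx0A
  obtain ⟨t, ht, hg⟩ := hη.exists_torus hb (f := f) (fun h => hfx0 (h x0 hx0))
  have := chartRing_finiteType (η := η) b
  obtain ⟨q, hq, h⟩ := exists_incident_point_ne (R := ChartRing η b) (Cn := fun s : J => Fin (n (κ s) + 1))
    (b := fun s => b (κ s)) (y := fun s c => chartCoord η b (κ s) c) (fun s => chartCoord_self hb _)
    (algInd_incForm_of_map (ChartRing η b).val _ _ hAI) hg
  refine ⟨q, hq, fun L hL => ?_⟩
  obtain ⟨ρ, hρg, hρ⟩ := h L hL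
  obtain ⟨x, hxY, hx⟩ := hη.exists_point hY hb ρ
  refine ⟨x, hxY, fun hxA => ?_, fun s => (hx.plin _ _).2 (hρ s)⟩
  rw [point_eval] at hρg
  exact hρg ((hx.polyVanish f).1 (hfA x hxA) t ht)

end SlicePoints

/-! ### Bertini's theorem in multiprojective space -/

section ChartChange
open MvPolynomial
universe u v

theorem isAlgebraic_of_mem_fieldAdjoin {K : Type v} [Field K] [Algebra ℂ K] {S : Set K} {x : K}
    (hx : x ∈ IntermediateField.adjoin ℂ S) : IsAlgebraic (Algebra.adjoin ℂ S) x := by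
  obtain ⟨r, hr, s, hs, rfl⟩ := IntermediateField.mem_adjoin_iff_div.1 hx
  rw [div_eq_mul_inv]
  exact (isAlgebraic_algebraMap (⟨r, hr⟩ : Algebra.adjoin ℂ S)).mul
    (isAlgebraic_algebraMap (⟨s, hs⟩ : Algebra.adjoin ℂ S)).inv

/-- Two independent elements algebraic over the field generated by a family force two independent members
of that family. -/
theorem exists_algInd_pair {K : Type v} [Field K] [Algebra ℂ K] {τ : Type*} {T : τ → K} {x : Fin 2 → K}
    (hx : AlgebraicIndependent ℂ x) (hT : ∀ j, x j ∈ IntermediateField.adjoin ℂ (Set.range T)) :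
    ∃ t1 t2, AlgebraicIndependent ℂ ![T t1, T t2] := by
  let M := AlgebraicIndependent.matroid ℂ K
  have hI : M.Indep (Set.range x) := AlgebraicIndependent.matroid_indep_iff.2 hx.to_subtype_range
  have hcl : Set.range x ⊆ M.closure (Set.range T) := by
    rintro _ ⟨j, rfl⟩
    rw [AlgebraicIndependent.matroid_closure_eq, SetLike.mem_coe, Subalgebra.mem_algebraicClosure]
    exact isAlgebraic_of_mem_fieldAdjoin (hT j)
  have h1 := hI.encard_le_eRk_of_subset hcl
  rw [Matroid.eRk_closure_eq] at h1
  obtain ⟨B, hB⟩ := M.exists_isBasis (Set.range T)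
  rw [← hB.encard_eq_eRk, ← Set.image_univ, hx.injective.encard_image, Set.encard_univ] at h1
  have h2 : 1 < B.encard := lt_of_lt_of_le (by simp) h1
  obtain ⟨y1, y2, hy1, hy2, hne⟩ := Set.one_lt_encard_iff.1 h2
  obtain ⟨t1, rfl⟩ := hB.subset hy1
  obtain ⟨t2, rfl⟩ := hB.subset hy2
  refine ⟨t1, t2, ?_⟩
  have h3 : AlgebraicIndependent ℂ (fun y : B => (y : K)) := AlgebraicIndependent.matroid_indep_iff.1 hB.indep
  have h4 := h3.comp (![⟨T t1, hy1⟩, ⟨T t2, hy2⟩] : Fin 2 → B) (by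
    intro i j hij
    fin_cases i <;> fin_cases j <;> simp_all [Subtype.ext_iff])
  convert h4 using 1
  ext j; fin_cases j <;> rfl

variable {ι : Type u} {n : ι → ℕ} {K : Type v} [Field K] [Algebra ℂ K] {Y : Set (PStack n)}
  {η : (i : ι) → Fin (n i + 1) → K}

theorem affCoord_mem {b d : ∀ i, Fin (n i + 1)} {i : ι} (hb : η i (b i) ≠ 0) (c : Fin (n i + 1)) :
    affCoord η d i c ∈ IntermediateField.adjoin ℂ (Set.range (affCoord η b i)) := by
  have : affCoord η d i c = affCoord η b i c / affCoord η b i (d i) := by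
    rw [affCoord, affCoord, affCoord, div_div_div_cancel_right₀ hb]
  rw [this]
  exact div_mem (IntermediateField.subset_adjoin _ _ ⟨c, rfl⟩) (IntermediateField.subset_adjoin _ _ ⟨d i, rfl⟩)

/-- If the `i`-th coordinates are not all constant, a general hyperplane in the `i`-th factor meets the variety
outside any given proper algebraic subset. -/
theorem IsGenericPt.exists_slice_point_one [Finite ι] (hη : IsGenericPt Y η) (hY : IsAlgebraicSet Y)
    {b : ∀ i, Fin (n i + 1)} (hb : ∀ i, η i (b i) ≠ 0) {i : ι} {c0 : Fin (n i + 1)}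
    (hc0 : Transcendental ℂ (affCoord η b i c0))
    {A : Set (PStack n)} (hA : IsAlgebraicSet A) (hYA : ¬ Y ⊆ A) :
    ∃ q : MvPolynomial (Fin (n i + 1)) ℂ, q ≠ 0 ∧ ∀ c : Fin (n i + 1) → ℂ, eval c q ≠ 0 →
      ∃ x ∈ Y, x ∉ A ∧ PLinVanish c (x i) := by
  have hAI : AlgebraicIndependent ℂ (incForm (J := Unit) (Cn := fun _ => Fin (n i + 1)) (fun _ => b i)
      (fun _ c => affCoord η b i c)) := by
    refine algInd_incForm (fun _ => affCoord_self hb i) (fun _ => c0) ?_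
    rw [algebraicIndependent_unique_type_iff]
    exact hc0
  obtain ⟨q, hq, h⟩ := hη.exists_slice_point hY hb (J := Unit) (fun _ => i) hAI hA hYA
  refine exists_ne_zero_reindex (Equiv.uniqueSigma (fun _ : Unit => Fin (n i + 1))) ⟨q, hq, fun c hc => ?_⟩
  obtain ⟨x, hxY, hxA, hx⟩ := h _ hc
  exact ⟨x, hxY, hxA, hx ()⟩

/-- The product of the chart coordinates; its non-vanishing locus is the standard chart. -/
noncomputable def chartFun [Fintype ι] (b : ∀ i, Fin (n i + 1)) : MvPolynomial ((i : ι) × Fin (n i + 1)) ℂ :=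
  ∏ j, X ⟨j, b j⟩

theorem IsRep.polyVanish_chartFun [Fintype ι] {v : (i : ι) → Fin (n i + 1) → ℂ} {x : PStack n} (h : IsRep v x)
    (b : ∀ i, Fin (n i + 1)) : PolyVanish (chartFun b) x ↔ ∃ j, v j (b j) = 0 := by
  rw [h.polyVanish]
  constructor
  · intro h1
    have := h1 1 (by simp)
    simpa [chartFun, Finset.prod_eq_zero_iff] using this
  · rintro ⟨j, hj⟩ t ht
    rw [chartFun, map_prod, Finset.prod_eq_zero_iff]
    exact ⟨j, Finset.mem_univ _, by simp [hj]⟩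

/-- Irreducibility of a general hyperplane section inside one chart. -/
theorem IsGenericPt.chart_bertini [Fintype ι] [DecidableEq ι] (hη : IsGenericPt Y η) (hY : IsAlgebraicSet Y)
    {b : ∀ i, Fin (n i + 1)} (hb : ∀ i, η i (b i) ≠ 0) {i : ι} {c1 c2 : Fin (n i + 1)}
    (h12 : AlgebraicIndependent ℂ ![affCoord η b i c1, affCoord η b i c2]) :
    ∃ q : MvPolynomial (Fin (n i + 1)) ℂ, q ≠ 0 ∧ ∀ c : Fin (n i + 1) → ℂ, eval c q ≠ 0 →
      ∀ A B : Set (PStack n), IsAlgebraicSet A → IsAlgebraicSet B →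
        Y ∩ {x | PLinVanish c (x i)} ⊆ A ∪ B →
        (∀ x ∈ Y, PLinVanish c (x i) → ¬ PolyVanish (chartFun b) x → x ∈ A) ∨
        (∀ x ∈ Y, PLinVanish c (x i) → ¬ PolyVanish (chartFun b) x → x ∈ B) := by
  have := chartRing_finiteType (η := η) b
  have h12' : AlgebraicIndependent ℂ ![chartCoord η b i c1, chartCoord η b i c2] := by
    refine AlgebraicIndependent.of_comp (ChartRing η b).val ?_
    convert h12 using 1
    ext j; fin_cases j <;> rfl
  obtain ⟨q, hq, h⟩ := affine_bertini (R := ChartRing η b) (chartCoord_self hb i) h12'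
  refine ⟨q, hq, fun c hc A B hA hB hAB => ?_⟩
  obtain ⟨-, h⟩ := h c hc
  by_contra! hcon
  have key : ∀ A' : Set (PStack n), IsAlgebraicSet A' →
      (∃ x ∈ Y, PLinVanish c (x i) ∧ ¬ PolyVanish (chartFun b) x ∧ x ∉ A') →
      ∃ g : ChartRing η b, (∃ ρ : ChartRing η b →ₐ[ℂ] ℂ, ∑ a, c a * ρ (chartCoord η b i a) = 0 ∧ ρ g ≠ 0) ∧
        ∀ ρ : ChartRing η b →ₐ[ℂ] ℂ, ∀ x, IsRep (fun i c => ρ (chartCoord η b i c)) x → x ∈ A' → ρ g = 0 := by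
    rintro A' hA' ⟨x, hxY, hxc, hxb, hxA⟩
    obtain ⟨f, hf, hfx⟩ := exists_of_notMem hA' hxA
    obtain ⟨v0, hv0⟩ := exists_isRep x
    obtain ⟨v, hv, hvb⟩ := hv0.normalize (b := b) (by
      rw [hv0.polyVanish_chartFun] at hxb
      push Not at hxb
      exact hxb)
    obtain ⟨ρ, hρ⟩ := hη.exists_chart_point hb hxY hv hvb
    rw [hv.polyVanish] at hfx
    push Not at hfx
    obtain ⟨t, ht, hft⟩ := hfx
    refine ⟨aeval (fun p => algebraMap ℂ _ (t p.1) * chartCoord η b p.1 p.2) f, ⟨ρ, ?_, ?_⟩, ?_⟩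
    · simp only [hρ]
      exact (hv.plin _ _).1 hxc
    · rw [point_eval]
      simp only [hρ]
      exact hft
    · intro ρ' x' hx' hxA'
      rw [point_eval]
      exact (hx'.polyVanish f).1 (hf x' hxA') t ht
  obtain ⟨g, ⟨ρ1, hρ1, hg1⟩, hg⟩ := key A hA hcon.1
  obtain ⟨g', ⟨ρ2, hρ2, hg2⟩, hg'⟩ := key B hB hcon.2
  rcases h g g' (fun ρ hρ => by
    obtain ⟨x, hxY, hx⟩ := hη.exists_point hY hb ρ
    rw [map_mul]
    rcases hAB ⟨hxY, (hx.plin i c).2 hρ⟩ with hxA | hxB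
    · rw [hg ρ x hx hxA, zero_mul]
    · rw [hg' ρ x hx hxB, mul_zero]) with h1 | h1
  · exact hg1 (h1 ρ1 hρ1)
  · exact hg2 (h1 ρ2 hρ2)

/-- Bertini: a general hyperplane section from the `i`-th factor of an irreducible variety is irreducible
when two of the `i`-th coordinate ratios are algebraically independent. -/
theorem slice_irred [Fintype ι] [DecidableEq ι] (hη : IsGenericPt Y η) (hY : IsIrredVariety Y)
    {b : ∀ i, Fin (n i + 1)} (hb : ∀ i, η i (b i) ≠ 0) {i : ι} {c1 c2 : Fin (n i + 1)}
    (h12 : AlgebraicIndependent ℂ ![affCoord η b i c1, affCoord η b i c2]) :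
    ∃ q : MvPolynomial (Fin (n i + 1)) ℂ, q ≠ 0 ∧ ∀ c : Fin (n i + 1) → ℂ, eval c q ≠ 0 →
      IsIrredVariety (Y ∩ {x | PLinVanish c (x i)}) := by
  let D := {d : ∀ i, Fin (n i + 1) // ∀ i, η i (d i) ≠ 0}
  have hpair : ∀ d : D, ∃ a1 a2, AlgebraicIndependent ℂ ![affCoord η d.1 i a1, affCoord η d.1 i a2] := fun d =>
    exists_algInd_pair h12 (fun j => by
      fin_cases j <;> exact affCoord_mem (d.2 i) _)
  have htr : Transcendental ℂ (affCoord η b i c1) := h12.transcendental 0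
  obtain ⟨q1, hq1, h1⟩ := exists_common_ne_zero (κ := D) (fun d => by
    obtain ⟨a1, a2, h⟩ := hpair d
    exact hη.chart_bertini hY.1 d.2 h)
  -- Any two charts meet on the slice, so irreducibility inside the charts glues.
  obtain ⟨q2, hq2, h2⟩ := exists_common_ne_zero (κ := D × D) (fun d =>
    hη.exists_slice_point_one hY.1 hb htr (isAlgebraicSet_single (chartFun d.1.1 * chartFun d.2.1)) (fun h => by
      have h3 := (hη _).2 h
      rw [map_mul, chartFun, chartFun, map_prod, map_prod] at h3
      simp only [aeval_X] at h3
      exact mul_ne_zero (Finset.prod_ne_zero_iff.2 fun j _ => d.1.2 j) (Finset.prod_ne_zero_iff.2 fun j _ => d.2.2 j) h3))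
  obtain ⟨q3, hq3, h3⟩ := hη.exists_slice_point_one hY.1 hb htr isAlgebraicSet_empty (fun h => by
    obtain ⟨x, hx⟩ := hY.2.1
    exact h hx)
  refine ⟨q1 * q2 * q3, mul_ne_zero (mul_ne_zero hq1 hq2) hq3, fun c hc => ?_⟩
  rw [map_mul, map_mul] at hc
  have hc3 := right_ne_zero_of_mul hc
  have hc2 := right_ne_zero_of_mul (left_ne_zero_of_mul hc)
  have hc1 := left_ne_zero_of_mul (left_ne_zero_of_mul hc)
  refine ⟨hY.1.inter (isAlgebraicSet_plin i c), ?_, fun A B hA hB hAB => ?_⟩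
  · obtain ⟨x, hxY, -, hx⟩ := h3 c hc3
    exact ⟨x, hxY, hx⟩
  by_contra! hcon
  have live : ∀ x ∈ Y, ∃ d : D, ¬ PolyVanish (chartFun d.1) x := by
    intro x hx
    obtain ⟨d, v, hv, hvd⟩ := exists_chart x
    have hvd' : ∀ j, v j (d j) ≠ 0 := fun j => by rw [hvd]; exact one_ne_zero
    refine ⟨⟨d, hη.live hx hv hvd'⟩, ?_⟩
    rw [hv.polyVanish_chartFun]
    push Not
    exact hvd'
  obtain ⟨⟨x, ⟨hxY, hxc⟩, hxA⟩, ⟨y, ⟨hyY, hyc⟩, hyB⟩⟩ := And.imp Set.not_subset.1 Set.not_subset.1 hcon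
  obtain ⟨a, ha⟩ := live x hxY
  obtain ⟨d, hd⟩ := live y hyY
  have haB : ∀ x ∈ Y, PLinVanish c (x i) → ¬ PolyVanish (chartFun a.1) x → x ∈ B :=
    (h1 c hc1 a A B hA hB hAB).resolve_left fun h => hxA (h x hxY hxc ha)
  obtain ⟨z, hzY, hz, hzc⟩ := h2 c hc2 (a, d)
  have hz' : ¬ PolyVanish (chartFun a.1) z ∧ ¬ PolyVanish (chartFun d.1) z := by
    rw [← not_or, ← polyVanish_mul]; exact hz
  rcases h1 c hc1 d B {x | PolyVanish (chartFun a.1) x} hB (isAlgebraicSet_single _) (fun w hw => by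
    by_cases hwa : PolyVanish (chartFun a.1) w
    · exact Or.inr hwa
    · exact Or.inl (haB w hw.1 hw.2 hwa)) with h | h
  · exact hyB (h y hyY hyc hd)
  · exact hz'.1 (h z hzY hzc hz'.2)

end ChartChange

/-! ### Finiteness of general slices -/

section FiniteSlices
open MvPolynomial
universe u v

/-- The elements of a field that are algebraic over the subalgebra generated by `S`. -/
noncomputable def algHull {K : Type v} [Field K] [Algebra ℂ K] (S : Set K) : IntermediateField ℂ K where
  carrier := {x | IsAlgebraic (Algebra.adjoin ℂ S) x}
  mul_mem' := fun ha hb => IsAlgebraic.mul ha hb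
  add_mem' := fun ha hb => IsAlgebraic.add ha hb
  algebraMap_mem' := fun r => isAlgebraic_algebraMap (algebraMap ℂ (Algebra.adjoin ℂ S) r)
  inv_mem' := fun x hx => IsAlgebraic.inv hx

/-- When as many general forms are imposed on `Spec R` as its transcendence degree, each function takes only
finitely many values on the common zeros. -/
theorem finite_values_alg {K : Type v} [Field K] [Algebra ℂ K] (R : Subalgebra ℂ K)
    {J : Type*} [Finite J] {Cn : J → Type*} [∀ s, Fintype (Cn s)] [∀ s, DecidableEq (Cn s)]
    {b : ∀ s, Cn s} {y : ∀ s, Cn s → R} (hy : ∀ s, y s (b s) = 1)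
    (hAI : AlgebraicIndependent ℂ (incForm b (fun s c => (y s c : K))))
    {z : J → K} (hz : AlgebraicIndependent ℂ z)
    (hR : ∀ r ∈ R, IsAlgebraic (Algebra.adjoin ℂ (Set.range z)) r) (r : R) :
    ∃ q : MvPolynomial (Σ s, Cn s) ℂ, q ≠ 0 ∧ ∀ L : (Σ s, Cn s) → ℂ, eval L q ≠ 0 →
      {t : ℂ | ∃ ρ : R →ₐ[ℂ] ℂ, (∀ s, ∑ c, L ⟨s, c⟩ * ρ (y s c) = 0) ∧ ρ r = t}.Finite := by
  let K1 := algHull (Set.range z)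
  let z1 : J → K1 := fun s => ⟨z s, isAlgebraic_algebraMap (⟨z s, Algebra.subset_adjoin (Set.mem_range_self s)⟩ : Algebra.adjoin ℂ (Set.range z))⟩
  let f : R →ₐ[ℂ] K1 := Subalgebra.inclusion (T := K1.toSubalgebra) hR
  letI : Algebra R K1 := f.toRingHom.toAlgebra
  have : IsScalarTower ℂ R K1 := IsScalarTower.of_algebraMap_eq' f.comp_algebraMap.symm
  have hinj : Function.Injective (algebraMap R K1) := Subalgebra.inclusion_injective _
  have hz1 : AlgebraicIndependent ℂ z1 := AlgebraicIndependent.of_comp K1.val hz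
  have hb : IsTranscendenceBasis ℂ z1 := by
    refine ⟨hz1, fun s hs hzs => hzs.antisymm fun a ha => ?_⟩
    by_contra hna
    have h1 : AlgebraicIndepOn ℂ (K1.val : K1 → K) s := hs.map' (f := K1.val) K1.val.injective
    have h2 := (AlgebraicIndepOn.insert_iff hna).1 (h1.mono (Set.insert_subset ha hzs))
    apply h2.2
    have h3 : (K1.val : K1 → K) '' Set.range z1 = Set.range z := by
      rw [← Set.range_comp]; rfl
    rw [h3]
    exact a.2
  refine finite_values hinj hy ?_ hb r
  exact algInd_incForm_of_map K1.val _ _ hAI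

variable {ι : Type u} {n : ι → ℕ} {K : Type v} [Field K] [Algebra ℂ K] {Y : Set (PStack n)}
  {η : (i : ι) → Fin (n i + 1) → K}

/-- The independence of the coefficients of generic forms through the generic point does not depend on the chart. -/
theorem algInd_incForm_chart {b d : ∀ i, Fin (n i + 1)} (hb : ∀ i, η i (b i) ≠ 0) (hd : ∀ i, η i (d i) ≠ 0)
    {J : Type*} [Finite J] (κ : J → ι)
    (hAI : AlgebraicIndependent ℂ (incForm (Cn := fun s => Fin (n (κ s) + 1)) (fun s => b (κ s))
      (fun s c => affCoord η b (κ s) c))) :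
    AlgebraicIndependent ℂ (incForm (Cn := fun s => Fin (n (κ s) + 1)) (fun s => d (κ s))
      (fun s c => affCoord η d (κ s) c)) := by
  have : Infinite K := Infinite.of_injective _ (algebraMap ℂ K).injective
  rw [AlgebraicIndependent, injective_iff_map_eq_zero] at hAI ⊢
  intro q hq
  apply hAI
  rw [aeval_incForm_eq_zero_iff (fun s => affCoord_self hd _)] at hq
  rw [aeval_incForm_eq_zero_iff (fun s => affCoord_self hb _)]
  intro M hM
  apply hq M
  intro s
  have h1 := hM s
  have h2 : ∀ c, M ⟨s, c⟩ * affCoord η d (κ s) c =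
      (η (κ s) (b (κ s)) / η (κ s) (d (κ s))) * (M ⟨s, c⟩ * affCoord η b (κ s) c) := fun c => by
    have := hb (κ s)
    have := hd (κ s)
    rw [affCoord, affCoord]; field_simp
  simp only [h2]
  rw [← Finset.mul_sum, h1, mul_zero]

/-- If the coordinate ratios in the factors of `I` are algebraic over as many independent elements as there are
forms, general forms in these factors leave only finitely many possibilities for the `I`-components of
the points of the variety. -/
theorem IsGenericPt.finite_slice [Fintype ι] [DecidableEq ι] (hη : IsGenericPt Y η)
    {b : ∀ i, Fin (n i + 1)} (hb : ∀ i, η i (b i) ≠ 0) (I : Set ι) {J : Type*} [Finite J] (κ : J → ι)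
    (hκ : ∀ s, κ s ∈ I)
    (hAI : AlgebraicIndependent ℂ (incForm (Cn := fun s => Fin (n (κ s) + 1)) (fun s => b (κ s))
      (fun s c => affCoord η b (κ s) c)))
    {z : J → K} (hz : AlgebraicIndependent ℂ z) (halg : ∀ i ∈ I, ∀ c, affCoord η b i c ∈ algHull (Set.range z)) :
    ∃ q : MvPolynomial (Σ s : J, Fin (n (κ s) + 1)) ℂ, q ≠ 0 ∧ ∀ L : (Σ s : J, Fin (n (κ s) + 1)) → ℂ, eval L q ≠ 0 →
      ∃ F : Set ((i : ι) → Fin (n i + 1) → ℂ), F.Finite ∧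
        ∀ x ∈ Y, (∀ s, PLinVanish (fun c => L ⟨s, c⟩) (x (κ s))) → ∃ v, IsRep v x ∧ ∃ v' ∈ F, ∀ i ∈ I, v i = v' i := by
  classical
  let D := {d : ∀ i, Fin (n i + 1) // ∀ i, η i (d i) ≠ 0}
  obtain ⟨q, hq, h⟩ := exists_common_ne_zero (κ := D × (Σ i, Fin (n i + 1)))
    (P := fun p (L : (Σ s : J, Fin (n (κ s) + 1)) → ℂ) => p.2.1 ∈ I →
      {t : ℂ | ∃ ρ : ChartRing η p.1.1 →ₐ[ℂ] ℂ, (∀ s, ∑ c, L ⟨s, c⟩ * ρ (chartCoord η p.1.1 (κ s) c) = 0) ∧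
        ρ (chartCoord η p.1.1 p.2.1 p.2.2) = t}.Finite) (by
    rintro ⟨d, i, c⟩
    by_cases hi : i ∈ I
    swap
    · exact ⟨1, one_ne_zero, fun L _ h => absurd h hi⟩
    let R := Algebra.adjoin ℂ {y | ∃ j ∈ I, ∃ a, affCoord η d.1 j a = y}
    have hRle : R ≤ ChartRing η d.1 := by
      rw [ChartRing]
      apply Algebra.adjoin_mono
      rintro _ ⟨j, -, a, rfl⟩
      exact ⟨⟨j, a⟩, rfl⟩
    have hRalg : R ≤ (algHull (Set.range z)).toSubalgebra := by
      apply Algebra.adjoin_le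
      rintro _ ⟨j, hj, a, rfl⟩
      have : affCoord η d.1 j a = affCoord η b j a / affCoord η b j (d.1 j) := by
        rw [affCoord, affCoord, affCoord, div_div_div_cancel_right₀ (hb j)]
      rw [this]
      exact (algHull (Set.range z)).div_mem (halg j hj a) (halg j hj _)
    have hmem : ∀ j ∈ I, ∀ a, affCoord η d.1 j a ∈ R := fun j hj a => Algebra.subset_adjoin ⟨j, hj, a, rfl⟩
    obtain ⟨q, hq, h⟩ := finite_values_alg R (Cn := fun s => Fin (n (κ s) + 1)) (b := fun s => d.1 (κ s))
      (y := fun s c => ⟨affCoord η d.1 (κ s) c, hmem _ (hκ s) c⟩)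
      (fun s => Subtype.ext (affCoord_self d.2 _)) (algInd_incForm_chart hb d.2 κ hAI) hz hRalg
      ⟨affCoord η d.1 i c, hmem _ hi c⟩
    refine ⟨q, hq, fun L hL _ => (h L hL).subset ?_⟩
    rintro _ ⟨ρ, hρ, rfl⟩
    exact ⟨ρ.comp (Subalgebra.inclusion hRle), hρ, rfl⟩)
  refine ⟨q, hq, fun L hL => ?_⟩
  let T : D → (i : ι) → Fin (n i + 1) → Set ℂ := fun d i c => if i ∈ I then
      {t : ℂ | ∃ ρ : ChartRing η d.1 →ₐ[ℂ] ℂ, (∀ s, ∑ c, L ⟨s, c⟩ * ρ (chartCoord η d.1 (κ s) c) = 0) ∧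
        ρ (chartCoord η d.1 i c) = t} else {0}
  have hT : ∀ d i c, (T d i c).Finite := by
    intro d i c
    by_cases hi : i ∈ I
    · simp only [T, if_pos hi]
      exact h L hL (d, ⟨i, c⟩) hi
    · simp only [T, if_neg hi]
      exact Set.finite_singleton _
  refine ⟨⋃ d, {v | ∀ i, v i ∈ {w : Fin (n i + 1) → ℂ | ∀ c, w c ∈ T d i c}},
    Set.finite_iUnion fun d => Set.Finite.pi' fun i => Set.Finite.pi' fun c => hT d i c, fun x hx hxL => ?_⟩
  obtain ⟨d, v, hv, hvd⟩ := exists_chart x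
  have hd : ∀ i, η i (d i) ≠ 0 := hη.live hx hv fun j => by rw [hvd]; exact one_ne_zero
  obtain ⟨ρ, hρ⟩ := hη.exists_chart_point hd hx hv hvd
  refine ⟨v, hv, fun i => if i ∈ I then v i else 0, ?_, fun i hi => by simp [hi]⟩
  refine Set.mem_iUnion.2 ⟨⟨d, hd⟩, fun i c => ?_⟩
  by_cases hi : i ∈ I
  · simp only [T, if_pos hi]
    refine ⟨ρ, fun s => ?_, hρ i c⟩
    simp only [hρ]
    exact (hv.plin _ _).1 (hxL s)
  · simp only [T, if_neg hi]
    rfl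

end FiniteSlices

/-! ### Multidimension of an irreducible variety -/

section MultiDim
open MvPolynomial
universe u v

variable {ι : Type u} {n : ι → ℕ} {K : Type v} [Field K] [Algebra ℂ K] {Y : Set (PStack n)}
  {η : (i : ι) → Fin (n i + 1) → K}

/-- Slices viewed as the coefficients of a family of forms indexed by all slots. -/
def sliceHomeo (n e : ι → ℕ) :
    SliceParams n e ≃ₜ ((Σ s : (Σ j, Fin (e j)), Fin (n s.1 + 1)) → ℂ) where
  toFun L p := L p.1.1 p.1.2 p.2
  invFun M j k c := M ⟨⟨j, k⟩, c⟩
  left_inv _ := rfl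
  right_inv _ := rfl
  continuous_toFun := by fun_prop
  continuous_invFun := by fun_prop

/-- If the `i`-th coordinate ratios are not all constant, the multidimension contains a vector with positive
`i`-th entry. -/
theorem IsGenericPt.exists_mdim [Fintype ι] [DecidableEq ι] (hη : IsGenericPt Y η) (hY : IsIrredVariety Y)
    {b : ∀ i, Fin (n i + 1)} (hb : ∀ i, η i (b i) ≠ 0) {i : ι} {c0 : Fin (n i + 1)}
    (hc0 : Transcendental ℂ (affCoord η b i c0)) : ∃ e ∈ MDim Y, 1 ≤ e i := by
  classical
  let σ := (Σ i, Fin (n i + 1))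
  let w : σ → K := fun p => affCoord η b p.1 p.2
  have h0 : AlgebraicIndepOn ℂ w {⟨i, c0⟩} := by
    rw [AlgebraicIndepOn, algebraicIndependent_unique_type_iff]
    exact hc0
  obtain ⟨P, hP0, hP⟩ := (Set.toFinite {P : Set σ | AlgebraicIndepOn ℂ w P}).exists_le_maximal h0
  have hPI : AlgebraicIndepOn ℂ w P := hP.prop
  have hPalg : ∀ p, w p ∈ algHull (w '' P) := by
    intro p
    by_cases hp : p ∈ P
    · exact isAlgebraic_algebraMap (⟨w p, Algebra.subset_adjoin ⟨p, hp, rfl⟩⟩ : Algebra.adjoin ℂ (w '' P))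
    · by_contra hcon
      exact hp (hP.le_of_ge ((AlgebraicIndepOn.insert_iff hp).2 ⟨hPI, hcon⟩) (Set.subset_insert _ _) (Set.mem_insert _ _))
  have hPb : ∀ j, (⟨j, b j⟩ : σ) ∉ P := by
    intro j hj
    have h1 := AlgebraicIndependent.transcendental hPI ⟨_, hj⟩
    apply h1
    change IsAlgebraic ℂ (affCoord η b j (b j))
    rw [affCoord_self hb]
    exact isAlgebraic_one
  -- `P` is a transcendence basis among the coordinate ratios; `e j` counts its members in the factor `j`.
  let e : ι → ℕ := fun j => Fintype.card {c // (⟨j, c⟩ : σ) ∈ P}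
  let E : ∀ j, Fin (e j) ≃ {c // (⟨j, c⟩ : σ) ∈ P} := fun j => (Fintype.equivFin _).symm
  have hE : ∀ j k, (⟨j, (E j k).1⟩ : σ) ∈ P := fun j k => (E j k).2
  let J := Σ j, Fin (e j)
  let κ : J → ι := Sigma.fst
  let cs : (s : J) → Fin (n (κ s) + 1) := fun s => (E s.1 s.2).1
  let g : J → P := fun s => ⟨⟨s.1, (E s.1 s.2).1⟩, hE _ _⟩
  have hg : Function.Injective g := by
    rintro ⟨j, k⟩ ⟨j', k'⟩ h
    have h1 := congrArg Subtype.val h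
    obtain ⟨rfl, h2⟩ := Sigma.mk.inj_iff.1 h1
    have h3 := (E j).injective (Subtype.ext (eq_of_heq h2))
    exact congrArg (Sigma.mk j) h3
  let z : J → K := fun s => affCoord η b (κ s) (cs s)
  have hz : AlgebraicIndependent ℂ z := AlgebraicIndependent.comp hPI g hg
  have hzr : w '' P ⊆ Set.range z := by
    rintro _ ⟨⟨j, c⟩, hp, rfl⟩
    refine ⟨⟨j, (E j).symm ⟨c, hp⟩⟩, ?_⟩
    simp [z, cs, w, κ]
  have halg : ∀ j ∈ (Set.univ : Set ι), ∀ c, affCoord η b j c ∈ algHull (Set.range z) := by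
    intro j _ c
    have := hPalg ⟨j, c⟩
    have h2 : w '' P = Set.range z := by
      refine hzr.antisymm ?_
      rintro _ ⟨s, rfl⟩
      exact ⟨_, hE s.1 s.2, rfl⟩
    rw [← h2]; exact this
  have hAI : AlgebraicIndependent ℂ (incForm (Cn := fun s => Fin (n (κ s) + 1)) (fun s => b (κ s))
      (fun s c => affCoord η b (κ s) c)) := algInd_incForm (fun s => affCoord_self hb _) cs hz
  obtain ⟨q1, hq1, h1⟩ := hη.exists_slice_point hY.1 hb κ hAI isAlgebraicSet_empty (fun h => by
    obtain ⟨x, hx⟩ := hY.2.1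
    exact h hx)
  obtain ⟨q2, hq2, h2⟩ := hη.finite_slice hb Set.univ κ (fun _ => trivial) hAI hz halg
  refine ⟨e, ⟨fun j => ?_, ?_⟩, ?_⟩
  · have : e j ≤ Fintype.card {c : Fin (n j + 1) // c ≠ b j} :=
      Fintype.card_subtype_mono _ (fun c => c ≠ b j) (fun c hc (h : c = b j) => hPb j (h ▸ hc))
    simpa using this
  · refine generic_of_ne_zero (sliceHomeo n e) (mul_ne_zero hq1 hq2) fun L hL => ?_
    rw [map_mul] at hL
    have hs : ∀ x, x ∈ SliceZeros L ↔ ∀ s : J, PLinVanish (fun c => sliceHomeo n e L ⟨s, c⟩) (x (κ s)) :=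
      fun x => ⟨fun h s => h s.1 s.2, fun h j k => h ⟨j, k⟩⟩
    obtain ⟨F, hF, hFx⟩ := h2 _ (right_ne_zero_of_mul hL)
    obtain ⟨x, hx, -, hxL⟩ := h1 _ (left_ne_zero_of_mul hL)
    refine ⟨Set.Finite.subset (hF.biUnion (t := fun v => {x | IsRep v x}) fun v _ =>
      Set.Subsingleton.finite fun x hx x' hx' => IsRep.eq hx hx') ?_, ⟨x, hx, (hs x).2 hxL⟩⟩
    rintro x ⟨hx, hxL⟩
    obtain ⟨v, hv, v', hv', h⟩ := hFx x hx ((hs x).1 hxL)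
    obtain rfl : v = v' := funext fun j => h j trivial
    exact Set.mem_biUnion hv' hv
  · exact Fintype.card_pos_iff.2 ⟨⟨c0, hP0 rfl⟩⟩

end MultiDim

/-! ### Dimension of a projection -/

section Avoiding
open MvPolynomial
universe u v

/-- A general hyperplane misses a given finite set of points. -/
theorem dense_avoid {κ : Type*} [Fintype κ] {T : Set (Projectivization ℂ (κ → ℂ))} (hT : T.Finite) :
    Dense {c : κ → ℂ | ∀ p ∈ T, ¬ PLinVanish c p} := by
  classical
  have hne : ∀ p : Projectivization ℂ (κ → ℂ), (∑ a, C (p.rep a) * X a : MvPolynomial κ ℂ) ≠ 0 := by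
    intro p hp
    apply p.rep_nonzero
    ext a
    have := congrArg (eval (Pi.single a 1)) hp
    simpa [Pi.single_apply] using this
  have h1 : (∏ p ∈ hT.toFinset, (∑ a, C (p.rep a) * X a : MvPolynomial κ ℂ)) ≠ 0 :=
    Finset.prod_ne_zero_iff.2 fun p _ => hne p
  refine (dense_ne_zero h1).mono fun c (hc : eval c _ ≠ 0) p hp hcp => hc ?_
  rw [map_prod]
  refine Finset.prod_eq_zero (hT.mem_toFinset.2 hp) ?_
  have := hcp p.rep p.rep_nonzero p.mk_rep
  simpa [mul_comm] using this

variable {ι : Type u} {n : ι → ℕ} {K : Type v} [Field K] [Algebra ℂ K] {Y : Set (PStack n)}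
  {η : (i : ι) → Fin (n i + 1) → K}

theorem finite_image_of_reps {F : Set ((i : ι) → Fin (n i + 1) → ℂ)} (hF : F.Finite) {Z : Set (PStack n)} {i : ι}
    (h : ∀ x ∈ Z, ∃ v, IsRep v x ∧ ∃ v' ∈ F, ∀ j ∈ ({i} : Set ι), v j = v' j) :
    ((fun x : PStack n => x i) '' Z).Finite := by
  refine Set.Finite.subset (hF.biUnion (t := fun v => {p | ∃ hv : v i ≠ 0, Projectivization.mk ℂ (v i) hv = p})
    fun v _ => Set.Subsingleton.finite ?_) ?_
  · rintro p ⟨hv, rfl⟩ p' ⟨hv', rfl⟩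
    rfl
  · rintro _ ⟨x, hx, rfl⟩
    obtain ⟨v, hv, v', hv', h⟩ := h x hx
    refine Set.mem_biUnion hv' ?_
    have h1 := hv i
    rw [h i rfl] at h1
    exact h1

/-- If all coordinate ratios in the `i`-th factor are constant, the variety has finite image there. -/
theorem IsGenericPt.finite_image [Fintype ι] [DecidableEq ι] (hη : IsGenericPt Y η)
    {b : ∀ i, Fin (n i + 1)} (hb : ∀ i, η i (b i) ≠ 0) {i : ι} (h : ∀ c, IsAlgebraic ℂ (affCoord η b i c)) :
    ((fun x : PStack n => x i) '' Y).Finite := by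
  let κ : Empty → ι := Empty.elim
  have hz : AlgebraicIndependent ℂ (Empty.elim : Empty → K) :=
    algebraicIndependent_empty_type_iff.2 (algebraMap ℂ K).injective
  obtain ⟨q, hq, h1⟩ := hη.finite_slice hb {i} κ (fun s => s.elim)
    (algInd_incForm (fun s => s.elim) (fun s => s.elim) (algebraicIndependent_empty_type_iff.2 (algebraMap ℂ K).injective)) hz (by
    rintro _ rfl c
    exact (h c).extendScalars (S := Algebra.adjoin ℂ (Set.range (Empty.elim : Empty → K))) (algebraMap ℂ _).injective)
  obtain ⟨L, hL⟩ := (dense_ne_zero hq).nonempty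
  obtain ⟨F, hF, hFx⟩ := h1 L hL
  exact finite_image_of_reps hF fun x hx => hFx x hx fun s => s.elim

/-- If no two coordinate ratios in the `i`-th factor are independent, a general hyperplane in this factor
cuts the image of the variety there in finitely many points. -/
theorem IsGenericPt.finite_image_slice [Fintype ι] [DecidableEq ι] (hη : IsGenericPt Y η)
    {b : ∀ i, Fin (n i + 1)} (hb : ∀ i, η i (b i) ≠ 0) {i : ι}
    (h : ∀ c1 c2, ¬ AlgebraicIndependent ℂ ![affCoord η b i c1, affCoord η b i c2]) :
    ∃ q : MvPolynomial (Fin (n i + 1)) ℂ, q ≠ 0 ∧ ∀ c : Fin (n i + 1) → ℂ, eval c q ≠ 0 →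
      ((fun x : PStack n => x i) '' (Y ∩ {x | PLinVanish c (x i)})).Finite := by
  by_cases h0 : ∀ c, IsAlgebraic ℂ (affCoord η b i c)
  · exact ⟨1, one_ne_zero, fun c _ => (hη.finite_image hb h0).subset (Set.image_mono Set.inter_subset_left)⟩
  push Not at h0
  obtain ⟨c0, hc0⟩ := h0
  let z : Unit → K := fun _ => affCoord η b i c0
  have hz : AlgebraicIndependent ℂ z := by
    rw [algebraicIndependent_unique_type_iff]
    exact hc0
  obtain ⟨q, hq, h1⟩ := hη.finite_slice hb {i} (fun _ : Unit => i) (fun s => rfl)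
    (algInd_incForm (fun s => affCoord_self hb i) (fun s => c0) hz) hz (by
    rintro _ rfl c
    by_contra hcon
    apply h c0 c
    have h2 : AlgebraicIndependent ℂ (fun o : Option Unit => o.elim (affCoord η b _ c) z) :=
      (hz.option_iff_transcendental _).2 hcon
    have h3 := h2.comp (![some (), none] : Fin 2 → Option Unit) (by
      intro i j hij
      fin_cases i <;> fin_cases j <;> simp_all)
    convert h3 using 1
    ext j; fin_cases j <;> rfl)
  refine exists_ne_zero_reindex (Equiv.uniqueSigma (fun _ : Unit => Fin (n i + 1))) ⟨q, hq, fun c hc => ?_⟩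
  obtain ⟨F, hF, hFx⟩ := h1 _ hc
  exact finite_image_of_reps hF fun x hx => hFx x hx.1 fun s => hx.2

/-- The generic point of a nonempty variety lies in some chart. -/
theorem IsGenericPt.exists_live [Fintype ι] (hη : IsGenericPt Y η) (hY : Y.Nonempty) :
    ∃ b : ∀ i, Fin (n i + 1), ∀ i, η i (b i) ≠ 0 := by
  obtain ⟨x, hx⟩ := hY
  obtain ⟨b, v, hv, hvb⟩ := exists_chart x
  exact ⟨b, hη.live hx hv fun j => by rw [hvb]; exact one_ne_zero⟩

/-- A vector with positive `i`-th entry in the multidimension forces a non-constant coordinate ratio. -/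
theorem IsGenericPt.trans_of_mdim [Fintype ι] [DecidableEq ι] (hη : IsGenericPt Y η)
    {b : ∀ i, Fin (n i + 1)} (hb : ∀ i, η i (b i) ≠ 0) {i : ι} {e : ι → ℕ} (he : e ∈ MDim Y) (hei : 1 ≤ e i) :
    ∃ c, Transcendental ℂ (affCoord η b i c) := by
  by_contra! h
  simp only [Transcendental, not_not] at h
  have hT := hη.finite_image hb h
  obtain ⟨-, U, hU, hUd, hUP⟩ := he
  obtain ⟨L, hL⟩ := hUd.nonempty
  obtain ⟨c, hc, hcU⟩ := Generic.meets hU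
    (g := fun c => Function.update L i (Function.update (L i) ⟨0, hei⟩ c)) (b := L i ⟨0, hei⟩)
    (by fun_prop) (by simpa using hL) (dense_avoid hT)
  obtain ⟨x, hx, hxL⟩ := (hUP _ hcU).2
  have h1 := hxL i ⟨0, hei⟩
  simp only [Function.update_self] at h1
  exact hc _ ⟨x, hx, rfl⟩ h1

/-- If the projection of a variety to the `i`-th factor has dimension at least two, some irreducible component
has two independent coordinate ratios in this factor. -/
theorem exists_component_pair [Fintype ι] [DecidableEq ι] {X : Set (PStack n)} {S : Set (Set (PStack n))}
    (hS : S.Finite) (hSirr : ∀ Y ∈ S, IsIrredVariety Y) (hSX : ⋃₀ S = X) {i : ι} (hproj : 2 ≤ dimProj {i} X) :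
    ∃ Y ∈ S, ∃ (K : Type u) (_ : Field K) (_ : Algebra ℂ K) (η : (i : ι) → Fin (n i + 1) → K)
      (b : ∀ i, Fin (n i + 1)) (c1 c2 : Fin (n i + 1)), IsGenericPt Y η ∧ (∀ i, η i (b i) ≠ 0) ∧
        AlgebraicIndependent ℂ ![affCoord η b i c1, affCoord η b i c2] := by
  by_contra! hcon
  have := hS.to_subtype
  obtain ⟨q, hq, h⟩ := exists_common_ne_zero (κ := S) (fun Y => by
    obtain ⟨K, _, _, η, hη⟩ := exists_isGenericPt (hSirr Y Y.2)
    obtain ⟨b, hb⟩ := hη.exists_live (hSirr Y Y.2).2.1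
    exact hη.finite_image_slice hb (i := i) fun c1 c2 => hcon Y Y.2 K _ _ η b c1 c2 hη hb)
  let i' : {j // j ∈ ({i} : Finset ι)} := ⟨i, Finset.mem_singleton_self i⟩
  have : ∃ e ∈ MDim (resMap {i} '' X), 2 ≤ e i' := by
    have hsum : ∀ e : {j // j ∈ ({i} : Finset ι)} → ℕ, ∑ j, e j = e i' := fun e =>
      Finset.sum_eq_single i' (fun j _ hj => absurd (Subtype.ext (Finset.mem_singleton.1 j.2)) hj)
        (fun h => absurd (Finset.mem_univ _) h)
    rw [dimProj, dimOf] at hproj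
    by_contra! hlt
    have h1 : sSup {m | ∃ e ∈ MDim (resMap {i} '' X), ∑ j, e j = m} ≤ 1 := by
      refine csSup_le' ?_
      rintro _ ⟨e, he, rfl⟩
      rw [hsum]
      exact Nat.le_of_lt_succ (hlt e he)
    omega
  obtain ⟨e, ⟨-, U, hU, hUd, hUP⟩, he⟩ := this
  -- In a good slice of the projection, move two of the forms. After the first move, `X ∩ V(c)` has finite image in the
  -- factor; the second moved form then avoids this image, although the slice is nonempty.
  obtain ⟨L, hL⟩ := hUd.nonempty
  let k0 : Fin (e i') := ⟨0, by omega⟩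
  let k1 : Fin (e i') := ⟨1, by omega⟩
  have hk : k0 ≠ k1 := by simp [k0, k1]
  obtain ⟨c, hc, hcU⟩ := Generic.meets hU
    (g := fun c => Function.update L i' (Function.update (L i') k0 c)) (b := L i' k0)
    (by fun_prop) (by simpa using hL) (dense_ne_zero hq)
  have hT : ((fun x : PStack n => x i) '' (X ∩ {x | PLinVanish c (x i)})).Finite := by
    refine (Set.finite_iUnion fun Y : S => h c hc Y).subset ?_
    rintro _ ⟨x, ⟨hx, hxc⟩, rfl⟩
    rw [← hSX] at hx
    obtain ⟨Y, hY, hxY⟩ := hx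
    exact Set.mem_iUnion.2 ⟨⟨Y, hY⟩, x, ⟨hxY, hxc⟩, rfl⟩
  let L' := Function.update L i' (Function.update (L i') k0 c)
  obtain ⟨c', hc', hcU'⟩ := Generic.meets hU
    (g := fun c => Function.update L' i' (Function.update (L' i') k1 c)) (b := L' i' k1)
    (by fun_prop) (by simpa using hcU) (dense_avoid hT)
  obtain ⟨_, ⟨x, hx, rfl⟩, hxL⟩ := (hUP _ hcU').2
  have h1 := hxL i' k1
  have h0 := hxL i' k0
  simp only [Function.update_self] at h1
  simp only [Function.update_self, Function.update_of_ne hk, L'] at h0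
  exact hc' _ ⟨x, ⟨hx, h0⟩, rfl⟩ h1

end Avoiding

/-! ### Irreducibility of a general slice -/

/-- Lemma 5.1(3), Bertini. If the projection of an equidimensional
multiprojective variety `X` to the `i`-th factor has dimension at least `2`, then for a
general hyperplane slice `V(ℓ)` from the `i`-th factor, `X` is irreducible if and only
if `X ∩ V(ℓ)` is irreducible. -/
theorem slice_irreducible_iff {ι : Type*} [Fintype ι] [DecidableEq ι]
    {n : ι → ℕ} (X : Set (PStack n)) (hX : Equidimensional X)
    (i : ι) (hproj : 2 ≤ dimProj {i} X) :
    Generic (fun c : Fin (n i + 1) → ℂ =>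
      (IsIrredVariety X ↔ IsIrredVariety (X ∩ {x | PLinVanish c (x i)}))) := by
  obtain ⟨hXalg, hXne, hXdim⟩ := hX
  obtain ⟨S, hS, hSc, hSX⟩ := exists_components hXalg
  obtain ⟨Y, hY, K, _, _, η, b, c1, c2, hη, hb, h12⟩ :=
    exists_component_pair hS (fun Y hY => (hSc Y hY).1) hSX hproj
  by_cases hXirr : IsIrredVariety X
  · obtain rfl : X = Y := (hSc Y hY).2.2 X hXirr (hSc Y hY).2.1 subset_rfl
    obtain ⟨q, hq, h⟩ := slice_irred hη hXirr hb h12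
    exact generic_of_ne_zero (Homeomorph.refl _) hq fun c hc => iff_of_true hXirr (h c hc)
  -- every component of a reducible `X` meets a general hyperplane outside any closed set not containing the component
  · obtain ⟨e, he, hei⟩ := hη.exists_mdim (hSc Y hY).1 hb (h12.transcendental 0)
    have key : ∀ A : Set (PStack n), IsAlgebraicSet A → ¬ X ⊆ A →
        ∃ q : MvPolynomial (Fin (n i + 1)) ℂ, q ≠ 0 ∧ ∀ c : Fin (n i + 1) → ℂ, MvPolynomial.eval c q ≠ 0 →
          ¬ X ∩ {x | PLinVanish c (x i)} ⊆ A := by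
      intro A hA hXA
      obtain ⟨Z, hZ, hZA⟩ : ∃ Z ∈ S, ¬ Z ⊆ A := by
        by_contra! h
        exact hXA (hSX ▸ Set.sUnion_subset h)
      obtain ⟨K', _, _, ζ, hζ⟩ := exists_isGenericPt (hSc Z hZ).1
      obtain ⟨d, hd⟩ := hζ.exists_live (hSc Z hZ).1.2.1
      obtain ⟨c0, hc0⟩ := hζ.trans_of_mdim hd (hXdim Y Z (hSc Y hY) (hSc Z hZ) ▸ he) hei
      obtain ⟨q, hq, h⟩ := hζ.exists_slice_point_one (hSc Z hZ).1.1 hd hc0 hA hZA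
      refine ⟨q, hq, fun c hc hsub => ?_⟩
      obtain ⟨x, hx, hxA, hxc⟩ := h c hc
      exact hxA (hsub ⟨(hSc Z hZ).2.1 hx, hxc⟩)
    have : ∃ A B : Set (PStack n), IsAlgebraicSet A ∧ IsAlgebraicSet B ∧ X ⊆ A ∪ B ∧ ¬ X ⊆ A ∧ ¬ X ⊆ B := by
      by_contra! h
      exact hXirr ⟨hXalg, hXne, fun A B hA hB hAB => or_iff_not_imp_left.2 (h A B hA hB hAB)⟩
    obtain ⟨A, B, hA, hB, hAB, hXA, hXB⟩ := this
    obtain ⟨q1, hq1, h1⟩ := key A hA hXA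
    obtain ⟨q2, hq2, h2⟩ := key B hB hXB
    refine generic_of_ne_zero (Homeomorph.refl _) (mul_ne_zero hq1 hq2) fun c hc => iff_of_false hXirr fun hirr => ?_
    rw [map_mul] at hc
    rcases hirr.2.2 A B hA hB (Set.inter_subset_left.trans hAB) with h | h
    · exact h1 c (left_ne_zero_of_mul hc) h
    · exact h2 c (right_ne_zero_of_mul hc) h
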